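/- arXiv:0711.0560 — 2 statements merged into one kernel-verified Lean document; each statement's English description precedes it below -/
import Mathlib

section
/- Controlled divergence-free extension to ℝ³. For every M > 0 there exist constants c(k,M) (k = 0,1,2,…) such that: if R₀ > 0, (u,p) is a smooth solution of the steady Navier–Stokes equations on ℝ³ \ closedBall(0,R₀) with |u(x)| ≤ C*/(R₀+|x|) there for some C* ≤ M, and the no-outflow condition ∫_{∂B_{R₁}} u·n dS = 0 holds for some R₁ > R₀, then there exist smooth functions ũ : ℝ³ → ℝ³ and p̃ : ℝ³ → ℝ such that: (i) ũ = u and p̃ = p − p₀ on ℝ³ \ B_{3R₀} for a suitable constant p₀; (ii) div ũ = 0 on all of ℝ³; (iii) |∇^k ũ(x)| ≤ c(k,M) C*/(R₀+|x|)^{k+1} and |∇^k p̃(x)| ≤ c(k,M) C*/(R₀+|x|)^{k+2} on ℝ³ for all k ≥ 0; and (iv) the field f := −Δũ + (ũ·∇)ũ + ∇p̃ is supported in closedBall(0,3R₀) and satisfies |∇^k f(x)| ≤ c(k,M) C*/(R₀+|x|)^{k+3} on ℝ³ for all k ≥ 0. -/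
open MeasureTheory Real Metric Filter

noncomputable section

abbrev E3 : Type := EuclideanSpace ℝ (Fin 3)

def ee (j : Fin 3) : E3 := EuclideanSpace.single j 1

def pd (f : E3 → ℝ) (j : Fin 3) (x : E3) : ℝ := fderiv ℝ f x (ee j)

def pd2 (f : E3 → ℝ) (j : Fin 3) (x : E3) : ℝ :=
  fderiv ℝ (fun y => fderiv ℝ f y (ee j)) x (ee j)

/-- steady Navier–Stokes system on `s` -/
def IsNS (s : Set E3) (u : E3 → E3) (p : E3 → ℝ) : Prop :=
  (∀ x ∈ s, ∀ i, -(∑ j, pd2 (fun y => u y i) j x)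
      + (∑ j, u x j * pd (fun y => u y i) j x) + pd p i x = 0)
  ∧ ∀ x ∈ s, (∑ j, pd (fun y => u y j) j x) = 0

/-- surface integral over the sphere of radius `R` centered at the origin -/
def sphInt (R : ℝ) (F : E3 → ℝ) : ℝ :=
  R ^ 2 * ∫ ω : sphere (0 : E3) 1, F (R • (ω : E3)) ∂((volume : Measure E3).toSphere)

/-
By scaling take `R₀ = 1`. Testing the equations against rescaled compactly supported kernels gives
an interior gradient estimate for the Stokes system which does not see the pressure; bootstrapped
through the nonlinearity and rescaled to distance `|x|`, it turns `|u| ≤ C / (1 + |x|)` into decay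
of all derivatives of `u`. The equations then make `∇p` decay like `|x|⁻³`, so `p` has a limit
`p₀` at infinity and `p - p₀` decays like `|x|⁻²`.

For a cutoff `η` vanishing near the ball, `η u` has divergence `∇η · u`. Since `u` has zero
divergence and zero flux, this function has mean zero. A smooth function of mean zero supported in a
cube is the divergence of a field supported in that cube: spread the function along a fixed
profile in one coordinate direction after the other, and take primitives of the differences.
Subtracting this field from `η u` and pairing the result with `η (p - p₀)` gives the extension.
-/

section

open scoped ContDiff

section SmoothFunctions

variable {E F : Type*} [NormedAddCommGroup E] [NormedSpace ℝ E] [NormedAddCommGroup F]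
  [NormedSpace ℝ F] {f : E → F}

theorem differentiableAt_of_smooth (hf : ContDiff ℝ ∞ f) {x : E} : DifferentiableAt ℝ f x :=
  hf.differentiable (by simp) x

theorem continuous_norm_iteratedFDeriv (hf : ContDiff ℝ ∞ f) (n : ℕ) :
    Continuous fun x => ‖iteratedFDeriv ℝ n f x‖ :=
  (hf.continuous_iteratedFDeriv (m := n) (mod_cast le_top)).norm

theorem iteratedFDeriv_congr_on {g : E → F} {s : Set E} (hs : IsOpen s)
    (h : ∀ x ∈ s, f x = g x) (n : ℕ) {x : E} (hx : x ∈ s) :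
    iteratedFDeriv ℝ n f x = iteratedFDeriv ℝ n g x :=
  (Filter.EventuallyEq.iteratedFDeriv ℝ
    (Filter.eventuallyEq_of_mem (hs.mem_nhds hx) h) n).eq_of_nhds

end SmoothFunctions

section PartialDerivatives

variable {f g : E3 → ℝ} {x : E3}

theorem contDiff_pd (hf : ContDiff ℝ ∞ f) (j : Fin 3) : ContDiff ℝ ∞ (pd f j) :=
  (hf.fderiv_right (m := ∞) (by simp)).clm_apply contDiff_const

theorem pd_congr_on {s : Set E3} (hs : IsOpen s) (h : ∀ x ∈ s, f x = g x) (j : Fin 3) :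
    ∀ x ∈ s, pd f j x = pd g j x := fun x hx => by
  rw [pd, pd, (Filter.eventuallyEq_of_mem (hs.mem_nhds hx) h).fderiv_eq]

theorem pd_add (hf : DifferentiableAt ℝ f x) (hg : DifferentiableAt ℝ g x) (j : Fin 3) :
    pd (fun y => f y + g y) j x = pd f j x + pd g j x := by
  rw [pd, fderiv_fun_add hf hg]
  rfl

theorem pd_neg (f : E3 → ℝ) (j : Fin 3) (x : E3) : pd (fun y => -f y) j x = -pd f j x := by
  rw [pd, fderiv_fun_neg]
  rfl

theorem pd_sum {ι : Type*} [Fintype ι] {f : ι → E3 → ℝ}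
    (hf : ∀ i, DifferentiableAt ℝ (f i) x) (j : Fin 3) :
    pd (fun y => ∑ i, f i y) j x = ∑ i, pd (f i) j x := by
  rw [pd, fderiv_fun_sum fun i _ => hf i]
  simp [pd]

theorem pd_mul (hf : DifferentiableAt ℝ f x) (hg : DifferentiableAt ℝ g x) (j : Fin 3) :
    pd (fun y => f y * g y) j x = f x * pd g j x + pd f j x * g x := by
  rw [pd, fderiv_fun_mul hf hg]
  simp [pd, mul_comm]

theorem pd_const (c : ℝ) (j : Fin 3) (x : E3) : pd (fun _ => c) j x = 0 := by
  simp [pd]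

theorem pd_sub_const (f : E3 → ℝ) (a : ℝ) (j : Fin 3) : pd (fun x => f x - a) j = pd f j := by
  ext x
  rw [pd, fderiv_sub_const, pd]

theorem pd_const_mul (c : ℝ) (f : E3 → ℝ) (j : Fin 3) (x : E3) :
    pd (fun y => c * f y) j x = c * pd f j x := by
  have h : fderiv ℝ (fun y => c * f y) x = c • fderiv ℝ f x :=
    congrFun (fderiv_const_smul_field (𝕜 := ℝ) (f := f) c) x
  simp [pd, h]

theorem pd_comp_smul (f : E3 → ℝ) (L : ℝ) (j : Fin 3) (y : E3) :
    pd (fun y => f (L • y)) j y = L * pd f j (L • y) := by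
  have h : fderiv ℝ (fun y => f (L • y)) y = L • fderiv ℝ f (L • y) := fderiv_comp_smul L
  simp [pd, h]

theorem pd_comp_add_smul (f : E3 → ℝ) (x : E3) (t : ℝ) (j : Fin 3) (y : E3) :
    pd (fun y => f (x + t • y)) j y = t * pd f j (x + t • y) := by
  rw [pd_comp_smul (fun z => f (x + z)), pd, fderiv_comp_add_left, pd]

theorem pd_comm (hf : ContDiffAt ℝ 2 f x) (i j : Fin 3) : pd (pd f i) j x = pd (pd f j) i x := by
  have hd : DifferentiableAt ℝ (fderiv ℝ f) x :=
    (hf.fderiv_right (m := 1) (by norm_num)).differentiableAt one_ne_zero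
  have pd_pd_eq : ∀ a b, pd (pd f a) b x = fderiv ℝ (fderiv ℝ f) x (ee b) (ee a) := fun a b => by
    change fderiv ℝ (fun y => fderiv ℝ f y (ee a)) x (ee b) = _
    rw [fderiv_clm_apply hd (differentiableAt_const _)]
    simp
  rw [pd_pd_eq, pd_pd_eq]
  exact (hf.isSymmSndFDerivAt (by simp)).eq _ _

theorem pd_comm_of_smooth (hf : ContDiff ℝ ∞ f) (i j : Fin 3) :
    pd (pd f i) j = pd (pd f j) i :=
  funext fun _ => pd_comm (hf.of_le (by
    simpa using WithTop.coe_le_coe.2 (le_top : (2 : ℕ∞) ≤ ⊤))).contDiffAt i j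

theorem contDiff_coord (j : Fin 3) : ContDiff ℝ ∞ fun y : E3 => y j :=
  (EuclideanSpace.proj j : E3 →L[ℝ] ℝ).contDiff

theorem pd_coord (i j : Fin 3) (x : E3) : pd (fun y => y i) j x = if i = j then 1 else 0 := by
  change fderiv ℝ (EuclideanSpace.proj i : E3 →L[ℝ] ℝ) x (ee j) = _
  rw [ContinuousLinearMap.fderiv]
  simp [ee]

theorem sum_coord_mul_self (x : E3) : ∑ j, x j * x j = ‖x‖ ^ 2 := by
  rw [EuclideanSpace.real_norm_sq_eq]
  simp only [pow_two]

theorem pd_comp_norm_sq {h : ℝ → ℝ} {h' : ℝ} (hh : HasDerivAt h h' (‖x‖ ^ 2)) (j : Fin 3) :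
    pd (fun y => h (‖y‖ ^ 2)) j x = 2 * (x j * h') := by
  have hcomp := hh.comp_hasFDerivAt x (hasStrictFDerivAt_norm_sq x).hasFDerivAt
  change fderiv ℝ (h ∘ fun y => ‖y‖ ^ 2) x (ee j) = _
  rw [hcomp.fderiv]
  simp [ee, EuclideanSpace.inner_single_right]
  ring

theorem fderiv_apply_eq_sum (f : E3 → ℝ) (x v : E3) : fderiv ℝ f x v = ∑ j, v j * pd f j x := by
  conv_lhs => rw [← (EuclideanSpace.basisFun (Fin 3) ℝ).sum_repr v]
  simp [pd, ee]

theorem fderiv_eq_sum_smul_proj (f : E3 → ℝ) :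
    fderiv ℝ f = fun x => ∑ j, pd f j x • (EuclideanSpace.proj j : E3 →L[ℝ] ℝ) := by
  ext x v
  rw [fderiv_apply_eq_sum]
  simp [mul_comm]

theorem norm_proj_le (j : Fin 3) : ‖(EuclideanSpace.proj j : E3 →L[ℝ] ℝ)‖ ≤ 1 :=
  ContinuousLinearMap.opNorm_le_bound _ zero_le_one fun x => by
    simpa using PiLp.norm_apply_le x j

theorem norm_iteratedFDeriv_succ_le (hf : ContDiff ℝ ∞ f) (n : ℕ) (x : E3) :
    ‖iteratedFDeriv ℝ (n + 1) f x‖ ≤ ∑ j, ‖iteratedFDeriv ℝ n (pd f j) x‖ := by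
  have hsmooth : ∀ j, ContDiff ℝ n (pd f j) := fun j => (contDiff_pd hf j).of_le (mod_cast le_top)
  have hterm : ∀ j, ContDiff ℝ n fun x => pd f j x • (EuclideanSpace.proj j : E3 →L[ℝ] ℝ) :=
    fun j => (hsmooth j).smul contDiff_const
  rw [← norm_iteratedFDeriv_fderiv, fderiv_eq_sum_smul_proj,
    iteratedFDeriv_fun_sum_apply fun j _ => (hterm j).contDiffAt]
  refine (norm_sum_le _ _).trans (Finset.sum_le_sum fun j _ => ?_)
  rw [iteratedFDeriv_smul_const_apply (hsmooth j).contDiffAt]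
  refine (ContinuousLinearMap.norm_compContinuousMultilinearMap_le _ _).trans
    (mul_le_of_le_one_left (norm_nonneg _)
      (ContinuousLinearMap.opNorm_le_bound _ zero_le_one fun t => ?_))
  simpa [norm_smul] using mul_le_of_le_one_right (abs_nonneg t) (norm_proj_le j)

theorem norm_iteratedFDeriv_pd_le (hf : ContDiff ℝ ∞ f) (j : Fin 3) (n : ℕ) (x : E3) :
    ‖iteratedFDeriv ℝ n (pd f j) x‖ ≤ ‖iteratedFDeriv ℝ (n + 1) f x‖ := by
  have hsmooth : ContDiff ℝ ∞ (fderiv ℝ f) := hf.fderiv_right (by simp)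
  rw [← norm_iteratedFDeriv_fderiv]
  refine ((ContinuousLinearMap.apply ℝ ℝ (ee j)).norm_iteratedFDeriv_comp_left
    hsmooth.contDiffAt (n := n) (mod_cast le_top)).trans
    (mul_le_of_le_one_left (norm_nonneg _)
      (ContinuousLinearMap.opNorm_le_bound _ zero_le_one fun t => ?_))
  simpa [ee] using t.le_opNorm (ee j)

/-- Iterated partial derivatives, used to pass between `iteratedFDeriv` and scalar equations; the
head of the list is differentiated first. -/
def pds : List (Fin 3) → (E3 → ℝ) → E3 → ℝ
  | [], f => f
  | j :: α, f => pds α (pd f j)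

theorem contDiff_pds (hf : ContDiff ℝ ∞ f) (α : List (Fin 3)) : ContDiff ℝ ∞ (pds α f) := by
  induction α generalizing f with
  | nil => exact hf
  | cons j _ ih => exact ih (contDiff_pd hf j)

theorem pds_concat (f : E3 → ℝ) (α : List (Fin 3)) (l : Fin 3) :
    pds (α ++ [l]) f = pd (pds α f) l := by
  induction α generalizing f with
  | nil => rfl
  | cons _ _ ih => exact ih _

theorem abs_pds_le (hf : ContDiff ℝ ∞ f) (α : List (Fin 3)) (x : E3) :
    |pds α f x| ≤ ‖iteratedFDeriv ℝ α.length f x‖ := by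
  induction α generalizing f with
  | nil => simp [pds]
  | cons j _ ih => exact (ih (contDiff_pd hf j)).trans (norm_iteratedFDeriv_pd_le hf j _ x)

theorem norm_iteratedFDeriv_le_of_pds (hf : ContDiff ℝ ∞ f) (n : ℕ) (x : E3) {B : ℝ}
    (h : ∀ α : List (Fin 3), α.length = n → |pds α f x| ≤ B) :
    ‖iteratedFDeriv ℝ n f x‖ ≤ 3 ^ n * B := by
  induction n generalizing f with
  | zero => simpa [pds] using h [] rfl
  | succ n ih =>
    calc ‖iteratedFDeriv ℝ (n + 1) f x‖ ≤ ∑ j, ‖iteratedFDeriv ℝ n (pd f j) x‖ :=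
          norm_iteratedFDeriv_succ_le hf n x
      _ ≤ ∑ _j : Fin 3, 3 ^ n * B := Finset.sum_le_sum fun j _ =>
          ih (contDiff_pd hf j) fun α hα => h (j :: α) (by simp [hα])
      _ = 3 ^ (n + 1) * B := by simp; ring

/-- The Laplacian, as the sum of the pure second partial derivatives. -/
def lap (f : E3 → ℝ) (x : E3) : ℝ := ∑ l, pd (pd f l) l x

theorem contDiff_lap (hf : ContDiff ℝ ∞ f) : ContDiff ℝ ∞ (lap f) :=
  ContDiff.sum fun l _ => contDiff_pd (contDiff_pd hf l) l

theorem lap_const (c : ℝ) (x : E3) : lap (fun _ => c) x = 0 := by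
  simp [lap, funext (pd_const c _), pd_const]

theorem lap_congr_on {s : Set E3} (hs : IsOpen s) (h : ∀ x ∈ s, f x = g x) :
    ∀ x ∈ s, lap f x = lap g x := fun x hx =>
  Finset.sum_congr rfl fun l _ => pd_congr_on hs (pd_congr_on hs h l) l x hx

theorem lap_sum {ι : Type*} [Fintype ι] {f : ι → E3 → ℝ} (hf : ∀ i, ContDiff ℝ ∞ (f i)) (x : E3) :
    lap (fun y => ∑ i, f i y) x = ∑ i, lap (f i) x := by
  have pd_sum' : ∀ l, pd (fun y => ∑ i, f i y) l = fun y => ∑ i, pd (f i) l y := fun l =>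
    funext fun _ => pd_sum (fun i => differentiableAt_of_smooth (hf i)) l
  simp only [lap, pd_sum', pd_sum fun i => differentiableAt_of_smooth (contDiff_pd (hf i) _)]
  exact Finset.sum_comm

theorem pd_lap (hf : ContDiff ℝ ∞ f) (j : Fin 3) : pd (lap f) j = lap (pd f j) := by
  ext x
  unfold lap
  rw [pd_sum fun l => differentiableAt_of_smooth (contDiff_pd (contDiff_pd hf l) l)]
  exact Finset.sum_congr rfl fun l _ => by
    rw [pd_comm_of_smooth (contDiff_pd hf l), pd_comm_of_smooth hf]

/-- The divergence of the vector field with components `v`. -/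
def divergence (v : Fin 3 → E3 → ℝ) (x : E3) : ℝ := ∑ j, pd (v j) j x

theorem contDiff_divergence {v : Fin 3 → E3 → ℝ} (hv : ∀ i, ContDiff ℝ ∞ (v i)) :
    ContDiff ℝ ∞ (divergence v) :=
  ContDiff.sum fun j _ => contDiff_pd (hv j) j

theorem pd_divergence {v : Fin 3 → E3 → ℝ} (hv : ∀ i, ContDiff ℝ ∞ (v i)) (l : Fin 3) :
    pd (divergence v) l = divergence fun i => pd (v i) l := by
  ext x
  unfold divergence
  rw [pd_sum fun j => differentiableAt_of_smooth (contDiff_pd (hv j) j)]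
  exact Finset.sum_congr rfl fun j _ => by rw [pd_comm_of_smooth (hv j)]

end PartialDerivatives

section ParametricIntegrals

variable {H α G : Type*} [NormedAddCommGroup H] [NormedSpace ℝ H] [ProperSpace H]
  [TopologicalSpace α] [MeasurableSpace α] [OpensMeasurableSpace α] [T2Space α]
  [NormedAddCommGroup G] [NormedSpace ℝ G] {μ : Measure α}
  [IsFiniteMeasureOnCompacts μ] {K : Set α}

theorem hasFDerivAt_setIntegral_of_continuous (hK : IsCompact K)
    {F : H → α → G} {F' : H → α → H →L[ℝ] G} (hF : Continuous fun z : H × α => F z.1 z.2)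
    (hF' : Continuous fun z : H × α => F' z.1 z.2)
    (hd : ∀ x a, HasFDerivAt (fun x => F x a) (F' x a) x) (x : H) :
    HasFDerivAt (fun x => ∫ a in K, F x a ∂μ) (∫ a in K, F' x a ∂μ) x := by
  obtain ⟨C, hC⟩ := ((isCompact_closedBall x 1).prod hK).exists_bound_of_continuousOn
    hF'.continuousOn
  have continuous_F : ∀ x, Continuous (F x) := fun x =>
    hF.comp (continuous_const.prodMk continuous_id)
  have continuous_F' : Continuous (F' x) := hF'.comp (continuous_const.prodMk continuous_id)
  have : IsFiniteMeasure (μ.restrict K) := ⟨by simpa using hK.measure_lt_top⟩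
  refine hasFDerivAt_integral_of_dominated_of_fderiv_le (F' := F') (bound := fun _ => C)
    (closedBall_mem_nhds x one_pos)
    (Eventually.of_forall fun y => (continuous_F y).continuousOn.aestronglyMeasurable_of_isCompact
      hK hK.measurableSet)
    ((continuous_F x).continuousOn.integrableOn_compact hK)
    (continuous_F'.continuousOn.aestronglyMeasurable_of_isCompact hK hK.measurableSet) ?_
    (integrable_const C) (Eventually.of_forall fun a y _ => hd y a)
  exact (ae_restrict_iff' hK.measurableSet).2
    (Eventually.of_forall fun a ha y hy => hC (y, a) ⟨hy, ha⟩)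

theorem hasDerivAt_setIntegral_of_continuous (hK : IsCompact K)
    {F F' : ℝ → α → G} (hF : Continuous fun z : ℝ × α => F z.1 z.2)
    (hF' : Continuous fun z : ℝ × α => F' z.1 z.2)
    (hd : ∀ t a, HasDerivAt (fun t => F t a) (F' t a) t) (t : ℝ) :
    HasDerivAt (fun t => ∫ a in K, F t a ∂μ) (∫ a in K, F' t a ∂μ) t := by
  have hspan : Continuous fun z : ℝ × α => ContinuousLinearMap.toSpanSingleton ℝ (F' z.1 z.2) :=
    (ContinuousLinearMap.toSpanSingletonCLE (𝕜 := ℝ) (E := G)).continuous.comp hF'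
  have h := (hasFDerivAt_setIntegral_of_continuous (μ := μ) hK hF hspan
    (fun t a => (hd t a).hasFDerivAt) t).hasDerivAt
  rw [ContinuousLinearMap.integral_apply] at h
  · simpa using h
  · exact (hspan.comp
      (continuous_const.prodMk continuous_id)).continuousOn.integrableOn_compact hK

end ParametricIntegrals

section IntegrationByParts

variable {f g : E3 → ℝ}

theorem hasCompactSupport_of_eq_zero_of_lt_norm {R : ℝ} (h : ∀ y, R < ‖y‖ → g y = 0) :
    HasCompactSupport g :=
  HasCompactSupport.intro (isCompact_closedBall (0 : E3) R) fun y hy => h y (by simpa using hy)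

theorem hasCompactSupport_pd (hg : HasCompactSupport g) (j : Fin 3) : HasCompactSupport (pd g j) :=
  hg.fderiv_apply (𝕜 := ℝ) (ee j)

theorem integral_mul_pd (hf : ContDiff ℝ ∞ f) (hg : ContDiff ℝ ∞ g) (hc : HasCompactSupport g)
    (j : Fin 3) : ∫ y, f y * pd g j y = -∫ y, pd f j y * g y := by
  refine integral_mul_fderiv_eq_neg_fderiv_mul_of_integrable ?_ ?_ ?_
    (fun _ _ => differentiableAt_of_smooth hf) (fun _ _ => differentiableAt_of_smooth hg)
  · exact ((contDiff_pd hf j).continuous.mul hg.continuous).integrable_of_hasCompactSupport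
      hc.mul_left
  · exact (hf.continuous.mul (contDiff_pd hg j).continuous).integrable_of_hasCompactSupport
      (hasCompactSupport_pd hc j).mul_left
  · exact (hf.continuous.mul hg.continuous).integrable_of_hasCompactSupport hc.mul_left

theorem integral_pd_eq_zero (hg : ContDiff ℝ ∞ g) (hc : HasCompactSupport g) (j : Fin 3) :
    ∫ y, pd g j y = 0 := by
  simpa [pd_const] using integral_mul_pd (f := fun _ => 1) contDiff_const hg hc j

end IntegrationByParts

section Mollification

/-- The class of weights used in `mollify`: smooth functions with support inside the open unit
ball. -/
structure IsTestFunction (g : E3 → ℝ) : Prop where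
  contDiff : ContDiff ℝ ∞ g
  tsupport_subset : tsupport g ⊆ ball 0 1

/-- The average of `f` around `x` at scale `t` with weight `g`. The weight is not normalized and
may change sign. -/
def mollify (f g : E3 → ℝ) (x : E3) (t : ℝ) : ℝ := ∫ y, f (x + t • y) * g y

variable {f g : E3 → ℝ} {x : E3} {r t : ℝ}

namespace IsTestFunction

theorem eq_zero (hg : IsTestFunction g) {y : E3} (hy : 1 ≤ ‖y‖) : g y = 0 :=
  image_eq_zero_of_notMem_tsupport fun h => hy.not_gt (by simpa using hg.tsupport_subset h)

theorem hasCompactSupport (hg : IsTestFunction g) : HasCompactSupport g :=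
  hasCompactSupport_of_eq_zero_of_lt_norm fun _ hy => hg.eq_zero hy.le

theorem pd (hg : IsTestFunction g) (j : Fin 3) : IsTestFunction (pd g j) :=
  ⟨contDiff_pd hg.contDiff j,
    (tsupport_fderiv_apply_subset (𝕜 := ℝ) (ee j)).trans hg.tsupport_subset⟩

theorem lap (hg : IsTestFunction g) : IsTestFunction (lap g) := by
  refine ⟨contDiff_lap hg.contDiff, (closure_minimal (fun y hy => ?_)
    (isClosed_tsupport g)).trans hg.tsupport_subset⟩
  obtain ⟨l, -, hl⟩ := Finset.exists_ne_zero_of_sum_ne_zero hy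
  exact ((tsupport_fderiv_apply_subset (𝕜 := ℝ) (ee l)).trans
    (tsupport_fderiv_apply_subset (𝕜 := ℝ) (ee l))) (subset_tsupport _ hl)

theorem integrable_comp_mul (hg : IsTestFunction g) (hf : Continuous f) (x : E3) (t : ℝ) :
    Integrable fun y => f (x + t • y) * g y :=
  ((hf.comp (by fun_prop)).mul hg.contDiff.continuous).integrable_of_hasCompactSupport
    hg.hasCompactSupport.mul_left

end IsTestFunction

theorem add_smul_mem_ball (ht : 0 < t) (htr : t ≤ r) {y : E3} (hy : ‖y‖ < 1) :
    x + t • y ∈ ball x r := by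
  rw [mem_ball_iff_norm, add_sub_cancel_left, norm_smul, Real.norm_of_nonneg ht.le]
  exact (mul_lt_of_lt_one_right ht hy).trans_le htr

theorem mollify_zero (f g : E3 → ℝ) (x : E3) : mollify f g x 0 = f x * ∫ y, g y := by
  simp [mollify, integral_const_mul]

theorem mollify_congr {f' : E3 → ℝ} (hg : IsTestFunction g) (ht : 0 < t) (htr : t ≤ r)
    (h : ∀ z ∈ ball x r, f z = f' z) : mollify f g x t = mollify f' g x t := by
  refine integral_congr_ae (Eventually.of_forall fun y => ?_)
  rcases lt_or_ge ‖y‖ 1 with hy | hy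
  · simp only [h _ (add_smul_mem_ball ht htr hy)]
  · simp only [hg.eq_zero hy, mul_zero]

theorem abs_mollify_le {B : ℝ} (hg : IsTestFunction g) (ht : 0 < t) (htr : t ≤ r)
    (h : ∀ z ∈ ball x r, |f z| ≤ B) : |mollify f g x t| ≤ B * ∫ y, |g y| := by
  rw [← integral_const_mul, ← Real.norm_eq_abs]
  refine norm_integral_le_of_norm_le ((hg.contDiff.continuous.abs.integrable_of_hasCompactSupport
    hg.hasCompactSupport.abs).const_mul B) (Eventually.of_forall fun y => ?_)
  rw [norm_mul, Real.norm_eq_abs, Real.norm_eq_abs]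
  rcases lt_or_ge ‖y‖ 1 with hy | hy
  · exact mul_le_mul_of_nonneg_right (h _ (add_smul_mem_ball ht htr hy)) (abs_nonneg _)
  · simp [hg.eq_zero hy]

theorem mollify_add {f' : E3 → ℝ} (hg : IsTestFunction g) (hf : Continuous f)
    (hf' : Continuous f') (x : E3) (t : ℝ) :
    mollify (fun y => f y + f' y) g x t = mollify f g x t + mollify f' g x t := by
  simp only [mollify, add_mul]
  exact integral_add (hg.integrable_comp_mul hf x t) (hg.integrable_comp_mul hf' x t)

theorem mollify_neg (f g : E3 → ℝ) (x : E3) (t : ℝ) :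
    mollify (fun y => -f y) g x t = -mollify f g x t := by
  simp only [mollify, neg_mul, integral_neg]

theorem mollify_sum {ι : Type*} [Fintype ι] {f : ι → E3 → ℝ} (hg : IsTestFunction g)
    (hf : ∀ i, Continuous (f i)) (x : E3) (t : ℝ) :
    mollify (fun y => ∑ i, f i y) g x t = ∑ i, mollify (f i) g x t := by
  simp only [mollify, Finset.sum_mul]
  exact integral_finsetSum _ fun i _ => hg.integrable_comp_mul (hf i) x t

theorem mollify_pd_right (hg : IsTestFunction g) (hf : ContDiff ℝ ∞ f) (j : Fin 3) (x : E3)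
    (t : ℝ) : mollify f (pd g j) x t = -(t * mollify (pd f j) g x t) := by
  have hcomp : ContDiff ℝ ∞ fun y => f (x + t • y) :=
    hf.comp (contDiff_const.add (contDiff_id.const_smul t))
  simp only [mollify, integral_mul_pd hcomp hg.contDiff hg.hasCompactSupport, pd_comp_add_smul,
    mul_assoc, integral_const_mul]

theorem mollify_pd_pd_right (hg : IsTestFunction g) (hf : ContDiff ℝ ∞ f) (i j : Fin 3) (x : E3)
    (t : ℝ) : mollify f (pd (pd g i) j) x t = t ^ 2 * mollify (pd (pd f j) i) g x t := by
  rw [mollify_pd_right (hg.pd i) hf, mollify_pd_right hg (contDiff_pd hf j)]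
  ring

theorem mollify_lap_right (hg : IsTestFunction g) (hf : ContDiff ℝ ∞ f) (x : E3) (t : ℝ) :
    mollify f (lap g) x t = t ^ 2 * mollify (lap f) g x t := by
  have hsum : mollify f (lap g) x t = ∑ l, mollify f (pd (pd g l) l) x t := by
    simp only [mollify, lap, Finset.mul_sum]
    exact integral_finsetSum _ fun l _ =>
      ((hg.pd l).pd l).integrable_comp_mul hf.continuous x t
  rw [hsum, Finset.sum_congr rfl fun l _ => mollify_pd_pd_right hg hf l l x t, ← Finset.mul_sum,
    ← mollify_sum hg fun l => (contDiff_pd (contDiff_pd hf l) l).continuous]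
  rfl

theorem hasDerivAt_mollify (hf : ContDiff ℝ ∞ f) (hg : IsTestFunction g) (x : E3) (t : ℝ) :
    HasDerivAt (mollify f g x) (∑ j, mollify (pd f j) (fun y => y j * g y) x t) t := by
  have setIntegral_eq : ∀ F : E3 → ℝ, (∀ y, g y = 0 → F y = 0) →
      ∫ y in closedBall (0 : E3) 1, F y = ∫ y, F y := fun F hF =>
    setIntegral_eq_integral_of_forall_compl_eq_zero fun y hy =>
      hF y (hg.eq_zero (le_of_not_ge (by simpa using hy)))
  have hg' := hg.contDiff.continuous
  have hf' := fun j => (contDiff_pd hf j).continuous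
  have hderiv : ∀ t y, HasDerivAt (fun t => f (x + t • y) * g y)
      (∑ j, pd f j (x + t • y) * (y j * g y)) t := fun t y => by
    have hline : HasDerivAt (fun t : ℝ => x + t • y) y t := by
      simpa using ((hasDerivAt_id t).smul_const y).const_add x
    refine (((differentiableAt_of_smooth hf).hasFDerivAt.comp_hasDerivAt t hline).mul_const
      (g y)).congr_deriv ?_
    rw [fderiv_apply_eq_sum, Finset.sum_mul]
    exact Finset.sum_congr rfl fun j _ => by ring
  have key := hasDerivAt_setIntegral_of_continuous (μ := (volume : Measure E3))
    (isCompact_closedBall (0 : E3) 1) (by fun_prop) (by fun_prop) hderiv t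
  rw [setIntegral_eq _ fun y hy => by simp [hy], integral_finsetSum] at key
  · exact key.congr_of_eventuallyEq
      (Eventually.of_forall fun t => (setIntegral_eq _ fun y hy => by simp [hy]).symm)
  · exact fun j _ => (((hf' j).comp (by fun_prop)).mul
      (by fun_prop)).integrable_of_hasCompactSupport hg.hasCompactSupport.mul_left.mul_left

end Mollification

section BiharmonicKernel

theorem exists_smooth_antiderivative {g : ℝ → ℝ} {a : ℝ} (hg : ContDiff ℝ ∞ g)
    (hga : ∀ t, a < t → g t = 0) :
    ∃ G : ℝ → ℝ, ContDiff ℝ ∞ G ∧ (∀ t, HasDerivAt G (g t) t) ∧ ∀ t, a < t → G t = 0 := by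
  have hderiv : ∀ t, HasDerivAt (fun t => ∫ s in a..t, g s) (g t) t := fun t =>
    (hg.continuous.integral_hasStrictDerivAt a t).hasDerivAt
  refine ⟨fun t => ∫ s in a..t, g s, contDiff_infty_iff_deriv.2
    ⟨fun t => (hderiv t).differentiableAt, ?_⟩, hderiv, fun t ht => ?_⟩
  · rwa [funext fun t => (hderiv t).deriv]
  · refine intervalIntegral.integral_zero_ae (Eventually.of_forall fun s hs => hga s ?_)
    rw [Set.uIoc_of_le ht.le] at hs
    exact hs.1

theorem deriv_eq_zero_of_lt {g : ℝ → ℝ} {a t : ℝ} (hga : ∀ t, a < t → g t = 0) (ht : a < t) :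
    deriv g t = 0 := by
  have : g =ᶠ[nhds t] fun _ => 0 := Filter.eventuallyEq_of_mem (Ioi_mem_nhds ht) hga
  rw [this.deriv_eq, deriv_const]

theorem contDiff_comp_norm_sq {h : ℝ → ℝ} (hh : ContDiff ℝ ∞ h) :
    ContDiff ℝ ∞ fun y : E3 => h (‖y‖ ^ 2) :=
  hh.comp (contDiff_norm_sq ℝ)

theorem isTestFunction_comp_norm_sq {h : ℝ → ℝ} {a : ℝ} (ha : a < 1) (hh : ContDiff ℝ ∞ h)
    (hha : ∀ t, a < t → h t = 0) : IsTestFunction fun y => h (‖y‖ ^ 2) := by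
  refine ⟨contDiff_comp_norm_sq hh, fun y hy => ?_⟩
  have hsub : (Function.support fun y : E3 => h (‖y‖ ^ 2)) ⊆ {y | ‖y‖ ^ 2 ≤ a} :=
    fun _ hz => le_of_not_gt fun hlt => hz (hha _ hlt)
  have hya : ‖y‖ ^ 2 ≤ a :=
    closure_minimal hsub (isClosed_le (by fun_prop) continuous_const) hy
  rw [mem_ball_zero_iff]
  nlinarith

theorem lap_comp_norm_sq {h h' h'' : ℝ → ℝ} (hh : ∀ t, HasDerivAt h (h' t) t)
    (hh' : ∀ t, HasDerivAt h' (h'' t) t) (x : E3) :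
    lap (fun y => h (‖y‖ ^ 2)) x = 4 * ‖x‖ ^ 2 * h'' (‖x‖ ^ 2) + 6 * h' (‖x‖ ^ 2) := by
  have pd_eq : ∀ j, pd (fun y : E3 => h (‖y‖ ^ 2)) j = fun y => 2 * (y j * h' (‖y‖ ^ 2)) :=
    fun j => funext fun y => pd_comp_norm_sq (hh _) j
  have pd_pd_eq : ∀ j, pd (pd (fun y : E3 => h (‖y‖ ^ 2)) j) j x =
      x j * x j * (4 * h'' (‖x‖ ^ 2)) + 2 * h' (‖x‖ ^ 2) := fun j => by
    have hd : DifferentiableAt ℝ (fun y : E3 => h' (‖y‖ ^ 2)) x :=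
      (hh' _).differentiableAt.comp x (differentiableAt_of_smooth (contDiff_norm_sq ℝ))
    rw [pd_eq, pd_const_mul, pd_mul (differentiableAt_of_smooth (contDiff_coord j)) hd,
      pd_comp_norm_sq (hh' _), pd_coord, if_pos rfl]
    ring
  simp only [lap, pd_pd_eq, Finset.sum_add_distrib, ← Finset.sum_mul, sum_coord_mul_self,
    Finset.sum_const, Finset.card_univ, Fintype.card_fin, nsmul_eq_mul]
  ring

theorem integrable_coord_mul_pd {H : E3 → ℝ} (hH : ContDiff ℝ ∞ H) (hc : HasCompactSupport H)
    (j : Fin 3) : Integrable fun y : E3 => y j * pd H j y :=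
  ((contDiff_coord j).continuous.mul
    (contDiff_pd hH j).continuous).integrable_of_hasCompactSupport
    (hasCompactSupport_pd hc j).mul_left

theorem integral_sum_coord_mul_pd {H : E3 → ℝ} (hH : ContDiff ℝ ∞ H) (hc : HasCompactSupport H) :
    ∫ y : E3, ∑ j, y j * pd H j y = -(3 * ∫ y, H y) := by
  rw [integral_finsetSum _ fun j _ => integrable_coord_mul_pd hH hc j]
  simp [integral_mul_pd (contDiff_coord _) hH hc, pd_coord]

theorem integral_radial_weight {g : ℝ → ℝ} (hg : ContDiff ℝ ∞ g)
    (hc : HasCompactSupport fun y : E3 => g (‖y‖ ^ 2)) :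
    ∫ y : E3, (8 * ‖y‖ ^ 2 * deriv g (‖y‖ ^ 2) + 20 * g (‖y‖ ^ 2)) =
      8 * ∫ y : E3, g (‖y‖ ^ 2) := by
  set H : E3 → ℝ := fun y => g (‖y‖ ^ 2)
  have hH : ContDiff ℝ ∞ H := contDiff_comp_norm_sq hg
  have pd_H : ∀ j y, pd H j y = 2 * (y j * deriv g (‖y‖ ^ 2)) := fun j y =>
    pd_comp_norm_sq (hg.differentiable (by simp) _).hasDerivAt j
  have integrand_eq : ∀ y : E3, 8 * ‖y‖ ^ 2 * deriv g (‖y‖ ^ 2) + 20 * g (‖y‖ ^ 2) =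
      4 * (∑ j, y j * pd H j y) + 20 * H y := fun y => by
    have : ∀ j, y j * pd H j y = y j * y j * (2 * deriv g (‖y‖ ^ 2)) := fun j => by
      rw [pd_H]
      ring
    rw [Finset.sum_congr rfl fun j _ => this j, ← Finset.sum_mul, sum_coord_mul_self]
    ring
  have hint : Integrable fun y : E3 => ∑ j, y j * pd H j y :=
    integrable_finsetSum _ fun j _ => integrable_coord_mul_pd hH hc j
  simp only [integrand_eq]
  rw [integral_add (hint.const_mul 4)
    ((hH.continuous.integrable_of_hasCompactSupport hc).const_mul 20), integral_const_mul,
    integral_const_mul, integral_sum_coord_mul_pd hH hc]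
  ring

-- `k` is radial, `k = h(|y|²)`. Then `lap k` is radial too, so its gradient is a multiple `φ` of
-- `y`, and choosing `h''` as a nonnegative bump makes `∫ φ = 8 ∫ h''(|y|²)` positive.
theorem exists_biharmonic_kernel : ∃ k φ : E3 → ℝ, IsTestFunction k ∧ IsTestFunction φ ∧
    (∀ j y, y j * φ y = pd (lap k) j y) ∧ 0 < ∫ y, φ y := by
  set g : ℝ → ℝ := fun t => expNegInvGlue (3 / 4 - t)
  have hg : ContDiff ℝ ∞ g := expNegInvGlue.contDiff.comp (by fun_prop)
  have hg0 : ∀ t, 3 / 4 < t → g t = 0 := fun t ht => expNegInvGlue.zero_of_nonpos (by linarith)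
  have hg' : ContDiff ℝ ∞ (deriv g) := (contDiff_infty_iff_deriv.1 hg).2
  have hderiv : ∀ t, HasDerivAt g (deriv g t) t := fun t =>
    (hg.differentiable (by simp) t).hasDerivAt
  obtain ⟨h', hh', hderiv', hh'0⟩ := exists_smooth_antiderivative hg hg0
  obtain ⟨h, hh, hderiv'', hh0⟩ := exists_smooth_antiderivative hh' hh'0
  have hlt : (3 / 4 : ℝ) < 1 := by norm_num
  have hlap : lap (fun y => h (‖y‖ ^ 2)) =
      fun y => (fun t => 4 * t * g t + 6 * h' t) (‖y‖ ^ 2) :=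
    funext fun y => lap_comp_norm_sq hderiv'' hderiv' y
  have hderiv_lap : ∀ t, HasDerivAt (fun t => 4 * t * g t + 6 * h' t)
      (4 * t * deriv g t + 10 * g t) t := fun t =>
    ((((hasDerivAt_id t).const_mul 4).mul (hderiv t)).add
      ((hderiv' t).const_mul 6)).congr_deriv (by simp only [id]; ring)
  refine ⟨fun y => h (‖y‖ ^ 2), fun y => 8 * ‖y‖ ^ 2 * deriv g (‖y‖ ^ 2) + 20 * g (‖y‖ ^ 2),
    isTestFunction_comp_norm_sq hlt hh hh0,
    isTestFunction_comp_norm_sq (h := fun t => 8 * t * deriv g t + 20 * g t) hlt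
      (((contDiff_const.mul contDiff_id).mul hg').add (contDiff_const.mul hg))
      fun t ht => by simp [hg0 t ht, deriv_eq_zero_of_lt hg0 ht],
    fun j y => ?_, ?_⟩
  · rw [hlap, pd_comp_norm_sq (hderiv_lap _)]
    ring
  · have htest := isTestFunction_comp_norm_sq hlt hg hg0
    rw [integral_radial_weight hg htest.hasCompactSupport]
    refine mul_pos (by norm_num)
      (htest.contDiff.continuous.integral_pos_of_hasCompactSupport_nonneg_nonzero
        htest.hasCompactSupport (x := 0) (fun y => expNegInvGlue.nonneg _) (by simp [g]))

end BiharmonicKernel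

section StokesGradientBound

/-- The stationary Stokes system `Δv = div T + ∇q`, `div v = 0` on `s` with velocity `v`,
stress `T` and pressure `q`. -/
def StokesOn (s : Set E3) (v : Fin 3 → E3 → ℝ) (T : Fin 3 → Fin 3 → E3 → ℝ) (q : E3 → ℝ) : Prop :=
  (∀ x ∈ s, ∀ i, lap (v i) x = divergence (T i) x + pd q i x) ∧ ∀ x ∈ s, divergence v x = 0

namespace StokesOn

variable {s : Set E3} {v : Fin 3 → E3 → ℝ} {T : Fin 3 → Fin 3 → E3 → ℝ} {q : E3 → ℝ}

theorem partial_deriv (hs : IsOpen s) (hv : ∀ i, ContDiff ℝ ∞ (v i))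
    (hT : ∀ i j, ContDiff ℝ ∞ (T i j)) (hq : ContDiff ℝ ∞ q) (h : StokesOn s v T q) (l : Fin 3) :
    StokesOn s (fun i => pd (v i) l) (fun i j => pd (T i j) l) (pd q l) := by
  refine ⟨fun x hx i => ?_, fun x hx => ?_⟩
  · rw [← pd_lap (hv i), pd_congr_on hs (fun y hy => h.1 y hy i) l x hx,
      pd_add (differentiableAt_of_smooth (contDiff_divergence (hT i)))
        (differentiableAt_of_smooth (contDiff_pd hq i)), pd_divergence (hT i),
      pd_comm_of_smooth hq]
  · rw [← pd_divergence hv, pd_congr_on (g := fun _ => 0) hs h.2 l x hx, pd_const]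

theorem lap_pressure (hs : IsOpen s) (hv : ∀ i, ContDiff ℝ ∞ (v i))
    (hT : ∀ i j, ContDiff ℝ ∞ (T i j)) (hq : ContDiff ℝ ∞ q) (h : StokesOn s v T q) :
    ∀ x ∈ s, lap q x = -divergence (fun i => divergence (T i)) x := fun x hx => by
  have pd_eq : ∀ i, pd (lap (v i)) i x = pd (divergence (T i)) i x + pd (pd q i) i x := fun i => by
    rw [pd_congr_on hs (fun y hy => h.1 y hy i) i x hx,
      pd_add (differentiableAt_of_smooth (contDiff_divergence (hT i)))
        (differentiableAt_of_smooth (contDiff_pd hq i))]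
  have lap_divergence : lap (divergence v) x = divergence (fun i => lap (v i)) x := by
    unfold divergence
    rw [lap_sum fun i => contDiff_pd (hv i) i]
    simp only [pd_lap (hv _)]
  have hzero : lap (divergence v) x = 0 := by
    rw [lap_congr_on (g := fun _ => 0) hs h.2 x hx, lap_const]
  rw [lap_divergence, divergence, Finset.sum_congr rfl fun i _ => pd_eq i,
    Finset.sum_add_distrib] at hzero
  exact eq_neg_of_add_eq_zero_right hzero

variable {k φ : E3 → ℝ} {x : E3} {r t : ℝ}

theorem mollify_pressure (hv : ∀ i, ContDiff ℝ ∞ (v i)) (hT : ∀ i j, ContDiff ℝ ∞ (T i j))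
    (hq : ContDiff ℝ ∞ q) (h : StokesOn (ball x r) v T q) (hk : IsTestFunction k)
    (ht : 0 < t) (htr : t ≤ r) (i : Fin 3) :
    mollify q (pd (lap k) i) x t = -∑ j, ∑ l, mollify (T j l) (pd (pd (pd k i) j) l) x t := by
  have hdiv : ∀ j, ContDiff ℝ ∞ (pd (divergence (T j)) j) := fun j =>
    contDiff_pd (contDiff_divergence (hT j)) j
  have hterm : ∀ j, mollify (pd (divergence (T j)) j) (pd k i) x t =
      ∑ l, mollify (pd (pd (T j l) l) j) (pd k i) x t := fun j => by
    rw [← mollify_sum (hk.pd i) fun l => (contDiff_pd (contDiff_pd (hT j l) l) j).continuous]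
    congr 1
    ext z
    exact pd_sum (fun l => differentiableAt_of_smooth (contDiff_pd (hT j l) l)) j
  calc mollify q (pd (lap k) i) x t = t ^ 2 * mollify (lap q) (pd k i) x t := by
        rw [pd_lap hk.contDiff, mollify_lap_right (hk.pd i) hq]
    _ = -(t ^ 2 * ∑ j, mollify (pd (divergence (T j)) j) (pd k i) x t) := by
        rw [mollify_congr (hk.pd i) ht htr (h.lap_pressure isOpen_ball hv hT hq), mollify_neg,
          mul_neg, ← mollify_sum (hk.pd i) fun j => (hdiv j).continuous]
        rfl
    _ = -∑ j, ∑ l, mollify (T j l) (pd (pd (pd k i) j) l) x t := by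
        simp only [hterm, Finset.mul_sum, mollify_pd_pd_right (hk.pd i) (hT _ _)]

-- Repeated integration by parts against `k` eliminates both the velocity and the pressure.
theorem mollify_rate (hv : ∀ i, ContDiff ℝ ∞ (v i)) (hT : ∀ i j, ContDiff ℝ ∞ (T i j))
    (hq : ContDiff ℝ ∞ q) (h : StokesOn (ball x r) v T q) (hk : IsTestFunction k)
    (hkφ : ∀ j y, y j * φ y = pd (lap k) j y) (ht : 0 < t) (htr : t ≤ r) (i : Fin 3) :
    ∑ j, mollify (pd (v i) j) (fun y => y j * φ y) x t =
      (∑ j, mollify (T i j) (pd (lap k) j) x t) -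
        ∑ j, ∑ l, mollify (T j l) (pd (pd (pd k i) j) l) x t := by
  have hdiv : ContDiff ℝ ∞ (divergence (T i)) := contDiff_divergence (hT i)
  calc ∑ j, mollify (pd (v i) j) (fun y => y j * φ y) x t
      = -(t * ∑ j, mollify (pd (pd (v i) j) j) (lap k) x t) := by
        simp only [funext (hkφ _), mollify_pd_right hk.lap (contDiff_pd (hv i) _),
          Finset.sum_neg_distrib, Finset.mul_sum]
    _ = -(t * mollify (lap (v i)) (lap k) x t) := by
        rw [← mollify_sum hk.lap fun j => (contDiff_pd (contDiff_pd (hv i) j) j).continuous]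
        rfl
    _ = -(t * mollify (divergence (T i)) (lap k) x t) + -(t * mollify (pd q i) (lap k) x t) := by
        rw [mollify_congr hk.lap ht htr fun z hz => h.1 z hz i,
          mollify_add hk.lap hdiv.continuous (contDiff_pd hq i).continuous]
        ring
    _ = (∑ j, mollify (T i j) (pd (lap k) j) x t) + mollify q (pd (lap k) i) x t := by
        simp only [mollify_pd_right hk.lap (hT i _), mollify_pd_right hk.lap hq,
          Finset.sum_neg_distrib, ← Finset.mul_sum]
        rw [← mollify_sum hk.lap fun j => (contDiff_pd (hT i j) j).continuous]
        rfl
    _ = _ := by rw [h.mollify_pressure hv hT hq hk ht htr, ← sub_eq_add_neg]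

theorem abs_mollify_rate_le {B : ℝ} (hv : ∀ i, ContDiff ℝ ∞ (v i))
    (hT : ∀ i j, ContDiff ℝ ∞ (T i j)) (hq : ContDiff ℝ ∞ q) (h : StokesOn (ball x r) v T q)
    (hk : IsTestFunction k) (hkφ : ∀ j y, y j * φ y = pd (lap k) j y) (ht : 0 < t) (htr : t ≤ r)
    (hB : ∀ y ∈ ball x r, ∀ i j, |T i j y| ≤ B) (i : Fin 3) :
    |∑ j, mollify (pd (v i) j) (fun y => y j * φ y) x t| ≤
      B * ((∑ j, ∫ y, |pd (lap k) j y|) + ∑ j, ∑ l, ∫ y, |pd (pd (pd k i) j) l y|) := by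
  rw [h.mollify_rate hv hT hq hk hkφ ht htr, mul_add, Finset.mul_sum, Finset.mul_sum]
  simp only [Finset.mul_sum]
  refine (abs_sub _ _).trans (add_le_add ((Finset.abs_sum_le_sum_abs _ _).trans
    (Finset.sum_le_sum fun j _ => abs_mollify_le (hk.lap.pd j) ht htr fun z hz => hB z hz i j))
    ((Finset.abs_sum_le_sum_abs _ _).trans (Finset.sum_le_sum fun j _ =>
      (Finset.abs_sum_le_sum_abs _ _).trans (Finset.sum_le_sum fun l _ =>
        abs_mollify_le (((hk.pd i).pd j).pd l) ht htr fun z hz => hB z hz j l))))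

theorem abs_pd_mul_integral_le {A B : ℝ} (hv : ∀ i, ContDiff ℝ ∞ (v i))
    (hT : ∀ i j, ContDiff ℝ ∞ (T i j)) (hq : ContDiff ℝ ∞ q) (hr : 0 < r)
    (h : StokesOn (ball x r) v T q) (hk : IsTestFunction k) (hφ : IsTestFunction φ)
    (hkφ : ∀ j y, y j * φ y = pd (lap k) j y) (hA : ∀ y ∈ ball x r, ∀ i, |v i y| ≤ A)
    (hB : ∀ y ∈ ball x r, ∀ i j l, |pd (T i j) l y| ≤ B) (i l : Fin 3) :
    |pd (v i) l x * ∫ y, φ y| ≤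
      ((∑ j, ∫ y, |pd (lap k) j y|) + ∑ j, ∑ l, ∫ y, |pd (pd (pd k i) j) l y|) * (r * B) +
        (∫ y, |pd φ l y|) * (A / r) := by
  set V : ℝ → ℝ := mollify (pd (v i) l) φ x
  have hderiv := hasDerivAt_mollify (contDiff_pd (hv i) l) hφ x
  obtain ⟨t, ht, hslope⟩ := exists_hasDerivAt_eq_slope V _ hr
    (continuous_iff_continuousAt.2 fun t => (hderiv t).continuousAt).continuousOn
    fun t _ => hderiv t
  have hrate := (h.partial_deriv isOpen_ball hv hT hq l).abs_mollify_rate_le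
    (fun i => contDiff_pd (hv i) l) (fun i j => contDiff_pd (hT i j) l) (contDiff_pd hq l) hk hkφ
    ht.1 ht.2.le (fun z hz i j => hB z hz i j l) i
  rw [hslope, sub_zero, abs_div, abs_of_pos hr, div_le_iff₀ hr] at hrate
  have hVr : |V r| ≤ (∫ y, |pd φ l y|) * (A / r) := by
    have hparts := abs_mollify_le (hφ.pd l) hr le_rfl fun z hz => hA z hz i
    rw [mollify_pd_right hφ (hv i), abs_neg, abs_mul, abs_of_pos hr] at hparts
    rw [mul_div_assoc', le_div_iff₀ hr]
    linarith
  rw [← mollify_zero]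
  have := abs_sub_abs_le_abs_sub (V 0) (V r)
  rw [abs_sub_comm] at this
  linarith

end StokesOn

theorem exists_stokes_gradient_bound : ∃ K : ℝ, 0 ≤ K ∧ ∀ (v : Fin 3 → E3 → ℝ)
    (T : Fin 3 → Fin 3 → E3 → ℝ) (q : E3 → ℝ), (∀ i, ContDiff ℝ ∞ (v i)) →
    (∀ i j, ContDiff ℝ ∞ (T i j)) → ContDiff ℝ ∞ q → ∀ (x : E3) (r A B : ℝ), 0 < r →
    StokesOn (ball x r) v T q → (∀ y ∈ ball x r, ∀ i, |v i y| ≤ A) →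
    (∀ y ∈ ball x r, ∀ i j l, |pd (T i j) l y| ≤ B) →
    ∀ i l, |pd (v i) l x| ≤ K * (r * B + A / r) := by
  obtain ⟨k, φ, hk, hφ, hkφ, hI⟩ := exists_biharmonic_kernel
  set K₁ : Fin 3 → ℝ := fun i => (∑ j, ∫ y, |pd (lap k) j y|) +
    ∑ j, ∑ l, ∫ y, |pd (pd (pd k i) j) l y|
  set K₂ : Fin 3 → ℝ := fun l => ∫ y, |pd φ l y|
  have hK₁ : ∀ i, 0 ≤ K₁ i := fun i => by positivity
  have hK₂ : ∀ l, 0 ≤ K₂ l := fun l => by positivity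
  set K : ℝ := (∑ i, K₁ i) + ∑ l, K₂ l
  have hK : 0 ≤ K := by positivity
  refine ⟨K / ∫ y, φ y, div_nonneg hK hI.le, fun v T q hv hT hq x r A B hr h hA hB i l => ?_⟩
  have hA0 : 0 ≤ A := (abs_nonneg _).trans (hA x (mem_ball_self hr) 0)
  have hB0 : 0 ≤ B := (abs_nonneg _).trans (hB x (mem_ball_self hr) 0 0 0)
  have hK₁i : K₁ i ≤ K :=
    (Finset.single_le_sum (fun i _ => hK₁ i) (Finset.mem_univ i)).trans
      (le_add_of_nonneg_right (Finset.sum_nonneg fun l _ => hK₂ l))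
  have hK₂l : K₂ l ≤ K :=
    (Finset.single_le_sum (fun i _ => hK₂ i) (Finset.mem_univ l)).trans
      (le_add_of_nonneg_left (Finset.sum_nonneg fun i _ => hK₁ i))
  rw [div_mul_eq_mul_div, le_div_iff₀ hI]
  calc |pd (v i) l x| * ∫ y, φ y = |pd (v i) l x * ∫ y, φ y| := by
        rw [abs_mul, abs_of_pos hI]
    _ ≤ K₁ i * (r * B) + K₂ l * (A / r) :=
        h.abs_pd_mul_integral_le hv hT hq hr hk hφ hkφ hA hB i l
    _ ≤ K * (r * B) + K * (A / r) := by gcongr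
    _ = K * (r * B + A / r) := by ring

end StokesGradientBound

section InteriorEstimate

/-- The components of the force `-Δu + (u·∇)u + ∇p` which the flow `(u, p)` balances. -/
def nsForce (u : Fin 3 → E3 → ℝ) (p : E3 → ℝ) (i : Fin 3) (x : E3) : ℝ :=
  -lap (u i) x + (∑ j, u j x * pd (u i) j x) + pd p i x

/-- The stationary Navier–Stokes system on `s`, for a velocity given by its components. -/
def NSOn (s : Set E3) (u : Fin 3 → E3 → ℝ) (p : E3 → ℝ) : Prop :=
  (∀ x ∈ s, ∀ i, nsForce u p i x = 0) ∧ ∀ x ∈ s, divergence u x = 0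

theorem NSOn.mono {s t : Set E3} {u : Fin 3 → E3 → ℝ} {p : E3 → ℝ} (h : NSOn s u p)
    (hts : t ⊆ s) : NSOn t u p :=
  ⟨fun x hx => h.1 x (hts hx), fun x hx => h.2 x (hts hx)⟩

theorem NSOn.stokesOn {s : Set E3} {u : Fin 3 → E3 → ℝ} {p : E3 → ℝ}
    (hu : ∀ i, ContDiff ℝ ∞ (u i)) (h : NSOn s u p) :
    StokesOn s u (fun i j y => u i y * u j y) p := by
  refine ⟨fun x hx i => ?_, h.2⟩
  have force_eq : -lap (u i) x + (∑ j, u j x * pd (u i) j x) + pd p i x = 0 := h.1 x hx i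
  have div_eq : divergence (fun j y => u i y * u j y) x = ∑ j, u j x * pd (u i) j x := by
    have : ∑ j, u i x * pd (u j) j x = 0 := by
      rw [← Finset.mul_sum, show ∑ j, pd (u j) j x = 0 from h.2 x hx, mul_zero]
    simp only [divergence,
      pd_mul (differentiableAt_of_smooth (hu _)) (differentiableAt_of_smooth (hu _)),
      Finset.sum_add_distrib, this, zero_add, mul_comm]
  linarith

theorem StokesOn.pds {s : Set E3} {v : Fin 3 → E3 → ℝ} {T : Fin 3 → Fin 3 → E3 → ℝ} {q : E3 → ℝ}
    (hs : IsOpen s) (hv : ∀ i, ContDiff ℝ ∞ (v i)) (hT : ∀ i j, ContDiff ℝ ∞ (T i j))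
    (hq : ContDiff ℝ ∞ q) (h : StokesOn s v T q) (α : List (Fin 3)) :
    StokesOn s (fun i => pds α (v i)) (fun i j => pds α (T i j)) (pds α q) := by
  induction α generalizing v T q with
  | nil => exact h
  | cons l _ ih =>
    exact ih (fun i => contDiff_pd (hv i) l) (fun i j => contDiff_pd (hT i j) l)
      (contDiff_pd hq l) (h.partial_deriv hs hv hT hq l)

theorem exists_stokes_iteratedFDeriv_bound : ∃ K : ℝ, 0 ≤ K ∧ ∀ (n : ℕ) (v : Fin 3 → E3 → ℝ)
    (T : Fin 3 → Fin 3 → E3 → ℝ) (q : E3 → ℝ), (∀ i, ContDiff ℝ ∞ (v i)) →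
    (∀ i j, ContDiff ℝ ∞ (T i j)) → ContDiff ℝ ∞ q → ∀ (x : E3) (r A B : ℝ), 0 < r →
    StokesOn (ball x r) v T q → (∀ y ∈ ball x r, ∀ i, ‖iteratedFDeriv ℝ n (v i) y‖ ≤ A) →
    (∀ y ∈ ball x r, ∀ i j, ‖iteratedFDeriv ℝ (n + 1) (T i j) y‖ ≤ B) →
    ∀ i, ‖iteratedFDeriv ℝ (n + 1) (v i) x‖ ≤ 3 ^ (n + 1) * (K * (r * B + A / r)) := by
  obtain ⟨K, hK, hgrad⟩ := exists_stokes_gradient_bound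
  refine ⟨K, hK, fun n v T q hv hT hq x r A B hr h hA hB i => ?_⟩
  refine norm_iteratedFDeriv_le_of_pds (hv i) (n + 1) x fun β hβ => ?_
  rcases List.eq_nil_or_concat β with rfl | ⟨α, l, rfl⟩
  · simp at hβ
  have hα : α.length = n := by simpa using hβ
  rw [List.concat_eq_append, pds_concat]
  refine hgrad _ _ _ (fun i => contDiff_pds (hv i) α) (fun i j => contDiff_pds (hT i j) α)
    (contDiff_pds hq α) x r A B hr (h.pds isOpen_ball hv hT hq α)
    (fun z hz i => (abs_pds_le (hv i) α z).trans (hα ▸ hA z hz i)) (fun z hz i j l => ?_) i l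
  rw [← pds_concat]
  refine (abs_pds_le (hT i j) _ z).trans ?_
  rw [List.length_append, hα]
  exact hB z hz i j

theorem le_of_scaled_inequality {X : Type*} [PseudoMetricSpace X] [ProperSpace X] {g : X → ℝ}
    (hg : Continuous g) (hg0 : ∀ y, 0 ≤ g y) {x : X} {L a b : ℝ} (hL : 0 < L) (ha : 0 ≤ a)
    (hb : 0 ≤ b)
    (h : ∀ y, ∀ r, 0 < r → r ≤ L - dist y x → ∀ G, 0 ≤ G → (∀ z ∈ ball y r, g z ≤ G) →
      g y ≤ a * r * G + b / r) :
    g x ≤ 4 * b * (1 + 2 * a * L) / L := by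
  obtain ⟨y, hy, hmax⟩ := (isCompact_closedBall x L).exists_isMaxOn
    ⟨x, mem_closedBall_self hL.le⟩ (f := fun y => (L - dist y x) * g y) (by fun_prop)
  replace hmax : ∀ z ∈ closedBall x L, (L - dist z x) * g z ≤ (L - dist y x) * g y := hmax
  set d := L - dist y x
  have hx : L * g x ≤ d * g y := by simpa using hmax x (mem_closedBall_self hL.le)
  have hdL : d ≤ L := sub_le_self _ dist_nonneg
  rw [le_div_iff₀ hL, mul_comm]
  refine hx.trans ?_
  have hd_nonneg : 0 ≤ d := sub_nonneg.2 (mem_closedBall.1 hy)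
  rcases hd_nonneg.eq_or_lt with hd0 | hd0
  · rw [← hd0, zero_mul]
    positivity
  set ε := (2 + 4 * a * L)⁻¹ with hε
  have hε0 : 0 < ε := by positivity
  have hε_mul : ε * (2 + 4 * a * L) = 1 := inv_mul_cancel₀ (by positivity)
  have hε_half : ε ≤ 1 / 2 := by nlinarith [mul_nonneg hε0.le (mul_nonneg ha hL.le)]
  have hdouble : ∀ z ∈ ball y (ε * d), g z ≤ 2 * g y := fun z hz => by
    have hz' : d / 2 ≤ L - dist z x := by
      have := dist_triangle z y x
      have := mem_ball.1 hz
      nlinarith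
    have := hmax z (by rw [mem_closedBall]; linarith)
    nlinarith [hg0 z]
  have key := h y (ε * d) (by positivity) (by nlinarith) (2 * g y) (by linarith [hg0 y]) hdouble
  have hdg : d * g y ≤ 2 * a * ε * d * (d * g y) + b * (2 + 4 * a * L) :=
    calc d * g y ≤ d * (a * (ε * d) * (2 * g y) + b / (ε * d)) :=
          mul_le_mul_of_nonneg_left key hd0.le
      _ = 2 * a * ε * d * (d * g y) + b / ε := by field_simp
      _ = _ := by rw [hε, div_inv_eq_mul]
  have hsmall : 2 * a * ε * d ≤ 1 / 2 := by
    have : 2 * a * ε * d ≤ 2 * a * ε * L := mul_le_mul_of_nonneg_left hdL (by positivity)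
    nlinarith
  nlinarith [mul_nonneg hd0.le (hg0 y)]

theorem norm_iteratedFDeriv_mul_le_of_lower_orders {E A : Type*} [NormedAddCommGroup E]
    [NormedSpace ℝ E] [NormedRing A] [NormedAlgebra ℝ A] {f g : E → A} (hf : ContDiff ℝ ∞ f)
    (hg : ContDiff ℝ ∞ g) {n : ℕ} {x : E} {C D G : ℝ} (hfC : ‖f x‖ ≤ C) (hgC : ‖g x‖ ≤ C)
    (hfD : ∀ m ≤ n, ‖iteratedFDeriv ℝ m f x‖ ≤ D) (hgD : ∀ m ≤ n, ‖iteratedFDeriv ℝ m g x‖ ≤ D)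
    (hfG : ‖iteratedFDeriv ℝ (n + 1) f x‖ ≤ G) (hgG : ‖iteratedFDeriv ℝ (n + 1) g x‖ ≤ G) :
    ‖iteratedFDeriv ℝ (n + 1) (fun y => f y * g y) x‖ ≤ 2 ^ (n + 1) * (C * G + D ^ 2) := by
  have hC : 0 ≤ C := (norm_nonneg _).trans hfC
  have hG : 0 ≤ G := (norm_nonneg _).trans hfG
  have hD : 0 ≤ D := (norm_nonneg _).trans (hfD 0 n.zero_le)
  have hterm : ∀ m ≤ n + 1, ‖iteratedFDeriv ℝ m f x‖ * ‖iteratedFDeriv ℝ (n + 1 - m) g x‖ ≤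
      C * G + D ^ 2 := fun m hm => by
    rcases Nat.eq_zero_or_pos m with rfl | hm0
    · rw [norm_iteratedFDeriv_zero, Nat.sub_zero]
      nlinarith [mul_le_mul hfC hgG (norm_nonneg _) hC]
    rcases hm.eq_or_lt with rfl | hm1
    · rw [Nat.sub_self, norm_iteratedFDeriv_zero]
      nlinarith [mul_le_mul hfG hgC (norm_nonneg _) hG]
    · nlinarith [mul_le_mul (hfD m (by omega)) (hgD (n + 1 - m) (by omega)) (norm_nonneg _) hD,
        mul_nonneg hC hG]
  calc ‖iteratedFDeriv ℝ (n + 1) (fun y => f y * g y) x‖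
      ≤ ∑ m ∈ Finset.range (n + 1 + 1), ((n + 1).choose m : ℝ) *
          ‖iteratedFDeriv ℝ m f x‖ * ‖iteratedFDeriv ℝ (n + 1 - m) g x‖ :=
        norm_iteratedFDeriv_mul_le hf hg x (mod_cast le_top)
    _ ≤ ∑ m ∈ Finset.range (n + 1 + 1), ((n + 1).choose m : ℝ) * (C * G + D ^ 2) :=
        Finset.sum_le_sum fun m hm => by
          rw [mul_assoc]
          exact mul_le_mul_of_nonneg_left (hterm m (Nat.lt_succ_iff.1 (Finset.mem_range.1 hm)))
            (Nat.cast_nonneg _)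
    _ = 2 ^ (n + 1) * (C * G + D ^ 2) := by
        rw [← Finset.sum_mul]
        congr 1
        exact_mod_cast Nat.sum_range_choose (n + 1)

theorem exists_scaled_estimate (n : ℕ) {M D L : ℝ} (hM : 0 ≤ M) (hD : 0 ≤ D) (hL : 0 < L) :
    ∃ a b : ℝ, 0 ≤ a ∧ 0 ≤ b ∧ ∀ (u : Fin 3 → E3 → ℝ) (p : E3 → ℝ), (∀ i, ContDiff ℝ ∞ (u i)) →
    ContDiff ℝ ∞ p → ∀ C, 0 ≤ C → C ≤ M → ∀ y r, 0 < r → r ≤ L → NSOn (ball y r) u p →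
    (∀ z ∈ ball y r, ∀ i, |u i z| ≤ C) →
    (∀ z ∈ ball y r, ∀ m ≤ n, ∀ i, ‖iteratedFDeriv ℝ m (u i) z‖ ≤ D * C) →
    ∀ G, 0 ≤ G → (∀ z ∈ ball y r, ∑ i, ‖iteratedFDeriv ℝ (n + 1) (u i) z‖ ≤ G) →
    ∑ i, ‖iteratedFDeriv ℝ (n + 1) (u i) y‖ ≤ a * r * G + b * C / r := by
  obtain ⟨K, hK, hstokes⟩ := exists_stokes_iteratedFDeriv_bound
  refine ⟨3 ^ (n + 2) * K * 2 ^ (n + 1) * M,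
    3 ^ (n + 2) * K * (2 ^ (n + 1) * L ^ 2 * D ^ 2 * M + D), by positivity, by positivity,
    fun u p hu hp C hC hCM y r hr hrL hns hbd hlow G hG hsum => ?_⟩
  have htop : ∀ z ∈ ball y r, ∀ i, ‖iteratedFDeriv ℝ (n + 1) (u i) z‖ ≤ G := fun z hz i =>
    (Finset.single_le_sum (f := fun i => ‖iteratedFDeriv ℝ (n + 1) (u i) z‖)
      (fun i _ => norm_nonneg _) (Finset.mem_univ i)).trans (hsum z hz)
  set B := 2 ^ (n + 1) * (C * G + (D * C) ^ 2) with hB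
  have hderiv : ∀ i, ‖iteratedFDeriv ℝ (n + 1) (u i) y‖ ≤
      3 ^ (n + 1) * (K * (r * B + D * C / r)) :=
    hstokes n u _ p hu (fun i j => (hu i).mul (hu j)) hp y r (D * C) B hr (hns.stokesOn hu)
      (fun z hz i => hlow z hz n le_rfl i) fun z hz i j =>
      norm_iteratedFDeriv_mul_le_of_lower_orders (hu i) (hu j) (hbd z hz i) (hbd z hz j)
        (fun m hm => hlow z hz m hm i) (fun m hm => hlow z hz m hm j) (htop z hz i) (htop z hz j)
  have hrC : r * C ^ 2 ≤ L ^ 2 * M * C / r := by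
    rw [le_div_iff₀ hr]
    have : r ^ 2 * C ≤ L ^ 2 * M := by gcongr
    nlinarith [mul_le_mul_of_nonneg_right this hC]
  calc ∑ i, ‖iteratedFDeriv ℝ (n + 1) (u i) y‖
      ≤ ∑ _i : Fin 3, 3 ^ (n + 1) * (K * (r * B + D * C / r)) :=
        Finset.sum_le_sum fun i _ => hderiv i
    _ = 3 ^ (n + 2) * K * (2 ^ (n + 1) * (C * (r * G) + D ^ 2 * (r * C ^ 2)) + D * C / r) := by
        rw [hB]
        simp only [Finset.sum_const, Finset.card_univ, Fintype.card_fin, nsmul_eq_mul]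
        push_cast
        ring
    _ ≤ 3 ^ (n + 2) * K * (2 ^ (n + 1) * (M * (r * G) + D ^ 2 * (L ^ 2 * M * C / r)) +
          D * C / r) := by gcongr
    _ = _ := by ring

theorem exists_interior_estimate_succ (n : ℕ) {M D L : ℝ} (hM : 0 ≤ M) (hD : 0 ≤ D) (hL : 0 < L) :
    ∃ c : ℝ, 0 ≤ c ∧ ∀ (u : Fin 3 → E3 → ℝ) (p : E3 → ℝ), (∀ i, ContDiff ℝ ∞ (u i)) →
    ContDiff ℝ ∞ p → ∀ C, 0 ≤ C → C ≤ M → ∀ x, NSOn (ball x L) u p →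
    (∀ y ∈ ball x L, ∀ i, |u i y| ≤ C) →
    (∀ y ∈ ball x L, ∀ m ≤ n, ∀ i, ‖iteratedFDeriv ℝ m (u i) y‖ ≤ D * C) →
    ∀ i, ‖iteratedFDeriv ℝ (n + 1) (u i) x‖ ≤ c * C := by
  obtain ⟨a, b, ha, hb, hab⟩ := exists_scaled_estimate n hM hD hL
  refine ⟨4 * b * (1 + 2 * a * L) / L, by positivity,
    fun u p hu hp C hC hCM x hns hbd hlow i => ?_⟩
  calc ‖iteratedFDeriv ℝ (n + 1) (u i) x‖ ≤ ∑ i, ‖iteratedFDeriv ℝ (n + 1) (u i) x‖ :=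
        Finset.single_le_sum (f := fun i => ‖iteratedFDeriv ℝ (n + 1) (u i) x‖)
          (fun i _ => norm_nonneg _) (Finset.mem_univ i)
    _ ≤ 4 * (b * C) * (1 + 2 * a * L) / L := by
        refine le_of_scaled_inequality (g := fun x => ∑ i, ‖iteratedFDeriv ℝ (n + 1) (u i) x‖)
          (continuous_finsetSum _ fun i _ => continuous_norm_iteratedFDeriv (hu i) _)
          (fun y => Finset.sum_nonneg fun i _ => norm_nonneg _) hL ha (by positivity)
          fun y r hr hrL G hG hsum => ?_
        have hsub : ball y r ⊆ ball x L := ball_subset_ball' (by linarith)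
        exact hab u p hu hp C hC hCM y r hr (hrL.trans (sub_le_self _ dist_nonneg))
          (hns.mono hsub) (fun z hz => hbd z (hsub hz)) (fun z hz => hlow z (hsub hz)) G hG hsum
    _ = 4 * b * (1 + 2 * a * L) / L * C := by ring

theorem exists_interior_estimate (M : ℝ) (n : ℕ) : ∀ ρ : ℝ, 0 < ρ →
    ∃ c : ℝ, 0 ≤ c ∧ ∀ (u : Fin 3 → E3 → ℝ) (p : E3 → ℝ), (∀ i, ContDiff ℝ ∞ (u i)) →
    ContDiff ℝ ∞ p → ∀ (C : ℝ), C ≤ M → ∀ x : E3, NSOn (ball x ρ) u p →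
    (∀ y ∈ ball x ρ, ∀ i, |u i y| ≤ C) → ∀ i, ‖iteratedFDeriv ℝ n (u i) x‖ ≤ c * C := by
  induction n using Nat.strong_induction_on with
  | _ n ih =>
  intro ρ hρ
  rcases n with _ | n
  · exact ⟨1, zero_le_one, fun u p _ _ C _ x _ hb i => by simpa using hb x (mem_ball_self hρ) i⟩
  choose c hc0 hc using fun m : Fin (n + 1) => ih m m.2 (ρ / 2) (half_pos hρ)
  obtain ⟨c', hc'0, hc'⟩ := exists_interior_estimate_succ n (le_max_right M 0)
    (Finset.sum_nonneg fun m (_ : m ∈ Finset.univ) => hc0 m) (half_pos hρ)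
  refine ⟨c', hc'0, fun u p hu hp C hCM x hns hbd => ?_⟩
  have hC : 0 ≤ C := (abs_nonneg _).trans (hbd x (mem_ball_self hρ) 0)
  have hhalf : ball x (ρ / 2) ⊆ ball x ρ := ball_subset_ball (by linarith)
  refine hc' u p hu hp C hC (hCM.trans (le_max_left _ _)) x (hns.mono hhalf)
    (fun y hy => hbd y (hhalf hy)) fun y hy m hm i => ?_
  have hsub : ball y (ρ / 2) ⊆ ball x ρ :=
    ball_subset_ball' (by linarith [mem_ball.1 hy])
  calc ‖iteratedFDeriv ℝ m (u i) y‖ ≤ c ⟨m, Nat.lt_succ_of_le hm⟩ * C :=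
        hc ⟨m, Nat.lt_succ_of_le hm⟩ u p hu hp C hCM y (hns.mono hsub)
          (fun z hz => hbd z (hsub hz)) i
    _ ≤ (∑ m, c m) * C := by
        gcongr
        exact Finset.single_le_sum (fun i _ => hc0 i) (Finset.mem_univ _)

end InteriorEstimate

section Scaling

theorem pd_const_mul_comp_smul (f : E3 → ℝ) (c L : ℝ) (j : Fin 3) (y : E3) :
    pd (fun y => c * f (L • y)) j y = c * L * pd f j (L • y) := by
  rw [pd_const_mul c (fun y => f (L • y)), pd_comp_smul, mul_assoc]

theorem lap_const_mul_comp_smul (f : E3 → ℝ) (c L : ℝ) (y : E3) :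
    lap (fun y => c * f (L • y)) y = c * L ^ 2 * lap f (L • y) := by
  simp only [lap, fun l => funext (pd_const_mul_comp_smul f c L l), pd_const_mul_comp_smul,
    Finset.mul_sum]
  exact Finset.sum_congr rfl fun l _ => by ring

theorem nsForce_scale (u : Fin 3 → E3 → ℝ) (p : E3 → ℝ) (L : ℝ) (i : Fin 3) (y : E3) :
    nsForce (fun i y => L * u i (L • y)) (fun y => L ^ 2 * p (L • y)) i y =
      L ^ 3 * nsForce u p i (L • y) := by
  have hconv : ∑ j, L * u j (L • y) * (L * L * pd (u i) j (L • y)) =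
      L ^ 3 * ∑ j, u j (L • y) * pd (u i) j (L • y) := by
    rw [Finset.mul_sum]
    exact Finset.sum_congr rfl fun j _ => by ring
  simp only [nsForce, lap_const_mul_comp_smul, pd_const_mul_comp_smul, hconv]
  ring

theorem divergence_scale (u : Fin 3 → E3 → ℝ) (L : ℝ) (y : E3) :
    divergence (fun i y => L * u i (L • y)) y = L * L * divergence u (L • y) := by
  simp only [divergence, pd_const_mul_comp_smul, Finset.mul_sum]

theorem NSOn.scale {s : Set E3} {u : Fin 3 → E3 → ℝ} {p : E3 → ℝ} (h : NSOn s u p) (L : ℝ) :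
    NSOn {y | L • y ∈ s} (fun i y => L * u i (L • y)) (fun y => L ^ 2 * p (L • y)) :=
  ⟨fun y hy i => by rw [nsForce_scale, h.1 _ hy, mul_zero],
    fun y hy => by rw [divergence_scale, h.2 _ hy, mul_zero]⟩

variable {E : Type*} [NormedAddCommGroup E] [NormedSpace ℝ E] {f : E → ℝ}

theorem norm_iteratedFDeriv_const_mul (hf : ContDiff ℝ ∞ f) (c : ℝ) (k : ℕ) (x : E) :
    ‖iteratedFDeriv ℝ k (fun y => c * f y) x‖ = |c| * ‖iteratedFDeriv ℝ k f x‖ := by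
  have hsmul : iteratedFDeriv ℝ k (fun y => c * f y) x = c • iteratedFDeriv ℝ k f x :=
    iteratedFDeriv_const_smul_apply' (a := c) (f := f) (hf.of_le (mod_cast le_top)).contDiffAt
  rw [hsmul, norm_smul, Real.norm_eq_abs]

theorem norm_iteratedFDeriv_const_mul_comp_smul (hf : ContDiff ℝ ∞ f) (c L : ℝ) (k : ℕ) (x : E) :
    ‖iteratedFDeriv ℝ k (fun y => c * f (L • y)) x‖ =
      |c| * |L| ^ k * ‖iteratedFDeriv ℝ k f (L • x)‖ := by
  rw [norm_iteratedFDeriv_const_mul (f := fun y => f (L • y)) (hf.comp (contDiff_const_smul L)),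
    iteratedFDeriv_comp_const_smul _ (hf.of_le (mod_cast le_top)), norm_smul, norm_pow,
    Real.norm_eq_abs, mul_assoc]

end Scaling

section Decay

/-- All derivatives of `f` decay on `Ω` at the rates dictated by scaling of degree `-m`. The factor
`C` is kept apart from the constants `c` because the latter are to be uniform over all flows. -/
def DecaysOn (Ω : Set E3) (R C : ℝ) (c : ℕ → ℝ) (m : ℕ) (f : E3 → ℝ) : Prop :=
  ∀ k, ∀ x ∈ Ω, ‖iteratedFDeriv ℝ k f x‖ ≤ c k * C / (R + ‖x‖) ^ (k + m)

/-- The constants which the Leibniz rule gives for the derivatives of a product, from those of its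
factors. -/
def leibnizConst (c d : ℕ → ℝ) (k : ℕ) : ℝ :=
  ∑ i ∈ Finset.range (k + 1), (k.choose i : ℝ) * (c i * d (k - i))

theorem leibnizConst_nonneg {c d : ℕ → ℝ} (hc : ∀ k, 0 ≤ c k) (hd : ∀ k, 0 ≤ d k) (k : ℕ) :
    0 ≤ leibnizConst c d k :=
  Finset.sum_nonneg fun i _ => mul_nonneg (Nat.cast_nonneg _) (mul_nonneg (hc i) (hd _))

namespace DecaysOn

variable {Ω Ω' : Set E3} {R C C' M : ℝ} {c d : ℕ → ℝ} {m n : ℕ} {f g : E3 → ℝ}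

theorem partial_deriv (hf : ContDiff ℝ ∞ f) (h : DecaysOn Ω R C c m f) (j : Fin 3) :
    DecaysOn Ω R C (fun k => c (k + 1)) (m + 1) (pd f j) := fun k x hx => by
  have := (norm_iteratedFDeriv_pd_le hf j k x).trans (h (k + 1) x hx)
  rwa [show k + 1 + m = k + (m + 1) by ring] at this

theorem mono_const (hR : 0 < R) (h : DecaysOn Ω R C c m f) (hcd : ∀ k, c k * C ≤ d k * C') :
    DecaysOn Ω R C' d m f := fun k x hx =>
  (h k x hx).trans (by have := hcd k; gcongr)

theorem mono (h : DecaysOn Ω R C c m f) (hΩ : Ω' ⊆ Ω) : DecaysOn Ω' R C c m f :=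
  fun k x hx => h k x (hΩ hx)

theorem congr_on (hΩ : IsOpen Ω) (h : DecaysOn Ω R C c m f) (hfg : ∀ x ∈ Ω, g x = f x) :
    DecaysOn Ω R C c m g := fun k x hx => by
  rw [iteratedFDeriv_congr_on hΩ hfg k hx]
  exact h k x hx

theorem add (hf : ContDiff ℝ ∞ f) (hg : ContDiff ℝ ∞ g) (h : DecaysOn Ω R C c m f)
    (h' : DecaysOn Ω R C d m g) : DecaysOn Ω R C (fun k => c k + d k) m (fun x => f x + g x) :=
  fun k x hx => by
    have hadd : iteratedFDeriv ℝ k (fun x => f x + g x) x =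
        iteratedFDeriv ℝ k f x + iteratedFDeriv ℝ k g x :=
      iteratedFDeriv_add_apply (hf.of_le (mod_cast le_top)).contDiffAt
        (hg.of_le (mod_cast le_top)).contDiffAt
    rw [hadd, add_mul, add_div]
    exact (norm_add_le _ _).trans (add_le_add (h k x hx) (h' k x hx))

theorem neg (h : DecaysOn Ω R C c m f) : DecaysOn Ω R C c m (fun x => -f x) := fun k x hx => by
  have := h k x hx
  rwa [← norm_neg, ← iteratedFDeriv_neg_apply] at this

theorem sum {f : Fin 3 → E3 → ℝ} (hf : ∀ i, ContDiff ℝ ∞ (f i))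
    (h : ∀ i, DecaysOn Ω R C c m (f i)) :
    DecaysOn Ω R C (fun k => 3 * c k) m (fun x => ∑ i, f i x) := fun k x hx => by
  rw [iteratedFDeriv_fun_sum_apply fun i _ => ((hf i).of_le (mod_cast le_top)).contDiffAt]
  calc ‖∑ i, iteratedFDeriv ℝ k (f i) x‖ ≤ ∑ i, ‖iteratedFDeriv ℝ k (f i) x‖ := norm_sum_le _ _
    _ ≤ ∑ _i : Fin 3, c k * C / (R + ‖x‖) ^ (k + m) := Finset.sum_le_sum fun i _ => h i k x hx
    _ = 3 * c k * C / (R + ‖x‖) ^ (k + m) := by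
        rw [Finset.sum_const, Finset.card_univ, Fintype.card_fin, nsmul_eq_mul]
        push_cast
        ring

theorem mul (hf : ContDiff ℝ ∞ f) (hg : ContDiff ℝ ∞ g) (h : DecaysOn Ω R C c m f)
    (h' : DecaysOn Ω R C' d n g) :
    DecaysOn Ω R (C * C') (leibnizConst c d) (m + n) (fun x => f x * g x) := fun k x hx => by
  refine (norm_iteratedFDeriv_mul_le hf hg x (mod_cast le_top)).trans ?_
  rw [leibnizConst, Finset.sum_mul, Finset.sum_div]
  refine Finset.sum_le_sum fun i hi => ?_
  have hsplit : k + (m + n) = (i + m) + (k - i + n) := by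
    have := Finset.mem_range.1 hi
    omega
  calc (k.choose i : ℝ) * ‖iteratedFDeriv ℝ i f x‖ * ‖iteratedFDeriv ℝ (k - i) g x‖
      = k.choose i * (‖iteratedFDeriv ℝ i f x‖ * ‖iteratedFDeriv ℝ (k - i) g x‖) := mul_assoc ..
    _ ≤ k.choose i * (c i * C / (R + ‖x‖) ^ (i + m) *
          (d (k - i) * C' / (R + ‖x‖) ^ (k - i + n))) :=
        mul_le_mul_of_nonneg_left (mul_le_mul (h i x hx) (h' _ x hx) (norm_nonneg _)
          ((norm_nonneg _).trans (h i x hx))) (Nat.cast_nonneg _)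
    _ = _ := by
        rw [hsplit, pow_add _ (i + m)]
        ring

theorem of_pd (hf : ContDiff ℝ ∞ f) (h0 : ∀ x ∈ Ω, |f x| ≤ c 0 * C / (R + ‖x‖) ^ m)
    (h : ∀ j, DecaysOn Ω R C d (m + 1) (pd f j)) (hcd : ∀ k, c (k + 1) = 3 * d k) :
    DecaysOn Ω R C c m f := by
  rintro (_ | k) x hx
  · simpa using h0 x hx
  calc ‖iteratedFDeriv ℝ (k + 1) f x‖ ≤ ∑ j, ‖iteratedFDeriv ℝ k (pd f j) x‖ :=
        norm_iteratedFDeriv_succ_le hf k x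
    _ ≤ ∑ _j : Fin 3, d k * C / (R + ‖x‖) ^ (k + (m + 1)) :=
        Finset.sum_le_sum fun j _ => h j k x hx
    _ = c (k + 1) * C / (R + ‖x‖) ^ (k + 1 + m) := by
        rw [hcd, show k + 1 + m = k + (m + 1) by ring, Finset.sum_const, Finset.card_univ,
          Fintype.card_fin, nsmul_eq_mul]
        push_cast
        ring

theorem scale (hR : 0 < R) (hf : ContDiff ℝ ∞ f) (h : DecaysOn Set.univ 1 C c m f) :
    DecaysOn Set.univ R C c m fun x => R⁻¹ ^ m * f (R⁻¹ • x) := by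
  intro k x _
  rw [norm_iteratedFDeriv_const_mul_comp_smul hf, abs_pow, ← pow_add, abs_of_pos (by positivity)]
  have hnorm : 1 + ‖R⁻¹ • x‖ = R⁻¹ * (R + ‖x‖) := by
    rw [norm_smul, Real.norm_of_nonneg (by positivity)]
    field_simp
  calc R⁻¹ ^ (m + k) * ‖iteratedFDeriv ℝ k f (R⁻¹ • x)‖
      ≤ R⁻¹ ^ (m + k) * (c k * C / (1 + ‖R⁻¹ • x‖) ^ (k + m)) :=
        mul_le_mul_of_nonneg_left (h k _ (Set.mem_univ _)) (by positivity)
    _ = c k * C / (R + ‖x‖) ^ (k + m) := by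
        rw [hnorm, mul_pow, add_comm m k]
        field_simp

end DecaysOn

end Decay

section VelocityDecay

theorem le_norm_of_mem_ball_of_norm_eq_one {E : Type*} [SeminormedAddCommGroup E] {z y : E}
    {r : ℝ} (hz : ‖z‖ = 1) (hy : y ∈ ball z (1 - r)) : r < ‖y‖ := by
  have h1 := mem_ball_iff_norm'.1 hy
  have h2 := norm_sub_norm_le z y
  linarith

theorem abs_scale_le_of_decay {f : E3 → ℝ} {a b C L : ℝ} {y : E3} (ha : 0 < a) (hb : 0 < b)
    (hbL : b < L) (hy : a / b < ‖y‖) (hC : 0 ≤ C) (hf : ∀ x, a < ‖x‖ → |f x| ≤ C / (1 + ‖x‖)) :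
    |L * f (L • y)| ≤ b / a * C := by
  have hL : 0 < L := hb.trans hbL
  have hy0 : 0 < ‖y‖ := (div_pos ha hb).trans hy
  have hLy : ‖L • y‖ = L * ‖y‖ := by rw [norm_smul, Real.norm_of_nonneg hL.le]
  have hfar : a < ‖L • y‖ := by
    rw [hLy]
    calc a = b * (a / b) := by field_simp
      _ < L * ‖y‖ := mul_lt_mul'' hbL hy hb.le (by positivity)
  calc |L * f (L • y)| = L * |f (L • y)| := by rw [abs_mul, abs_of_pos hL]
    _ ≤ L * (C / (L * ‖y‖)) := by
        gcongr
        refine (hf _ hfar).trans ?_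
        rw [hLy]
        gcongr
        exact le_add_of_nonneg_left zero_le_one
    _ = ‖y‖⁻¹ * C := by field_simp
    _ ≤ (a / b)⁻¹ * C := by gcongr
    _ = b / a * C := by rw [inv_div]

/-- Rescaling by `L = ‖x‖` moves `x` to the unit sphere, where the interior estimate applies on a
ball whose radius does not depend on `x`. -/
theorem exists_velocity_decay (M : ℝ) {a b : ℝ} (ha : 0 < a) (hab : a < b) :
    ∃ c : ℕ → ℝ, (∀ k, 0 ≤ c k) ∧
    ∀ (u : Fin 3 → E3 → ℝ) (p : E3 → ℝ), (∀ i, ContDiff ℝ ∞ (u i)) → ContDiff ℝ ∞ p →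
    ∀ C : ℝ, 0 ≤ C → C ≤ M → NSOn {x | a < ‖x‖} u p →
    (∀ x, a < ‖x‖ → ∀ i, |u i x| ≤ C / (1 + ‖x‖)) →
    ∀ i, DecaysOn {x | b < ‖x‖} 1 C c 1 (u i) := by
  have hb : 0 < b := ha.trans hab
  choose c hc0 hc using fun n => exists_interior_estimate (b / a * M) n (1 - a / b)
    (sub_pos.2 ((div_lt_one hb).2 hab))
  refine ⟨fun k => b / a * c k * ((1 + b) / b) ^ (k + 1), fun k => by have := hc0 k; positivity,
    fun u p hu hp C hC hCM hns hbd i k x hx => ?_⟩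
  replace hx : b < ‖x‖ := hx
  set L := ‖x‖
  have hL : 0 < L := hb.trans hx
  have hz : ‖L⁻¹ • x‖ = 1 := by
    rw [norm_smul, norm_inv, norm_norm, inv_mul_cancel₀ hL.ne']
  have hLz : L • L⁻¹ • x = x := by rw [smul_smul, mul_inv_cancel₀ hL.ne', one_smul]
  have hnear : ∀ y ∈ ball (L⁻¹ • x) (1 - a / b), a / b < ‖y‖ := fun y hy =>
    le_norm_of_mem_ball_of_norm_eq_one hz hy
  have hfar : ∀ y ∈ ball (L⁻¹ • x) (1 - a / b), a < ‖L • y‖ := fun y hy => by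
    rw [norm_smul, Real.norm_of_nonneg hL.le]
    calc a = b * (a / b) := by field_simp
      _ < L * ‖y‖ := mul_lt_mul'' hx (hnear y hy) hb.le (by positivity)
  have key := hc k (fun i y => L * u i (L • y)) (fun y => L ^ 2 * p (L • y))
    (fun i => contDiff_const.mul ((hu i).comp (contDiff_const_smul L)))
    (contDiff_const.mul (hp.comp (contDiff_const_smul L))) (b / a * C)
    (mul_le_mul_of_nonneg_left hCM (by positivity)) (L⁻¹ • x) ((hns.scale L).mono hfar)
    (fun y hy i => abs_scale_le_of_decay ha hb hx (hnear y hy) hC fun x hx => hbd x hx i) i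
  rw [norm_iteratedFDeriv_const_mul_comp_smul (hu i), hLz, abs_of_pos hL, ← pow_succ'] at key
  have hone : 1 + L ≤ (1 + b) / b * L := by
    rw [div_mul_eq_mul_div, le_div_iff₀ hb]
    linarith
  rw [le_div_iff₀ (by positivity)]
  calc ‖iteratedFDeriv ℝ k (u i) x‖ * (1 + L) ^ (k + 1)
      ≤ ‖iteratedFDeriv ℝ k (u i) x‖ * ((1 + b) / b * L) ^ (k + 1) := by gcongr
    _ = ((1 + b) / b) ^ (k + 1) * (L ^ (k + 1) * ‖iteratedFDeriv ℝ k (u i) x‖) := by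
        rw [mul_pow]; ring
    _ ≤ ((1 + b) / b) ^ (k + 1) * (c k * (b / a * C)) := by gcongr
    _ = b / a * c k * ((1 + b) / b) ^ (k + 1) * C := by ring

end VelocityDecay

section LimitAtInfinity

variable {E : Type*} [NormedAddCommGroup E] [InnerProductSpace ℝ E] {f : E → ℝ} {b B : ℝ}
  {x y : E}

theorem half_le_norm_of_mem_segment {w : E} (hb : 0 ≤ b) (hx : b ≤ ‖x‖) (hy : b ≤ ‖y‖)
    (hxy : 0 ≤ inner ℝ x y) (hw : w ∈ segment ℝ x y) : b / 2 ≤ ‖w‖ := by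
  obtain ⟨s, t, hs, ht, hst, rfl⟩ := hw
  have hexpand : ‖s • x + t • y‖ ^ 2 = s ^ 2 * ‖x‖ ^ 2 + 2 * (s * t * inner ℝ x y) +
      t ^ 2 * ‖y‖ ^ 2 := by
    rw [norm_add_sq_real, norm_smul, norm_smul, real_inner_smul_left, real_inner_smul_right,
      Real.norm_of_nonneg hs, Real.norm_of_nonneg ht]
    ring
  have h1 : s ^ 2 * b ^ 2 ≤ s ^ 2 * ‖x‖ ^ 2 := by gcongr
  have h2 : t ^ 2 * b ^ 2 ≤ t ^ 2 * ‖y‖ ^ 2 := by gcongr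
  have h3 : 0 ≤ s * t * inner ℝ x y := by positivity
  have h4 : 1 / 2 ≤ s ^ 2 + t ^ 2 := by nlinarith [sq_nonneg (s - t)]
  refine abs_le_of_sq_le_sq' ?_ (norm_nonneg _) |>.2
  nlinarith [sq_nonneg b]

theorem abs_sub_le_of_norm_fderiv_le_on_segment (hf : Differentiable ℝ f)
    (h : ∀ w ∈ segment ℝ x y, ‖fderiv ℝ f w‖ ≤ B) : |f y - f x| ≤ B * ‖y - x‖ :=
  (convex_segment x y).norm_image_sub_le_of_norm_fderiv_le (𝕜 := ℝ) (fun w _ => hf w) h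
    (left_mem_segment ℝ x y) (right_mem_segment ℝ x y)

theorem dist_dyadic_le (hf : Differentiable ℝ f) (hB : 0 ≤ B)
    (h : ∀ x, b < ‖x‖ → ‖fderiv ℝ f x‖ ≤ B / ‖x‖ ^ 3) (hb : 0 < b) (hx : b < ‖x‖) (n : ℕ) :
    dist (f ((2 : ℝ) ^ n • x)) (f ((2 : ℝ) ^ (n + 1) • x)) ≤ B / ‖x‖ ^ 2 * (1 / 4) ^ n := by
  have hx0 : 0 < ‖x‖ := hb.trans hx
  set y := (2 : ℝ) ^ n • x with hy
  have hyn : ‖y‖ = 2 ^ n * ‖x‖ := by rw [hy, norm_smul]; simp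
  have hxy : ‖x‖ ≤ ‖y‖ := by
    rw [hyn]
    exact le_mul_of_one_le_left hx0.le (one_le_pow₀ one_le_two)
  have hsegment : ∀ w ∈ segment ℝ y (y + y), ‖fderiv ℝ f w‖ ≤ B / ‖y‖ ^ 3 := by
    rintro w ⟨s, t, hs, ht, hst, rfl⟩
    have hw : ‖y‖ ≤ ‖s • y + t • (y + y)‖ := by
      rw [show s • y + t • (y + y) = (s + 2 * t) • y by module, norm_smul (s + 2 * t) y,
        Real.norm_of_nonneg (by positivity)]
      nlinarith [norm_nonneg y]
    have hy0 : 0 < ‖y‖ := hx0.trans_le hxy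
    refine (h _ (by linarith)).trans ?_
    gcongr
  have hbound := abs_sub_le_of_norm_fderiv_le_on_segment hf hsegment
  rw [add_sub_cancel_left] at hbound
  rw [pow_succ', mul_smul, two_smul, dist_comm, Real.dist_eq]
  refine hbound.trans (le_of_eq ?_)
  rw [hyn, one_div_pow, show (4 : ℝ) ^ n = 2 ^ n * 2 ^ n by rw [← mul_pow]; norm_num]
  field_simp

theorem tendsto_dyadic_sub (hf : Differentiable ℝ f) (hB : 0 ≤ B)
    (h : ∀ x, b < ‖x‖ → ‖fderiv ℝ f x‖ ≤ B / ‖x‖ ^ 3) (hb : 0 < b) (hx : b < ‖x‖) (hy : b < ‖y‖)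
    (hxy : 0 ≤ inner ℝ x y) :
    Tendsto (fun n : ℕ => f ((2 : ℝ) ^ n • y) - f ((2 : ℝ) ^ n • x)) atTop (nhds 0) := by
  have hgeo : Tendsto (fun n : ℕ => 8 * B * ‖y - x‖ / b ^ 3 * (1 / 4) ^ n) atTop (nhds 0) := by
    simpa using (tendsto_pow_atTop_nhds_zero_of_lt_one (r := (1 / 4 : ℝ)) (by norm_num)
      (by norm_num)).const_mul (8 * B * ‖y - x‖ / b ^ 3)
  refine squeeze_zero_norm' ((eventually_ge_atTop 2).mono fun n hn => ?_) hgeo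
  have four_le : (4 : ℝ) ≤ 2 ^ n := by
    calc (4 : ℝ) = 2 ^ 2 := by norm_num
      _ ≤ 2 ^ n := pow_le_pow_right₀ one_le_two hn
  have hnorm : ∀ z : E, ‖(2 : ℝ) ^ n • z‖ = 2 ^ n * ‖z‖ := fun z => by rw [norm_smul]; simp
  have hsegment : ∀ w ∈ segment ℝ ((2 : ℝ) ^ n • x) ((2 : ℝ) ^ n • y),
      ‖fderiv ℝ f w‖ ≤ B / (2 ^ n * b / 2) ^ 3 := fun w hw => by
    have hw : 2 ^ n * b / 2 ≤ ‖w‖ := by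
      refine half_le_norm_of_mem_segment (by positivity) ?_ ?_ ?_ hw
      · rw [hnorm]; gcongr
      · rw [hnorm]; gcongr
      · rw [real_inner_smul_left, real_inner_smul_right]; positivity
    refine (h w (by nlinarith)).trans ?_
    gcongr
  have hbound := abs_sub_le_of_norm_fderiv_le_on_segment hf hsegment
  rw [← smul_sub, hnorm] at hbound
  refine hbound.trans (le_of_eq ?_)
  rw [one_div_pow, show (4 : ℝ) ^ n = 2 ^ n * 2 ^ n by rw [← mul_pow]; norm_num]
  field_simp
  ring

theorem exists_inner_eq_zero (y : E3) : ∃ z : E3, z ≠ 0 ∧ inner ℝ y z = 0 := by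
  by_cases h : y 0 = 0
  · exact ⟨ee 0, by simp [ee], by simp [ee, EuclideanSpace.inner_single_right, h]⟩
  · refine ⟨!₂[-y 1, y 0, 0], fun h0 => h ?_, ?_⟩
    · simpa using congrArg (fun w : E3 => w 1) h0
    · simp [PiLp.inner_apply, Fin.sum_univ_three]
      ring

theorem exists_inner_nonneg_inner_eq_zero (e x : E3) (b : ℝ) :
    ∃ z : E3, b < ‖z‖ ∧ 0 ≤ inner ℝ e z ∧ inner ℝ x z = 0 := by
  obtain ⟨z, hz0, hz⟩ := exists_inner_eq_zero x
  have hz1 : 0 < ‖z‖ := norm_pos_iff.2 hz0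
  have hr : 0 < (|b| + 1) / ‖z‖ := by positivity
  have hnorm : ‖((|b| + 1) / ‖z‖) • z‖ = |b| + 1 := by
    rw [norm_smul, Real.norm_of_nonneg hr.le, div_mul_cancel₀ _ hz1.ne']
  have hb : b < |b| + 1 := (le_abs_self b).trans_lt (lt_add_one _)
  rcases le_total 0 (inner ℝ e z) with h0 | h0
  · refine ⟨((|b| + 1) / ‖z‖) • z, by rwa [hnorm], ?_, ?_⟩
    · rw [real_inner_smul_right]; positivity
    · rw [real_inner_smul_right, hz, mul_zero]
  · refine ⟨-(((|b| + 1) / ‖z‖) • z), by rwa [norm_neg, hnorm], ?_, ?_⟩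
    · rw [inner_neg_right, real_inner_smul_right]
      exact neg_nonneg.2 (mul_nonpos_of_nonneg_of_nonpos hr.le h0)
    · rw [inner_neg_right, real_inner_smul_right, hz, mul_zero, neg_zero]

/-- Two directions are compared through a third one, orthogonal to the second and not opposite to
the first, so that the joining segments stay away from the origin. -/
theorem exists_limit_of_norm_fderiv_le {f : E3 → ℝ} (hf : Differentiable ℝ f) (hb : 0 < b)
    (hB : 0 ≤ B) (h : ∀ x, b < ‖x‖ → ‖fderiv ℝ f x‖ ≤ B / ‖x‖ ^ 3) :
    ∃ a : ℝ, ∀ x, b < ‖x‖ → |f x - a| ≤ 2 * B / ‖x‖ ^ 2 := by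
  have hsame : ∀ x y : E3, b < ‖x‖ → b < ‖y‖ → 0 ≤ inner ℝ x y → ∀ a,
      Tendsto (fun n : ℕ => f ((2 : ℝ) ^ n • x)) atTop (nhds a) →
      Tendsto (fun n : ℕ => f ((2 : ℝ) ^ n • y)) atTop (nhds a) := by
    intro x y hx hy hxy a ha
    simpa using ha.add (tendsto_dyadic_sub hf hB h hb hx hy hxy)
  obtain ⟨e, he, -⟩ := exists_inner_nonneg_inner_eq_zero 0 0 b
  obtain ⟨a, ha⟩ : ∃ a, Tendsto (fun n : ℕ => f ((2 : ℝ) ^ n • e)) atTop (nhds a) :=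
    cauchySeq_tendsto_of_complete
      (cauchySeq_of_le_geometric (1 / 4) _ (by norm_num) (dist_dyadic_le hf hB h hb he))
  refine ⟨a, fun x hx => ?_⟩
  obtain ⟨z, hbz, hez, hxz⟩ := exists_inner_nonneg_inner_eq_zero e x b
  have hx_lim : Tendsto (fun n : ℕ => f ((2 : ℝ) ^ n • x)) atTop (nhds a) :=
    hsame z x hbz hx (by rw [real_inner_comm, hxz]) a (hsame e z he hbz hez a ha)
  have hsum := dist_le_of_le_geometric_of_tendsto₀ (1 / 4) _ (by norm_num)
    (dist_dyadic_le hf hB h hb hx) hx_lim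
  rw [pow_zero, one_smul, Real.dist_eq] at hsum
  have : 0 ≤ B / ‖x‖ ^ 2 := by positivity
  refine hsum.trans ?_
  rw [mul_div_assoc, div_le_iff₀ (by norm_num)]
  linarith

end LimitAtInfinity

section SolutionDecay

/-- The constants with which `Δu - (u·∇)u` decays, from those of `u`. -/
def momentumConst (M : ℝ) (c : ℕ → ℝ) (k : ℕ) : ℝ :=
  3 * c (k + 2) + M * (3 * leibnizConst c (fun k => c (k + 1)) k)

theorem momentumConst_nonneg {M : ℝ} {c : ℕ → ℝ} (hM : 0 ≤ M) (hc : ∀ k, 0 ≤ c k) (k : ℕ) :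
    0 ≤ momentumConst M c k := by
  have h1 := hc (k + 2)
  have h2 := leibnizConst_nonneg hc (fun k => hc (k + 1)) k
  rw [momentumConst]
  positivity

namespace DecaysOn

variable {Ω : Set E3} {R C M b : ℝ} {c d : ℕ → ℝ} {u : Fin 3 → E3 → ℝ} {p : E3 → ℝ}

theorem lap_sub_convection (hR : 0 < R) (hC : 0 ≤ C) (hCM : C ≤ M) (hc : ∀ k, 0 ≤ c k)
    (hu : ∀ i, ContDiff ℝ ∞ (u i)) (h : ∀ i, DecaysOn Ω R C c 1 (u i)) (i : Fin 3) :
    DecaysOn Ω R C (momentumConst M c) 3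
      (fun x => lap (u i) x + -∑ j, u j x * _root_.pd (u i) j x) := by
  have hlap : DecaysOn Ω R C (fun k => 3 * c (k + 2)) 3 (lap (u i)) :=
    DecaysOn.sum (fun j => contDiff_pd (contDiff_pd (hu i) j) j) fun j =>
      ((h i).partial_deriv (hu i) j).partial_deriv (contDiff_pd (hu i) j) j
  have hconv := (DecaysOn.sum (fun j => (hu j).mul (contDiff_pd (hu i) j)) fun j =>
    (h j).mul (hu j) (contDiff_pd (hu i) j) ((h i).partial_deriv (hu i) j)).mono_const
    (C' := C) (d := fun k => M * (3 * leibnizConst c (fun k => c (k + 1)) k)) hR fun k => by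
      have hleibniz := leibnizConst_nonneg hc (fun k => hc (k + 1)) k
      calc 3 * leibnizConst c (fun k => c (k + 1)) k * (C * C)
          ≤ 3 * leibnizConst c (fun k => c (k + 1)) k * (M * C) := by gcongr
        _ = _ := by ring
  exact hlap.add (contDiff_lap (hu i))
    (ContDiff.sum fun j _ => (hu j).mul (contDiff_pd (hu i) j)).neg hconv.neg

theorem pressure (hΩ : IsOpen Ω) (hR : 0 < R) (hC : 0 ≤ C) (hCM : C ≤ M) (hc : ∀ k, 0 ≤ c k)
    (hu : ∀ i, ContDiff ℝ ∞ (u i)) (h : ∀ i, DecaysOn Ω R C c 1 (u i)) (hns : NSOn Ω u p)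
    (i : Fin 3) : DecaysOn Ω R C (momentumConst M c) 3 (_root_.pd p i) :=
  (lap_sub_convection hR hC hCM hc hu h i).congr_on hΩ fun x hx => by
    have := hns.1 x hx i
    rw [nsForce] at this
    linarith

theorem nsForce (hR : 0 < R) (hC : 0 ≤ C) (hCM : C ≤ M) (hc : ∀ k, 0 ≤ c k)
    (hu : ∀ i, ContDiff ℝ ∞ (u i)) (hp : ContDiff ℝ ∞ p) (h : ∀ i, DecaysOn Ω R C c 1 (u i))
    (hdp : DecaysOn Ω R C c 2 p) (i : Fin 3) :
    DecaysOn Ω R C (fun k => momentumConst M c k + c (k + 1)) 3 (nsForce u p i) := by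
  have hadd := (lap_sub_convection hR hC hCM hc hu h i).neg.add
    ((contDiff_lap (hu i)).add (ContDiff.sum fun j _ => (hu j).mul (contDiff_pd (hu i) j)).neg).neg
    (contDiff_pd hp i) (hdp.partial_deriv hp i)
  have hforce : _root_.nsForce u p i =
      fun x => -(lap (u i) x + -∑ j, u j x * pd (u i) j x) + pd p i x := by
    ext x
    rw [_root_.nsForce]
    ring
  rwa [hforce]

/-- The constants with which a function decays once its limit at infinity is subtracted, from those
of its gradient. -/
def potentialConst (d : ℕ → ℝ) : ℕ → ℝ
  | 0 => 24 * d 0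
  | k + 1 => 3 * d k

theorem exists_sub_limit (hp : ContDiff ℝ ∞ p) (hb : 1 ≤ b) (hdC : 0 ≤ d 0 * C)
    (h : ∀ i, DecaysOn {x | b < ‖x‖} 1 C d 3 (_root_.pd p i)) :
    ∃ p₀ : ℝ, DecaysOn {x | b < ‖x‖} 1 C (potentialConst d) 2 (fun x => p x - p₀) := by
  have hgrad : ∀ x, b < ‖x‖ → ‖fderiv ℝ p x‖ ≤ 3 * (d 0 * C) / ‖x‖ ^ 3 := fun x hx => by
    have hx0 : 0 < ‖x‖ := by linarith
    calc ‖fderiv ℝ p x‖ = ‖iteratedFDeriv ℝ (0 + 1) p x‖ := (norm_iteratedFDeriv_one p).symm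
      _ ≤ ∑ i, ‖iteratedFDeriv ℝ 0 (pd p i) x‖ := norm_iteratedFDeriv_succ_le hp 0 x
      _ ≤ ∑ _i : Fin 3, d 0 * C / ‖x‖ ^ 3 := Finset.sum_le_sum fun i _ =>
          (h i 0 x hx).trans (by rw [zero_add]; gcongr; linarith)
      _ = 3 * (d 0 * C) / ‖x‖ ^ 3 := by simp; ring
  obtain ⟨p₀, hp₀⟩ := exists_limit_of_norm_fderiv_le (fun x => differentiableAt_of_smooth hp)
    (by linarith) (by positivity) hgrad
  refine ⟨p₀, of_pd (hp.sub contDiff_const) (fun x hx => (hp₀ x hx).trans ?_)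
    (fun j => pd_sub_const p p₀ j ▸ h j) fun k => rfl⟩
  have hx1 : 1 < ‖x‖ := hb.trans_lt hx
  rw [div_le_div_iff₀ (by positivity) (by positivity), potentialConst]
  calc 2 * (3 * (d 0 * C)) * (1 + ‖x‖) ^ 2 ≤ 2 * (3 * (d 0 * C)) * (2 * ‖x‖) ^ 2 := by
        gcongr; linarith
    _ = 24 * d 0 * C * ‖x‖ ^ 2 := by ring

end DecaysOn

theorem exists_solution_decay {M : ℝ} (hM : 0 ≤ M) {a b : ℝ} (ha : 0 < a) (hab : a < b)
    (hb : 1 ≤ b) : ∃ c : ℕ → ℝ, (∀ k, 0 ≤ c k) ∧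
    ∀ (u : Fin 3 → E3 → ℝ) (p : E3 → ℝ), (∀ i, ContDiff ℝ ∞ (u i)) → ContDiff ℝ ∞ p →
    ∀ C : ℝ, 0 ≤ C → C ≤ M → NSOn {x | a < ‖x‖} u p →
    (∀ x, a < ‖x‖ → ∀ i, |u i x| ≤ C / (1 + ‖x‖)) →
    (∀ i, DecaysOn {x | b < ‖x‖} 1 C c 1 (u i)) ∧
    ∃ p₀ : ℝ, DecaysOn {x | b < ‖x‖} 1 C c 2 (fun x => p x - p₀) := by
  obtain ⟨c, hc0, hc⟩ := exists_velocity_decay M ha hab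
  have hm0 := momentumConst_nonneg hM hc0
  have he0 : ∀ k, 0 ≤ DecaysOn.potentialConst (momentumConst M c) k
    | 0 => mul_nonneg (by norm_num) (hm0 0)
    | k + 1 => mul_nonneg (by norm_num) (hm0 k)
  refine ⟨fun k => c k + DecaysOn.potentialConst (momentumConst M c) k,
    fun k => add_nonneg (hc0 k) (he0 k), fun u p hu hp C hC hCM hns hbd => ?_⟩
  have hdec := hc u p hu hp C hC hCM hns hbd
  obtain ⟨p₀, hp₀⟩ := DecaysOn.exists_sub_limit hp hb (mul_nonneg (hm0 0) hC)
    (DecaysOn.pressure (isOpen_lt continuous_const continuous_norm) one_pos hC hCM hc0 hu hdec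
      (hns.mono fun x hx => hab.trans hx))
  exact ⟨fun i => (hdec i).mono_const one_pos fun k =>
      mul_le_mul_of_nonneg_right (le_add_of_nonneg_right (he0 k)) hC,
    p₀, hp₀.mono_const one_pos fun k =>
      mul_le_mul_of_nonneg_right (le_add_of_nonneg_left (hc0 k)) hC⟩

end SolutionDecay

section LineIntegrals

/-- The integral of `f` along a segment of direction `e` based at `A x`. With `A` the identity it
is a primitive in the direction `e`; with `A` the projection along `e` it is a chord integral. -/
def lineInt (A : E3 →L[ℝ] E3) (e : E3) (α β : ℝ) (f : E3 → ℝ) (x : E3) : ℝ :=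
  ∫ s in Set.Icc α β, f (A x + s • e)

variable {A : E3 →L[ℝ] E3} {e : E3} {α β : ℝ} {f : E3 → ℝ}

theorem lineInt_eq_intervalIntegral (h : α ≤ β) (f : E3 → ℝ) (x : E3) :
    lineInt A e α β f x = ∫ s in α..β, f (A x + s • e) := by
  rw [lineInt, integral_Icc_eq_integral_Ioc, intervalIntegral.integral_of_le h]

theorem hasFDerivAt_lineInt (hf : ContDiff ℝ ∞ f) (x : E3) :
    HasFDerivAt (lineInt A e α β f) (∫ s in Set.Icc α β, (fderiv ℝ f (A x + s • e)).comp A) x := by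
  have hf' : Continuous (fderiv ℝ f) := hf.continuous_fderiv (by simp)
  refine hasFDerivAt_setIntegral_of_continuous (μ := volume) isCompact_Icc
    (F := fun x s => f (A x + s • e)) (F' := fun x s => (fderiv ℝ f (A x + s • e)).comp A)
    (hf.continuous.comp (by fun_prop)) ?_ (fun x s => ?_) x
  · exact (hf'.comp (by fun_prop)).clm_comp continuous_const
  · exact (differentiableAt_of_smooth hf).hasFDerivAt.comp x (A.hasFDerivAt.add_const (s • e))

theorem pd_lineInt (hf : ContDiff ℝ ∞ f) (l : Fin 3) (x : E3) :
    pd (lineInt A e α β f) l x = ∑ k, A (ee l) k * lineInt A e α β (pd f k) x := by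
  have hf' : Continuous (fderiv ℝ f) := hf.continuous_fderiv (by simp)
  have hint : Continuous fun s : ℝ => (fderiv ℝ f (A x + s • e)).comp A :=
    (hf'.comp (by fun_prop)).clm_comp continuous_const
  rw [pd, (hasFDerivAt_lineInt hf x).fderiv,
    ContinuousLinearMap.integral_apply hint.continuousOn.integrableOn_Icc]
  simp only [ContinuousLinearMap.comp_apply, fderiv_apply_eq_sum]
  rw [integral_finsetSum]
  · simp only [lineInt, integral_const_mul]
  · intro k _
    exact (continuous_const.mul ((contDiff_pd hf k).continuous.comp
      (by fun_prop))).continuousOn.integrableOn_Icc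

theorem contDiff_lineInt (hf : ContDiff ℝ ∞ f) : ContDiff ℝ ∞ (lineInt A e α β f) := by
  rw [contDiff_infty]
  intro n
  induction n generalizing f with
  | zero =>
    exact contDiff_zero.2 (continuous_iff_continuousAt.2 fun x =>
      (hasFDerivAt_lineInt hf x).continuousAt)
  | succ n ih =>
    rw [Nat.cast_succ, contDiff_succ_iff_fderiv]
    refine ⟨fun x => (hasFDerivAt_lineInt hf x).differentiableAt, by simp, ?_⟩
    rw [fderiv_eq_sum_smul_proj]
    refine ContDiff.sum fun l _ => ?_
    have hpd : ContDiff ℝ n (pd (lineInt A e α β f) l) := by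
      rw [funext (pd_lineInt hf l)]
      exact ContDiff.sum fun k _ => contDiff_const.mul (ih (contDiff_pd hf k))
    exact hpd.smul contDiff_const

theorem exists_norm_iteratedFDeriv_lineInt_le (A : E3 →L[ℝ] E3) (e : E3) (α β : ℝ) (m : ℕ) :
    ∃ C : ℝ, 0 ≤ C ∧ ∀ f, ContDiff ℝ ∞ f → ∀ b : ℝ, (∀ x, ‖iteratedFDeriv ℝ m f x‖ ≤ b) →
    ∀ x, ‖iteratedFDeriv ℝ m (lineInt A e α β f) x‖ ≤ C * b := by
  induction m with
  | zero =>
    refine ⟨volume.real (Set.Icc α β), by positivity, fun f _ b hb x => ?_⟩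
    simp only [norm_iteratedFDeriv_zero] at hb ⊢
    rw [mul_comm]
    exact norm_setIntegral_le_of_norm_le_const measure_Icc_lt_top fun s _ => hb _
  | succ m ih =>
    obtain ⟨C, hC0, hC⟩ := ih
    refine ⟨9 * (‖A‖ * C), by positivity, fun f hf b hb x => ?_⟩
    have hcoef : ∀ l k, |A (ee l) k| ≤ ‖A‖ := fun l k =>
      (PiLp.norm_apply_le (A (ee l)) k).trans (by simpa [ee] using A.le_opNorm (ee l))
    have hterm : ∀ l k, ‖iteratedFDeriv ℝ m
        (fun y => A (ee l) k * lineInt A e α β (pd f k) y) x‖ ≤ ‖A‖ * (C * b) := fun l k => by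
      rw [norm_iteratedFDeriv_const_mul (contDiff_lineInt (contDiff_pd hf k))]
      exact mul_le_mul (hcoef l k) (hC _ (contDiff_pd hf k) b (fun y =>
        (norm_iteratedFDeriv_pd_le hf k m y).trans (hb y)) x) (norm_nonneg _) (norm_nonneg _)
    have hpd : ∀ l, ‖iteratedFDeriv ℝ m (pd (lineInt A e α β f) l) x‖ ≤ 3 * (‖A‖ * (C * b)) :=
      fun l => by
        rw [funext (pd_lineInt hf l), iteratedFDeriv_fun_sum_apply fun k _ =>
          ((contDiff_const.mul (contDiff_lineInt (contDiff_pd hf k))).of_le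
            (mod_cast le_top)).contDiffAt]
        exact (norm_sum_le _ _).trans
          ((Finset.sum_le_sum fun k _ => hterm l k).trans_eq (by simp))
    calc ‖iteratedFDeriv ℝ (m + 1) (lineInt A e α β f) x‖
        ≤ ∑ l, ‖iteratedFDeriv ℝ m (pd (lineInt A e α β f) l) x‖ :=
          norm_iteratedFDeriv_succ_le (contDiff_lineInt hf) m x
      _ ≤ ∑ _l : Fin 3, 3 * (‖A‖ * (C * b)) := Finset.sum_le_sum fun l _ => hpd l
      _ = 9 * (‖A‖ * C) * b := by simp; ring

end LineIntegrals

section TameOperators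

/-- Smooth functions are mapped to smooth functions, with control of the derivatives of order at
most `n` by the derivatives of order at most `n`. -/
structure Tame (P : (E3 → ℝ) → E3 → ℝ) : Prop where
  smooth : ∀ f, ContDiff ℝ ∞ f → ContDiff ℝ ∞ (P f)
  bound : ∀ n : ℕ, ∃ C : ℝ, 0 ≤ C ∧ ∀ f, ContDiff ℝ ∞ f → ∀ b : ℝ,
    (∀ m ≤ n, ∀ x, ‖iteratedFDeriv ℝ m f x‖ ≤ b) →
      ∀ m ≤ n, ∀ x, ‖iteratedFDeriv ℝ m (P f) x‖ ≤ C * b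

theorem exists_uniform_bound {q : ℕ → ℝ → Prop} (hq : ∀ m, ∃ C, 0 ≤ C ∧ q m C)
    (hmono : ∀ m C C', C ≤ C' → q m C → q m C') (n : ℕ) : ∃ C, 0 ≤ C ∧ ∀ m ≤ n, q m C := by
  choose C hC0 hC using hq
  exact ⟨∑ m ∈ Finset.range (n + 1), C m, Finset.sum_nonneg fun m _ => hC0 m, fun m hm =>
    hmono m _ _ (Finset.single_le_sum (fun i _ => hC0 i)
      (Finset.mem_range.2 (Nat.lt_succ_of_le hm))) (hC m)⟩

variable {P Q : (E3 → ℝ) → E3 → ℝ}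

theorem tame_lineInt (A : E3 →L[ℝ] E3) (e : E3) (α β : ℝ) : Tame (lineInt A e α β) := by
  refine ⟨fun f hf => contDiff_lineInt hf, fun n => ?_⟩
  obtain ⟨C, hC0, hC⟩ := exists_uniform_bound
    (q := fun m C => ∀ f, ContDiff ℝ ∞ f → ∀ b : ℝ, 0 ≤ b → (∀ x, ‖iteratedFDeriv ℝ m f x‖ ≤ b) →
      ∀ x, ‖iteratedFDeriv ℝ m (lineInt A e α β f) x‖ ≤ C * b)
    (fun m => by
      obtain ⟨C, hC0, hC⟩ := exists_norm_iteratedFDeriv_lineInt_le A e α β m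
      exact ⟨C, hC0, fun f hf b _ hb => hC f hf b hb⟩)
    (fun m C C' h hC f hf b hb0 hb x => (hC f hf b hb0 hb x).trans
      (mul_le_mul_of_nonneg_right h hb0)) n
  exact ⟨C, hC0, fun f hf b hb m hm x => hC m hm f hf b
    ((norm_nonneg _).trans (hb m hm 0)) (hb m hm) x⟩

theorem Tame.comp (hP : Tame P) (hQ : Tame Q) : Tame fun f => P (Q f) := by
  refine ⟨fun f hf => hP.smooth _ (hQ.smooth _ hf), fun n => ?_⟩
  obtain ⟨C, hC0, hC⟩ := hP.bound n
  obtain ⟨D, hD0, hD⟩ := hQ.bound n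
  refine ⟨C * D, by positivity, fun f hf b hb m hm x => ?_⟩
  rw [mul_assoc]
  exact hC _ (hQ.smooth _ hf) _ (hD f hf b hb) m hm x

theorem Tame.id_sub (hP : Tame P) : Tame fun f x => f x - P f x := by
  refine ⟨fun f hf => hf.sub (hP.smooth _ hf), fun n => ?_⟩
  obtain ⟨C, hC0, hC⟩ := hP.bound n
  refine ⟨1 + C, by positivity, fun f hf b hb m hm x => ?_⟩
  have hsub : iteratedFDeriv ℝ m (fun x => f x - P f x) x =
      iteratedFDeriv ℝ m f x - iteratedFDeriv ℝ m (P f) x :=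
    iteratedFDeriv_sub_apply (hf.of_le (mod_cast le_top)).contDiffAt
      ((hP.smooth _ hf).of_le (mod_cast le_top)).contDiffAt
  rw [hsub, add_mul, one_mul]
  exact (norm_sub_le _ _).trans (add_le_add (hb m hm x) (hC f hf b hb m hm x))

theorem tame_mul {h : E3 → ℝ} (hh : ContDiff ℝ ∞ h)
    (hb : ∀ m, ∃ C, 0 ≤ C ∧ ∀ x, ‖iteratedFDeriv ℝ m h x‖ ≤ C) : Tame fun f x => h x * f x := by
  refine ⟨fun f hf => hh.mul hf, fun n => ?_⟩
  obtain ⟨C, hC0, hC⟩ := exists_uniform_bound hb (fun m C C' h hC x => (hC x).trans h) n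
  refine ⟨2 ^ n * C, by positivity, fun f hf b hb m hm x => ?_⟩
  have hb0 : 0 ≤ b := (norm_nonneg _).trans (hb m hm 0)
  calc ‖iteratedFDeriv ℝ m (fun x => h x * f x) x‖
      ≤ ∑ i ∈ Finset.range (m + 1), (m.choose i : ℝ) * ‖iteratedFDeriv ℝ i h x‖ *
          ‖iteratedFDeriv ℝ (m - i) f x‖ := norm_iteratedFDeriv_mul_le hh hf x (mod_cast le_top)
    _ ≤ ∑ i ∈ Finset.range (m + 1), (m.choose i : ℝ) * (C * b) := by
        refine Finset.sum_le_sum fun i hi => ?_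
        have := Finset.mem_range.1 hi
        rw [mul_assoc]
        exact mul_le_mul_of_nonneg_left (mul_le_mul (hC i (by omega) x) (hb _ (by omega) x)
          (norm_nonneg _) hC0) (Nat.cast_nonneg _)
    _ = 2 ^ m * (C * b) := by
        rw [← Finset.sum_mul]
        congr 1
        exact_mod_cast Nat.sum_range_choose m
    _ ≤ 2 ^ n * (C * b) := by
        gcongr
        norm_num
    _ = 2 ^ n * C * b := by rw [mul_assoc]

theorem exists_bound_iteratedFDeriv_coord {a : ℝ → ℝ} (ha : ContDiff ℝ ∞ a)
    (hac : HasCompactSupport a) (j : Fin 3) (m : ℕ) :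
    ∃ C, 0 ≤ C ∧ ∀ x : E3, ‖iteratedFDeriv ℝ m (fun x : E3 => a (x j)) x‖ ≤ C := by
  obtain ⟨C, hC⟩ := (hac.iteratedFDeriv (𝕜 := ℝ) m).exists_bound_of_continuous
    (ha.continuous_iteratedFDeriv (m := m) (mod_cast le_top))
  refine ⟨C, (norm_nonneg _).trans (hC 0), fun x => ?_⟩
  change ‖iteratedFDeriv ℝ m (a ∘ (EuclideanSpace.proj j : E3 →L[ℝ] ℝ)) x‖ ≤ C
  rw [ContinuousLinearMap.iteratedFDeriv_comp_right _ ha x (mod_cast le_top)]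
  refine (ContinuousMultilinearMap.norm_compContinuousLinearMap_le _ _).trans ?_
  refine (mul_le_of_le_one_right (norm_nonneg _) ?_).trans (hC _)
  exact Finset.prod_le_one (fun _ _ => norm_nonneg _) fun _ _ => norm_proj_le j

theorem tame_coord_mul {a : ℝ → ℝ} (ha : ContDiff ℝ ∞ a) (hac : HasCompactSupport a)
    (j : Fin 3) : Tame fun f x => a (x j) * f x :=
  tame_mul (ha.comp (contDiff_coord j)) (exists_bound_iteratedFDeriv_coord ha hac j)

end TameOperators

section DivergenceSolver

/-- The projection setting the coordinate `j` to zero. -/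
def killCoord (j : Fin 3) : E3 →L[ℝ] E3 :=
  ContinuousLinearMap.id ℝ E3 - (EuclideanSpace.proj j : E3 →L[ℝ] ℝ).smulRight (ee j)

theorem ee_apply (j k : Fin 3) : ee j k = if k = j then (1 : ℝ) else 0 := by
  simp [ee]

theorem killCoord_apply (j k : Fin 3) (x : E3) :
    killCoord j x k = if k = j then 0 else x k := by
  by_cases h : k = j
  · subst h; simp [killCoord, ee]
  · simp [killCoord, ee, h]

theorem killCoord_add_smul (j : Fin 3) (x : E3) : killCoord j x + x j • ee j = x := by
  simp [killCoord]

theorem killCoord_killCoord_add_smul (j : Fin 3) (x : E3) (s : ℝ) :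
    killCoord j (killCoord j x + s • ee j) = killCoord j x := by
  ext k
  simp only [killCoord_apply, PiLp.add_apply, PiLp.smul_apply, ee_apply, smul_eq_mul]
  split_ifs <;> simp

variable {r : ℝ}

/-- A nonnegative smooth function of integral one which vanishes outside `(-r, r)`. -/
def unitMass (hr : 0 < r) : ℝ → ℝ :=
  (⟨r / 2, r, half_pos hr, half_lt_self hr⟩ : ContDiffBump (0 : ℝ)).normed volume

theorem contDiff_unitMass (hr : 0 < r) : ContDiff ℝ ∞ (unitMass hr) :=
  ContDiffBump.contDiff_normed _

theorem unitMass_nonneg (hr : 0 < r) (t : ℝ) : 0 ≤ unitMass hr t :=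
  ContDiffBump.nonneg_normed _ _

theorem hasCompactSupport_unitMass (hr : 0 < r) : HasCompactSupport (unitMass hr) :=
  ContDiffBump.hasCompactSupport_normed _

theorem support_unitMass (hr : 0 < r) : Function.support (unitMass hr) = ball 0 r :=
  ContDiffBump.support_normed_eq _

theorem unitMass_eq_zero (hr : 0 < r) {t : ℝ} (ht : r ≤ |t|) : unitMass hr t = 0 := by
  rw [← Function.notMem_support, support_unitMass]
  simpa using ht

theorem unitMass_zero_ne (hr : 0 < r) : unitMass hr 0 ≠ 0 := by
  rw [← Function.mem_support, support_unitMass]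
  exact mem_ball_self hr

theorem setIntegral_unitMass (hr : 0 < r) : ∫ s in Set.Icc (-r) r, unitMass hr s = 1 := by
  rw [setIntegral_eq_integral_of_forall_compl_eq_zero fun t ht => unitMass_eq_zero hr ?_]
  · exact ContDiffBump.integral_normed _
  · by_contra! h
    exact ht (abs_le.1 h.le)

/-- A smooth function of one variable, equal to one for `|t| ≤ 3 * r / 2` and to zero for
`2 * r ≤ |t|`. -/
def coordCutoff (hr : 0 < r) : ℝ → ℝ :=
  (⟨3 / 2 * r, 2 * r, by positivity, by linarith⟩ : ContDiffBump (0 : ℝ))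

theorem contDiff_coordCutoff (hr : 0 < r) : ContDiff ℝ ∞ (coordCutoff hr) :=
  ContDiffBump.contDiff _

theorem hasCompactSupport_coordCutoff (hr : 0 < r) : HasCompactSupport (coordCutoff hr) :=
  ContDiffBump.hasCompactSupport _

theorem coordCutoff_eq_one (hr : 0 < r) {t : ℝ} (ht : |t| ≤ 3 / 2 * r) : coordCutoff hr t = 1 :=
  ContDiffBump.one_of_mem_closedBall _ (by simpa using ht)

theorem coordCutoff_eq_zero (hr : 0 < r) {t : ℝ} (ht : 2 * r ≤ |t|) : coordCutoff hr t = 0 :=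
  ContDiffBump.zero_of_le_dist _ (by simpa using ht)

/-- The function `f` vanishes outside the open cube `(-r, r)³`. -/
def CubeSupported (r : ℝ) (f : E3 → ℝ) : Prop := ∀ x : E3, ∀ i, r ≤ |x i| → f x = 0

theorem CubeSupported.eq_zero_of_two_mul_lt_norm {f : E3 → ℝ} (hf : CubeSupported r f)
    (hr : 0 < r) {x : E3} (hx : 2 * r < ‖x‖) : f x = 0 := by
  by_contra h
  have hcoord : ∀ i, ‖x i‖ ≤ r := fun i => by
    by_contra! hi
    exact h (hf x i hi.le)
  have hnorm : ‖x‖ ^ 2 ≤ 3 * r ^ 2 := by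
    rw [EuclideanSpace.norm_sq_eq]
    refine (Finset.sum_le_sum fun i _ => pow_le_pow_left₀ (norm_nonneg _) (hcoord i) 2).trans ?_
    simp
  nlinarith

theorem CubeSupported.hasCompactSupport {f : E3 → ℝ} (hf : CubeSupported r f) (hr : 0 < r) :
    HasCompactSupport f :=
  hasCompactSupport_of_eq_zero_of_lt_norm fun _ hx => hf.eq_zero_of_two_mul_lt_norm hr hx

theorem CubeSupported.sub {f g : E3 → ℝ} (hf : CubeSupported r f) (hg : CubeSupported r g) :
    CubeSupported r fun x => f x - g x := fun x i hx => by
  simp only [hf x i hx, hg x i hx, sub_zero]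

/-- The integral over the chord of the cube through `x` in direction `j`. -/
def chordInt (r : ℝ) (j : Fin 3) : (E3 → ℝ) → E3 → ℝ := lineInt (killCoord j) (ee j) (-r) r

/-- The mass of each chord in direction `j`, redistributed along the profile `unitMass`. -/
def spread (hr : 0 < r) (j : Fin 3) (f : E3 → ℝ) (x : E3) : ℝ :=
  unitMass hr (x j) * chordInt r j f x

/-- The primitive of `f - spread f` in direction `j`, integrated from far below the cube and cut
off far above it. -/
def truncPrimitive (hr : 0 < r) (j : Fin 3) (f : E3 → ℝ) (x : E3) : ℝ :=
  coordCutoff hr (x j) *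
    lineInt (ContinuousLinearMap.id ℝ E3) (ee j) (-(4 * r)) 0 (fun y => f y - spread hr j f y) x

theorem tame_spread (hr : 0 < r) (j : Fin 3) : Tame (spread hr j) :=
  (tame_coord_mul (contDiff_unitMass hr) (hasCompactSupport_unitMass hr) j).comp
    (tame_lineInt _ _ _ _)

theorem tame_truncPrimitive (hr : 0 < r) (j : Fin 3) : Tame (truncPrimitive hr j) :=
  (tame_coord_mul (contDiff_coordCutoff hr) (hasCompactSupport_coordCutoff hr) j).comp
    ((tame_lineInt _ _ _ _).comp (tame_spread hr j).id_sub)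

variable {f : E3 → ℝ}

theorem CubeSupported.lineInt_eq_zero (hf : CubeSupported r f) {A : E3 →L[ℝ] E3} {i j : Fin 3}
    (hij : i ≠ j) {x : E3} (hA : A x i = x i) (hx : r ≤ |x i|) (α β : ℝ) :
    lineInt A (ee j) α β f x = 0 := by
  refine setIntegral_eq_zero_of_forall_eq_zero fun s _ => hf _ i ?_
  simpa [ee_apply, hij, hA] using hx

theorem CubeSupported.spread (hf : CubeSupported r f) (hr : 0 < r) (j : Fin 3) :
    CubeSupported r (spread hr j f) := fun x i hx => by
  rw [_root_.spread]
  rcases eq_or_ne i j with rfl | hij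
  · rw [unitMass_eq_zero hr hx, zero_mul]
  · rw [chordInt, hf.lineInt_eq_zero hij (by simp [killCoord_apply, hij]) hx, mul_zero]

theorem chordInt_spread (hr : 0 < r) (j : Fin 3) (f : E3 → ℝ) (x : E3) :
    chordInt r j (spread hr j f) x = chordInt r j f x := by
  have hchord : ∀ s : ℝ, spread hr j f (killCoord j x + s • ee j) =
      unitMass hr s * chordInt r j f x := fun s => by
    simp only [spread, chordInt, lineInt, killCoord_killCoord_add_smul]
    simp [killCoord_apply, ee_apply]
  conv_lhs => rw [chordInt, lineInt]
  simp only [hchord]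
  rw [integral_mul_const, setIntegral_unitMass, one_mul]

theorem chordInt_sub_spread (hr : 0 < r) (hf : ContDiff ℝ ∞ f) (j : Fin 3) (x : E3) :
    chordInt r j (fun y => f y - spread hr j f y) x = 0 := by
  have hsub : chordInt r j (fun y => f y - spread hr j f y) x =
      chordInt r j f x - chordInt r j (spread hr j f) x :=
    integral_sub (hf.continuous.comp (by fun_prop)).continuousOn.integrableOn_Icc
      (((tame_spread hr j).smooth f hf).continuous.comp
        (by fun_prop)).continuousOn.integrableOn_Icc
  rw [hsub, chordInt_spread, sub_self]

theorem intervalIntegral_eq_zero_of_le_abs {φ : ℝ → ℝ} (hφ : Continuous φ)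
    (hs : ∀ t, r ≤ |t| → φ t = 0) (h0 : ∫ t in -r..r, φ t = 0) {a b : ℝ} (ha : a ≤ -r)
    (hb : r ≤ |b|) : ∫ t in a..b, φ t = 0 := by
  have vanish_below : ∀ b' ≤ -r, ∫ t in a..b', φ t = 0 := fun b' hb' =>
    intervalIntegral.integral_zero_ae (Eventually.of_forall fun t ht =>
      hs t (le_abs.2 (Or.inr (le_neg_of_le_neg (ht.2.trans (max_le ha hb'))))))
  rcases le_abs.1 hb with hb | hb
  · have vanish_above : ∫ t in r..b, φ t = 0 :=
      intervalIntegral.integral_zero_ae (Eventually.of_forall fun t ht =>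
        hs t (le_abs.2 (Or.inl (by rw [Set.uIoc_of_le hb] at ht; exact ht.1.le))))
    have hint : ∀ a b, IntervalIntegrable φ volume a b := fun a b => hφ.intervalIntegrable a b
    rw [← intervalIntegral.integral_add_adjacent_intervals (hint _ (-r)) (hint _ _),
      ← intervalIntegral.integral_add_adjacent_intervals (hint _ r) (hint _ b),
      vanish_below _ le_rfl, h0, vanish_above, add_zero, add_zero]
  · exact vanish_below b (le_neg_of_le_neg hb)

theorem primitive_eq_zero (hr : 0 < r) (hf : Continuous f) (hs : CubeSupported r f) (j : Fin 3)
    (h0 : ∀ x, chordInt r j f x = 0) {x : E3} (hx : r ≤ |x j|) (hx' : x j ≤ 3 * r) :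
    lineInt (ContinuousLinearMap.id ℝ E3) (ee j) (-(4 * r)) 0 f x = 0 := by
  have hline : ∀ s : ℝ, f (ContinuousLinearMap.id ℝ E3 x + s • ee j) =
      f (killCoord j x + (x j + s) • ee j) := fun s => by
    rw [ContinuousLinearMap.id_apply, add_smul, ← add_assoc, killCoord_add_smul]
  rw [lineInt_eq_intervalIntegral (by linarith)]
  simp only [hline]
  rw [intervalIntegral.integral_comp_add_left fun t => f (killCoord j x + t • ee j), add_zero]
  refine intervalIntegral_eq_zero_of_le_abs (r := r) (hf.comp (by fun_prop))
    (fun t ht => hs _ j (by simpa [killCoord_apply, ee_apply] using ht)) ?_ (by linarith) hx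
  rw [← h0 x, chordInt, lineInt_eq_intervalIntegral (by linarith)]
  rfl

theorem pd_primitive (hr : 0 < r) (hf : ContDiff ℝ ∞ f) (hs : CubeSupported r f) (j : Fin 3)
    {x : E3} (hx : x j ≤ 3 * r) :
    pd (lineInt (ContinuousLinearMap.id ℝ E3) (ee j) (-(4 * r)) 0 f) j x = f x := by
  have hderiv : ∀ s ∈ Set.uIcc (-(4 * r)) 0, HasDerivAt (fun s : ℝ => f (x + s • ee j))
      (pd f j (x + s • ee j)) s := fun s _ => by
    have hline : HasDerivAt (fun s : ℝ => x + s • ee j) (ee j) s := by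
      simpa using ((hasDerivAt_id s).smul_const (ee j)).const_add x
    exact (differentiableAt_of_smooth hf).hasFDerivAt.comp_hasDerivAt s hline
  have hcont : Continuous fun s : ℝ => pd f j (x + s • ee j) :=
    (contDiff_pd hf j).continuous.comp (by fun_prop)
  have hbelow : f (x + (-(4 * r)) • ee j) = 0 := by
    refine hs _ j (le_abs.2 (Or.inr ?_))
    simp only [PiLp.add_apply, PiLp.smul_apply, ee_apply, if_true, smul_eq_mul, mul_one]
    linarith
  rw [pd_lineInt hf]
  simp only [ContinuousLinearMap.id_apply, ee_apply, ite_mul, one_mul, zero_mul]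
  rw [Finset.sum_ite_eq' Finset.univ j, if_pos (Finset.mem_univ _),
    lineInt_eq_intervalIntegral (by linarith)]
  simp only [ContinuousLinearMap.id_apply]
  rw [intervalIntegral.integral_eq_sub_of_hasDerivAt hderiv (hcont.intervalIntegrable _ _), hbelow,
    zero_smul, add_zero, sub_zero]

theorem truncPrimitive_eq_zero (hr : 0 < r) (hf : ContDiff ℝ ∞ f) (hs : CubeSupported r f)
    (j : Fin 3) {x : E3} (hx : r ≤ |x j|) : truncPrimitive hr j f x = 0 := by
  rw [truncPrimitive]
  rcases le_total (|x j|) (2 * r) with h | h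
  · rw [primitive_eq_zero hr ((tame_spread hr j).id_sub.smooth f hf).continuous
      (hs.sub (hs.spread hr j)) j (chordInt_sub_spread hr hf j) hx
      (by linarith [le_abs_self (x j)]), mul_zero]
  · rw [coordCutoff_eq_zero hr h, zero_mul]

theorem CubeSupported.truncPrimitive (hs : CubeSupported r f) (hr : 0 < r) (hf : ContDiff ℝ ∞ f)
    (j : Fin 3) : CubeSupported r (truncPrimitive hr j f) := fun x i hx => by
  rcases eq_or_ne i j with rfl | hij
  · exact truncPrimitive_eq_zero hr hf hs i hx
  · rw [_root_.truncPrimitive, (hs.sub (hs.spread hr j)).lineInt_eq_zero hij (by simp) hx, mul_zero]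

theorem pd_truncPrimitive (hr : 0 < r) (hf : ContDiff ℝ ∞ f) (hs : CubeSupported r f)
    (j : Fin 3) (x : E3) : pd (truncPrimitive hr j f) j x = f x - spread hr j f x := by
  have hcont : Continuous fun y : E3 => |y j| := by fun_prop
  rcases lt_or_ge (|x j|) (3 / 2 * r) with h | h
  · rw [pd_congr_on (s := {y : E3 | |y j| < 3 / 2 * r}) (isOpen_lt hcont continuous_const)
      (g := lineInt (ContinuousLinearMap.id ℝ E3) (ee j) (-(4 * r)) 0
        (fun y => f y - spread hr j f y)) (fun y hy => ?_) j x h]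
    · exact pd_primitive hr ((tame_spread hr j).id_sub.smooth f hf) (hs.sub (hs.spread hr j)) j
        (by linarith [le_abs_self (x j)])
    · rw [truncPrimitive, coordCutoff_eq_one hr (le_of_lt hy), one_mul]
  · have hx : r < |x j| := by linarith
    rw [pd_congr_on (s := {y : E3 | r < |y j|}) (isOpen_lt continuous_const hcont)
      (g := fun _ => 0) (fun y hy => truncPrimitive_eq_zero hr hf hs j (le_of_lt hy)) j x hx,
      pd_const, hs x j hx.le, hs.spread hr j x j hx.le, sub_zero]

theorem integral_spread (hr : 0 < r) (hf : ContDiff ℝ ∞ f) (hs : CubeSupported r f) (j : Fin 3) :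
    ∫ x, spread hr j f x = ∫ x, f x := by
  have h := integral_pd_eq_zero ((tame_truncPrimitive hr j).smooth f hf)
    ((hs.truncPrimitive hr hf j).hasCompactSupport hr) j
  simp only [pd_truncPrimitive hr hf hs] at h
  rw [integral_sub (hf.continuous.integrable_of_hasCompactSupport (hs.hasCompactSupport hr))
    (((tame_spread hr j).smooth f hf).continuous.integrable_of_hasCompactSupport
      ((hs.spread hr j).hasCompactSupport hr))] at h
  linarith

/-- The profile onto which spreading in all three directions projects. -/
def cubeProfile (hr : 0 < r) (x : E3) : ℝ := unitMass hr (x 0) * unitMass hr (x 1) *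
  unitMass hr (x 2)

theorem exists_spread_eq (hr : 0 < r) (f : E3 → ℝ) :
    ∃ c : ℝ, ∀ x, spread hr 2 (spread hr 1 (spread hr 0 f)) x = cubeProfile hr x * c := by
  refine ⟨∫ s in Set.Icc (-r) r, ∫ t in Set.Icc (-r) r,
    chordInt r 0 f (t • ee 1 + s • ee 2), fun x => ?_⟩
  have chordInt_killCoord : ∀ y, chordInt r 0 f y = chordInt r 0 f (killCoord 0 y) := fun y => by
    have hkill : killCoord 0 (killCoord 0 y) = killCoord 0 y := by
      simpa using killCoord_killCoord_add_smul 0 y 0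
    simp only [chordInt, lineInt, hkill]
  have spread_zero : ∀ s t : ℝ,
      spread hr 0 f (killCoord 1 (killCoord 2 x + s • ee 2) + t • ee 1) =
        unitMass hr (x 0) * chordInt r 0 f (t • ee 1 + s • ee 2) := fun s t => by
    rw [spread, chordInt_killCoord]
    congr 2
    · simp [killCoord_apply, ee_apply]
    · ext k
      fin_cases k <;> simp [killCoord_apply, ee_apply]
  have spread_one : ∀ s : ℝ, spread hr 1 (spread hr 0 f) (killCoord 2 x + s • ee 2) =
      unitMass hr (x 0) * unitMass hr (x 1) *
        ∫ t in Set.Icc (-r) r, chordInt r 0 f (t • ee 1 + s • ee 2) := fun s => by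
    rw [spread, chordInt, lineInt]
    simp only [spread_zero]
    rw [integral_const_mul]
    simp [killCoord_apply, ee_apply]
    ring
  rw [spread, chordInt, lineInt]
  simp only [spread_one]
  rw [integral_const_mul, cubeProfile]
  ring

theorem integral_cubeProfile_pos (hr : 0 < r) : 0 < ∫ x, cubeProfile hr x := by
  have hsmooth : ∀ j : Fin 3, Continuous fun x : E3 => unitMass hr (x j) := fun j =>
    ((contDiff_unitMass hr).comp (contDiff_coord j)).continuous
  have hcube : CubeSupported r (cubeProfile hr) := fun x i hx => by
    have := unitMass_eq_zero hr hx
    fin_cases i <;> simp_all [cubeProfile]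
  exact (((hsmooth 0).mul (hsmooth 1)).mul (hsmooth 2)
    ).integral_pos_of_hasCompactSupport_nonneg_nonzero (hcube.hasCompactSupport hr)
    (fun x => mul_nonneg (mul_nonneg (unitMass_nonneg hr _) (unitMass_nonneg hr _))
      (unitMass_nonneg hr _)) (x := 0)
    (by simpa [cubeProfile] using unitMass_zero_ne hr)

theorem spread_eq_zero (hr : 0 < r) (hf : ContDiff ℝ ∞ f) (hs : CubeSupported r f)
    (h0 : ∫ x, f x = 0) (x : E3) : spread hr 2 (spread hr 1 (spread hr 0 f)) x = 0 := by
  have hsmooth0 := (tame_spread hr 0).smooth f hf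
  have hsmooth1 := (tame_spread hr 1).smooth _ hsmooth0
  have hint : ∫ x, spread hr 2 (spread hr 1 (spread hr 0 f)) x = 0 := by
    rw [integral_spread hr hsmooth1 ((hs.spread hr 0).spread hr 1),
      integral_spread hr hsmooth0 (hs.spread hr 0), integral_spread hr hf hs, h0]
  obtain ⟨c, hc⟩ := exists_spread_eq hr f
  simp only [hc] at hint ⊢
  rw [integral_mul_const] at hint
  rw [(mul_eq_zero.1 hint).resolve_left (integral_cubeProfile_pos hr).ne', mul_zero]

/-- The field obtained by spreading `f` in one direction after the other, and taking the primitive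
of what each step removes. -/
def divSolution (hr : 0 < r) (f : E3 → ℝ) : Fin 3 → E3 → ℝ :=
  ![truncPrimitive hr 0 f, truncPrimitive hr 1 (spread hr 0 f),
    truncPrimitive hr 2 (spread hr 1 (spread hr 0 f))]

theorem tame_divSolution (hr : 0 < r) (j : Fin 3) : Tame fun f => divSolution hr f j := by
  fin_cases j
  · exact tame_truncPrimitive hr 0
  · exact (tame_truncPrimitive hr 1).comp (tame_spread hr 0)
  · exact (tame_truncPrimitive hr 2).comp ((tame_spread hr 1).comp (tame_spread hr 0))

theorem CubeSupported.divSolution (hs : CubeSupported r f) (hr : 0 < r) (hf : ContDiff ℝ ∞ f)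
    (j : Fin 3) : CubeSupported r (divSolution hr f j) := by
  have hsmooth0 := (tame_spread hr 0).smooth f hf
  fin_cases j
  · exact hs.truncPrimitive hr hf 0
  · exact (hs.spread hr 0).truncPrimitive hr hsmooth0 1
  · exact ((hs.spread hr 0).spread hr 1).truncPrimitive hr ((tame_spread hr 1).smooth _ hsmooth0) 2

theorem divergence_divSolution (hr : 0 < r) (hf : ContDiff ℝ ∞ f) (hs : CubeSupported r f)
    (h0 : ∫ x, f x = 0) (x : E3) : divergence (divSolution hr f) x = f x := by
  have hsmooth0 := (tame_spread hr 0).smooth f hf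
  have hsmooth1 := (tame_spread hr 1).smooth _ hsmooth0
  rw [divergence, Fin.sum_univ_three]
  change pd (truncPrimitive hr 0 f) 0 x + pd (truncPrimitive hr 1 (spread hr 0 f)) 1 x +
    pd (truncPrimitive hr 2 (spread hr 1 (spread hr 0 f))) 2 x = f x
  rw [pd_truncPrimitive hr hf hs, pd_truncPrimitive hr hsmooth0 (hs.spread hr 0),
    pd_truncPrimitive hr hsmooth1 ((hs.spread hr 0).spread hr 1), spread_eq_zero hr hf hs h0]
  ring

theorem exists_divergence_solution (hr : 0 < r) : ∃ d : ℕ → ℝ, (∀ k, 0 ≤ d k) ∧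
    ∀ g : E3 → ℝ, ContDiff ℝ ∞ g → CubeSupported r g → ∫ x, g x = 0 →
    ∃ w : Fin 3 → E3 → ℝ, (∀ j, ContDiff ℝ ∞ (w j)) ∧ (∀ j, CubeSupported r (w j)) ∧
      (∀ x, divergence w x = g x) ∧
      ∀ k b, (∀ m ≤ k, ∀ x, ‖iteratedFDeriv ℝ m g x‖ ≤ b) →
        ∀ j x, ‖iteratedFDeriv ℝ k (w j) x‖ ≤ d k * b := by
  choose d hd0 hd using fun j => (tame_divSolution hr j).bound
  refine ⟨fun k => ∑ j, d j k, fun k => Finset.sum_nonneg fun j _ => hd0 j k, fun g hg hs h0 =>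
    ⟨divSolution hr g, fun j => (tame_divSolution hr j).smooth g hg, hs.divSolution hr hg,
      divergence_divSolution hr hg hs h0, fun k b hb j x => ?_⟩⟩
  have hb0 : 0 ≤ b := (norm_nonneg _).trans (hb 0 (Nat.zero_le _) 0)
  exact (hd j k g hg b hb k le_rfl x).trans (mul_le_mul_of_nonneg_right
    (Finset.single_le_sum (fun j _ => hd0 j k) (Finset.mem_univ j)) hb0)

end DivergenceSolver

section PolarCoordinates

variable {E F : Type*} [NormedAddCommGroup F] [NormedSpace ℝ F]

theorem integral_volumeIoiPow (n : ℕ) (h : ℝ → F) :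
    ∫ r : Set.Ioi (0 : ℝ), h r ∂Measure.volumeIoiPow n = ∫ r in Set.Ioi (0 : ℝ), r ^ n • h r := by
  simp only [Measure.volumeIoiPow, ENNReal.ofReal]
  rw [integral_withDensity_eq_integral_smul (measurable_subtype_coe.pow_const _).real_toNNReal,
    integral_subtype_comap measurableSet_Ioi fun r : ℝ => Real.toNNReal (r ^ n) • h r]
  refine setIntegral_congr_fun measurableSet_Ioi fun r hr => ?_
  rw [NNReal.smul_def, Real.coe_toNNReal _ (pow_nonneg (le_of_lt hr) _)]

variable [NormedAddCommGroup E] [NormedSpace ℝ E] [FiniteDimensional ℝ E] [Nontrivial E]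
  [MeasurableSpace E] [BorelSpace E]

theorem integral_eq_integral_Ioi_integral_sphere (μ : Measure E) [μ.IsAddHaarMeasure] {f : E → F}
    (hf : Integrable f μ) : ∫ x, f x ∂μ = ∫ r in Set.Ioi (0 : ℝ), r ^ (Module.finrank ℝ E - 1) •
      ∫ ξ : sphere (0 : E) 1, f (r • (ξ : E)) ∂μ.toSphere := by
  set g : sphere (0 : E) 1 × Set.Ioi (0 : ℝ) → F := fun z => f (z.2.1 • z.1.1)
  have hmp := μ.measurePreserving_homeomorphUnitSphereProd
  have hemb := (homeomorphUnitSphereProd E).measurableEmbedding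
  have hpolar : ∀ x : ({0}ᶜ : Set E), f x = g (homeomorphUnitSphereProd E x) := fun x => by
    change f x = f _
    rw [← homeomorphUnitSphereProd_symm_apply_coe, Homeomorph.symm_apply_apply]
  have hint : Integrable g (μ.toSphere.prod (Measure.volumeIoiPow (Module.finrank ℝ E - 1))) := by
    rw [← hmp.integrable_comp_emb hemb]
    exact ((integrableOn_iff_comap_subtypeVal (measurableSet_singleton _).compl).1
      hf.integrableOn).congr (Eventually.of_forall hpolar)
  calc ∫ x, f x ∂μ = ∫ x : ({0}ᶜ : Set E), f x ∂(μ.comap Subtype.val) := by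
        rw [integral_subtype_comap (measurableSet_singleton _).compl f, restrict_compl_singleton]
    _ = ∫ z, g z ∂(μ.toSphere.prod (Measure.volumeIoiPow (Module.finrank ℝ E - 1))) := by
        rw [← hmp.integral_comp hemb]
        exact integral_congr_ae (Eventually.of_forall hpolar)
    _ = ∫ r : Set.Ioi (0 : ℝ), (∫ ξ : sphere (0 : E) 1, f (r.1 • (ξ : E)) ∂μ.toSphere)
          ∂(Measure.volumeIoiPow (Module.finrank ℝ E - 1)) := integral_prod_symm g hint
    _ = _ := integral_volumeIoiPow _ fun r : ℝ =>
        ∫ ξ : sphere (0 : E) 1, f (r • (ξ : E)) ∂μ.toSphere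

end PolarCoordinates

section SphereIntegral

variable {F G : E3 → ℝ} {r : ℝ}

theorem integral_eq_integral_sphInt (hF : Integrable F) :
    ∫ x, F x = ∫ r in Set.Ioi (0 : ℝ), sphInt r F := by
  rw [integral_eq_integral_Ioi_integral_sphere volume hF, finrank_euclideanSpace, Fintype.card_fin]
  rfl

theorem norm_smul_sphere (hr : 0 ≤ r) (ξ : sphere (0 : E3) 1) : ‖r • (ξ : E3)‖ = r := by
  rw [norm_smul, norm_eq_of_mem_sphere, mul_one, Real.norm_of_nonneg hr]

theorem sphInt_congr (hr : 0 ≤ r) (h : ∀ x, ‖x‖ = r → F x = G x) : sphInt r F = sphInt r G := by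
  simp only [sphInt, h _ (norm_smul_sphere hr _)]

theorem sphInt_const_mul (r c : ℝ) (F : E3 → ℝ) :
    sphInt r (fun x => c * F x) = c * sphInt r F := by
  rw [sphInt, integral_const_mul, sphInt]
  ring

theorem sphInt_mul (R r : ℝ) (F : E3 → ℝ) :
    sphInt (R * r) F = R ^ 2 * sphInt r fun x => F (R • x) := by
  simp only [sphInt, smul_smul]
  ring

theorem continuous_sphInt (hF : Continuous F) : Continuous fun r => sphInt r F := by
  refine (continuous_pow 2).mul ?_
  have hpolar : Continuous (Function.uncurry fun (r : ℝ) (ξ : sphere (0 : E3) 1) =>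
      F (r • (ξ : E3))) :=
    hF.comp (continuous_fst.smul (continuous_subtype_val.comp continuous_snd))
  simpa using continuous_parametric_integral_of_continuous
    (μ := (volume : Measure E3).toSphere) hpolar isCompact_univ

/-- The flux of the vector field `u` through the sphere of radius `r` centered at the origin. -/
def flux (u : Fin 3 → E3 → ℝ) (r : ℝ) : ℝ := sphInt r fun x => ∑ j, u j x * (x j / ‖x‖)

variable {u v : Fin 3 → E3 → ℝ}

theorem flux_congr (hr : 0 ≤ r) (h : ∀ x, ‖x‖ = r → ∀ j, u j x = v j x) :
    flux u r = flux v r :=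
  sphInt_congr hr fun x hx => by simp only [h x hx]

theorem continuousAt_flux (hu : ∀ j, Continuous (u j)) (hr : 0 < r) : ContinuousAt (flux u) r := by
  have hcont : Continuous fun r => sphInt r fun x => ∑ j, u j x * x j :=
    continuous_sphInt (by fun_prop)
  refine ((continuousAt_inv₀ hr.ne').mul hcont.continuousAt).congr
    (eventually_of_mem (Ioi_mem_nhds hr) fun t (ht : 0 < t) => ?_)
  change t⁻¹ * sphInt t (fun x => ∑ j, u j x * x j) = flux u t
  rw [flux, ← sphInt_const_mul]
  refine sphInt_congr ht.le fun x hx => ?_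
  rw [hx, Finset.mul_sum]
  exact Finset.sum_congr rfl fun j _ => by ring

theorem flux_scale {R : ℝ} (hR : 0 < R) (u : Fin 3 → E3 → ℝ) (r : ℝ) :
    flux (fun j y => R * u j (R • y)) (r / R) = R⁻¹ * flux u r := by
  have hscale : (fun y : E3 => ∑ j, R * u j (R • y) * (y j / ‖y‖)) = fun y : E3 =>
      R * ∑ j, u j (R • y) * ((R • y) j / ‖R • y‖) := by
    ext y
    rw [Finset.mul_sum, norm_smul, Real.norm_of_nonneg hR.le]
    refine Finset.sum_congr rfl fun j _ => ?_
    rw [PiLp.smul_apply, smul_eq_mul, mul_div_mul_left _ _ hR.ne', mul_assoc]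
  rw [flux, hscale, sphInt_const_mul, flux, ← mul_div_cancel₀ r hR.ne', sphInt_mul,
    mul_div_cancel_left₀ _ hR.ne']
  field_simp

end SphereIntegral

section RadialCutoff

/-- A smooth monotone function vanishing on `(-∞, α]` and equal to one on `[β, ∞)`. -/
def smoothStep (α β t : ℝ) : ℝ := smoothTransition ((t - α) / (β - α))

variable {α β t : ℝ}

theorem contDiff_smoothStep (α β : ℝ) : ContDiff ℝ ∞ (smoothStep α β) :=
  smoothTransition.contDiff.comp ((contDiff_id.sub contDiff_const).div_const _)

theorem smoothStep_eq_zero (h : α < β) (ht : t ≤ α) : smoothStep α β t = 0 :=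
  smoothTransition.zero_of_nonpos (div_nonpos_of_nonpos_of_nonneg (by linarith) (by linarith))

theorem smoothStep_eq_one (h : α < β) (ht : β ≤ t) : smoothStep α β t = 1 :=
  smoothTransition.one_of_one_le ((one_le_div (by linarith)).2 (by linarith))

theorem monotone_smoothStep (h : α < β) : Monotone (smoothStep α β) := fun _ _ hst =>
  smoothTransition.monotone (div_le_div_of_nonneg_right (by linarith) (by linarith))

theorem deriv_smoothStep_of_le (h : α < β) (ht : t ≤ α) : deriv (smoothStep α β) t = 0 :=
  IsLocalMin.deriv_eq_zero (Eventually.of_forall fun _ =>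
    (smoothStep_eq_zero h ht).trans_le (smoothTransition.nonneg _))

theorem deriv_smoothStep_of_ge (h : α < β) (ht : β ≤ t) : deriv (smoothStep α β) t = 0 :=
  IsLocalMax.deriv_eq_zero (Eventually.of_forall fun _ =>
    (smoothTransition.le_one _).trans_eq (smoothStep_eq_one h ht).symm)

variable {a b : ℝ}

/-- A smooth radial function on `ℝ³`, vanishing for `‖x‖ ≤ a` and equal to one for `b ≤ ‖x‖`. It is
a function of `‖x‖²`, to be smooth at the origin. -/
def radialCut (a b : ℝ) (x : E3) : ℝ := smoothStep (a ^ 2) (b ^ 2) (‖x‖ ^ 2)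

/-- The radial derivative of `radialCut`. -/
def radialCutDeriv (a b t : ℝ) : ℝ := 2 * t * deriv (smoothStep (a ^ 2) (b ^ 2)) (t ^ 2)

theorem contDiff_radialCut (a b : ℝ) : ContDiff ℝ ∞ (radialCut a b) :=
  (contDiff_smoothStep _ _).comp (contDiff_norm_sq ℝ)

theorem radialCut_eq_zero (ha : 0 ≤ a) (hab : a < b) {x : E3} (hx : ‖x‖ ≤ a) :
    radialCut a b x = 0 :=
  smoothStep_eq_zero (pow_lt_pow_left₀ hab ha two_ne_zero) (pow_le_pow_left₀ (norm_nonneg x) hx 2)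

theorem radialCut_eq_one (ha : 0 ≤ a) (hab : a < b) {x : E3} (hx : b ≤ ‖x‖) :
    radialCut a b x = 1 :=
  smoothStep_eq_one (pow_lt_pow_left₀ hab ha two_ne_zero)
    (pow_le_pow_left₀ (ha.trans hab.le) hx 2)

theorem pd_radialCut (a b : ℝ) (j : Fin 3) (x : E3) :
    pd (radialCut a b) j x = radialCutDeriv a b ‖x‖ * (x j / ‖x‖) := by
  have hderiv := ((contDiff_smoothStep (a ^ 2) (b ^ 2)).differentiable (by simp)
    (‖x‖ ^ 2)).hasDerivAt
  refine (pd_comp_norm_sq hderiv j).trans ?_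
  rcases eq_or_ne x 0 with rfl | hx
  · simp
  · rw [radialCutDeriv]
    field_simp

theorem radialCutDeriv_nonneg (ha : 0 ≤ a) (hab : a < b) (ht : 0 ≤ t) :
    0 ≤ radialCutDeriv a b t :=
  mul_nonneg (by positivity)
    (monotone_smoothStep (pow_lt_pow_left₀ hab ha two_ne_zero)).deriv_nonneg

theorem radialCutDeriv_of_le (ha : 0 ≤ a) (hab : a < b) (ht : 0 ≤ t) (hta : t ≤ a) :
    radialCutDeriv a b t = 0 := by
  rw [radialCutDeriv, deriv_smoothStep_of_le (pow_lt_pow_left₀ hab ha two_ne_zero)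
    (pow_le_pow_left₀ ht hta 2), mul_zero]

theorem radialCutDeriv_of_ge (ha : 0 ≤ a) (hab : a < b) (ht : b ≤ t) :
    radialCutDeriv a b t = 0 := by
  rw [radialCutDeriv, deriv_smoothStep_of_ge (pow_lt_pow_left₀ hab ha two_ne_zero)
    (pow_le_pow_left₀ (ha.trans hab.le) ht 2), mul_zero]

theorem continuous_radialCutDeriv (a b : ℝ) : Continuous (radialCutDeriv a b) := by
  have hderiv := (contDiff_smoothStep (a ^ 2) (b ^ 2)).continuous_deriv (by simp)
  exact (continuous_const.mul continuous_id).mul (hderiv.comp (continuous_pow 2))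

theorem integral_radialCutDeriv (ha : 0 ≤ a) (hab : a < b) :
    ∫ t in a..b, radialCutDeriv a b t = 1 := by
  have hderiv : ∀ t, HasDerivAt (fun t => smoothStep (a ^ 2) (b ^ 2) (t ^ 2))
      (radialCutDeriv a b t) t := fun t => by
    have hstep := (contDiff_smoothStep (a ^ 2) (b ^ 2)).differentiable (by simp) (t ^ 2)
    have hsq : HasDerivAt (fun s : ℝ => s ^ 2) (2 * t) t := by simpa using hasDerivAt_pow 2 t
    refine (HasDerivAt.comp (h := fun s : ℝ => s ^ 2) t hstep.hasDerivAt hsq).congr_deriv ?_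
    rw [radialCutDeriv, mul_comm]
  have hsq := pow_lt_pow_left₀ hab ha two_ne_zero
  rw [intervalIntegral.integral_eq_sub_of_hasDerivAt (fun t _ => hderiv t)
    ((continuous_radialCutDeriv a b).intervalIntegrable _ _), smoothStep_eq_one hsq le_rfl,
    smoothStep_eq_zero hsq le_rfl, sub_zero]

end RadialCutoff

section FluxOfDivergenceFree

/-- The derivative `∇φ · u` of `φ` along the vector field `u`. -/
def gradDot (φ : E3 → ℝ) (u : Fin 3 → E3 → ℝ) (x : E3) : ℝ := ∑ j, pd φ j x * u j x

variable {φ ψ : E3 → ℝ} {u : Fin 3 → E3 → ℝ}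

theorem contDiff_gradDot (hφ : ContDiff ℝ ∞ φ) (hu : ∀ j, ContDiff ℝ ∞ (u j)) :
    ContDiff ℝ ∞ (gradDot φ u) :=
  ContDiff.sum fun j _ => (contDiff_pd hφ j).mul (hu j)

theorem divergence_mul (hφ : ContDiff ℝ ∞ φ) (hu : ∀ j, ContDiff ℝ ∞ (u j)) (x : E3) :
    divergence (fun j y => φ y * u j y) x = φ x * divergence u x + gradDot φ u x := by
  simp only [divergence, gradDot,
    pd_mul (differentiableAt_of_smooth hφ) (differentiableAt_of_smooth (hu _)),
    Finset.sum_add_distrib, Finset.mul_sum]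

theorem gradDot_sub (hφ : ContDiff ℝ ∞ φ) (hψ : ContDiff ℝ ∞ ψ) (x : E3) :
    gradDot (fun y => φ y - ψ y) u x = gradDot φ u x - gradDot ψ u x := by
  have hpd : ∀ j, pd (fun y => φ y - ψ y) j x = pd φ j x - pd ψ j x := fun j => by
    rw [pd, fderiv_fun_sub (differentiableAt_of_smooth hφ) (differentiableAt_of_smooth hψ)]
    rfl
  simp only [gradDot, hpd, sub_mul, Finset.sum_sub_distrib]

theorem integral_gradDot_eq_zero (hφ : ContDiff ℝ ∞ φ) (hφc : HasCompactSupport φ)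
    (hu : ∀ j, ContDiff ℝ ∞ (u j)) (hdiv : ∀ x, φ x * divergence u x = 0) :
    ∫ x, gradDot φ u x = 0 := by
  have hc : ∀ j, HasCompactSupport fun x => φ x * u j x := fun j => hφc.mul_right
  have hgrad : ∀ x, gradDot φ u x = ∑ j, pd (fun y => φ y * u j y) j x := fun x => by
    have := divergence_mul hφ hu x
    rwa [hdiv, zero_add, eq_comm, divergence] at this
  simp only [hgrad]
  rw [integral_finsetSum]
  · exact Finset.sum_eq_zero fun j _ => integral_pd_eq_zero (hφ.mul (hu j)) (hc j) j
  · exact fun j _ => (contDiff_pd (hφ.mul (hu j)) j).continuous.integrable_of_hasCompactSupport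
      (hasCompactSupport_pd (hc j) j)

variable {a b a' b' r R : ℝ}

theorem gradDot_radialCut (a b : ℝ) (u : Fin 3 → E3 → ℝ) (x : E3) :
    gradDot (radialCut a b) u x = radialCutDeriv a b ‖x‖ * ∑ j, u j x * (x j / ‖x‖) := by
  simp only [gradDot, pd_radialCut, Finset.mul_sum]
  exact Finset.sum_congr rfl fun j _ => by ring

theorem gradDot_radialCut_of_le (ha : 0 ≤ a) (hab : a < b) {x : E3} (hx : ‖x‖ ≤ a) :
    gradDot (radialCut a b) u x = 0 := by
  rw [gradDot_radialCut, radialCutDeriv_of_le ha hab (norm_nonneg x) hx, zero_mul]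

theorem gradDot_radialCut_of_ge (ha : 0 ≤ a) (hab : a < b) {x : E3} (hx : b ≤ ‖x‖) :
    gradDot (radialCut a b) u x = 0 := by
  rw [gradDot_radialCut, radialCutDeriv_of_ge ha hab hx, zero_mul]

theorem integrable_gradDot_radialCut (ha : 0 ≤ a) (hab : a < b) (hu : ∀ j, ContDiff ℝ ∞ (u j)) :
    Integrable (gradDot (radialCut a b) u) :=
  (contDiff_gradDot (contDiff_radialCut a b) hu).continuous.integrable_of_hasCompactSupport
    (hasCompactSupport_of_eq_zero_of_lt_norm fun _ hx => gradDot_radialCut_of_ge ha hab hx.le)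

theorem integral_gradDot_radialCut_congr (hr : 0 ≤ r) (hu : ∀ j, ContDiff ℝ ∞ (u j))
    (hdiv : ∀ x, r < ‖x‖ → divergence u x = 0) (ha : r ≤ a) (hab : a < b) (ha' : r ≤ a')
    (hab' : a' < b') :
    ∫ x, gradDot (radialCut a b) u x = ∫ x, gradDot (radialCut a' b') u x := by
  have ha0 := hr.trans ha
  have ha0' := hr.trans ha'
  have hsupp : ∀ x : E3, max b b' < ‖x‖ → radialCut a b x - radialCut a' b' x = 0 := fun x hx => by
    rw [radialCut_eq_one ha0 hab ((le_max_left _ _).trans hx.le),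
      radialCut_eq_one ha0' hab' ((le_max_right _ _).trans hx.le), sub_self]
  have hvanish : ∀ x, (radialCut a b x - radialCut a' b' x) * divergence u x = 0 := fun x => by
    rcases lt_or_ge r ‖x‖ with hx | hx
    · rw [hdiv x hx, mul_zero]
    · rw [radialCut_eq_zero ha0 hab (hx.trans ha), radialCut_eq_zero ha0' hab' (hx.trans ha'),
        sub_self, zero_mul]
  have hzero := integral_gradDot_eq_zero ((contDiff_radialCut a b).sub (contDiff_radialCut a' b'))
    (hasCompactSupport_of_eq_zero_of_lt_norm hsupp) hu hvanish
  simp only [gradDot_sub (contDiff_radialCut a b) (contDiff_radialCut a' b')] at hzero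
  rwa [integral_sub (integrable_gradDot_radialCut ha0 hab hu)
    (integrable_gradDot_radialCut ha0' hab' hu), sub_eq_zero] at hzero

theorem integral_gradDot_radialCut_eq_integral_flux (ha : 0 ≤ a) (hab : a < b)
    (hu : ∀ j, ContDiff ℝ ∞ (u j)) :
    ∫ x, gradDot (radialCut a b) u x = ∫ t in a..b, radialCutDeriv a b t * flux u t := by
  have hsphere : ∀ t ∈ Set.Ioi (0 : ℝ), sphInt t (gradDot (radialCut a b) u) =
      radialCutDeriv a b t * flux u t := fun t ht => by
    rw [flux, ← sphInt_const_mul]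
    exact sphInt_congr (le_of_lt ht) fun x hx => by rw [gradDot_radialCut, hx]
  rw [integral_eq_integral_sphInt (integrable_gradDot_radialCut ha hab hu),
    intervalIntegral.integral_of_le hab.le, setIntegral_congr_fun measurableSet_Ioi hsphere]
  refine setIntegral_eq_of_subset_of_forall_sdiff_eq_zero measurableSet_Ioi
    (fun t ht => ha.trans_lt ht.1) fun t ⟨ht0, ht⟩ => ?_
  rcases le_or_gt t a with hta | hta
  · rw [radialCutDeriv_of_le ha hab (le_of_lt ht0) hta, zero_mul]
  · rw [radialCutDeriv_of_ge ha hab (le_of_not_ge fun htb => ht ⟨hta, htb⟩), zero_mul]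

theorem abs_integral_gradDot_radialCut_le (ha : 0 ≤ a) (hab : a < b)
    (hu : ∀ j, ContDiff ℝ ∞ (u j)) {δ : ℝ} (hδ : ∀ t ∈ Set.Ioc a b, |flux u t| ≤ δ) :
    |∫ x, gradDot (radialCut a b) u x| ≤ δ := by
  have hpointwise : ∀ t ∈ Set.Ioc a b,
      ‖radialCutDeriv a b t * flux u t‖ ≤ radialCutDeriv a b t * δ := fun t ht => by
    have hnonneg := radialCutDeriv_nonneg ha hab (ha.trans ht.1.le)
    rw [norm_mul, Real.norm_of_nonneg hnonneg]
    exact mul_le_mul_of_nonneg_left (hδ t ht) hnonneg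
  rw [integral_gradDot_radialCut_eq_integral_flux ha hab hu]
  calc |∫ t in a..b, radialCutDeriv a b t * flux u t|
      ≤ ∫ t in a..b, radialCutDeriv a b t * δ :=
        intervalIntegral.norm_integral_le_of_norm_le hab.le (Eventually.of_forall hpointwise)
          (((continuous_radialCutDeriv a b).mul continuous_const).intervalIntegrable _ _)
    _ = δ := by rw [intervalIntegral.integral_mul_const, integral_radialCutDeriv ha hab, one_mul]

/-- The integral does not depend on the cutoff, and it tends to the flux through the sphere of
radius `R` as the transition layer of the cutoff shrinks to that sphere. -/
theorem integral_gradDot_radialCut_eq_zero (hr : 0 ≤ r) (hu : ∀ j, ContDiff ℝ ∞ (u j))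
    (hdiv : ∀ x, r < ‖x‖ → divergence u x = 0) (hrR : r < R) (hR : flux u R = 0)
    (ha : r ≤ a) (hab : a < b) : ∫ x, gradDot (radialCut a b) u x = 0 := by
  rw [← abs_nonpos_iff]
  refine le_of_forall_pos_le_add fun δ hδ => ?_
  have hR0 : 0 < R := hr.trans_lt hrR
  obtain ⟨ε, hε, hball⟩ := Metric.continuousAt_iff.1
    (continuousAt_flux (fun j => (hu j).continuous) hR0) δ hδ
  rw [zero_add, integral_gradDot_radialCut_congr hr hu hdiv ha hab hrR.le
    (show R < R + ε / 2 by linarith)]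
  refine abs_integral_gradDot_radialCut_le hR0.le (by linarith) hu fun t ht => ?_
  have hflux := hball (x := t) (by rw [Real.dist_eq, abs_of_pos] <;> linarith [ht.1, ht.2])
  rw [hR, Real.dist_eq, sub_zero] at hflux
  exact hflux.le

end FluxOfDivergenceFree

section DecayOfVanishing

theorem norm_iteratedFDeriv_eq_zero_on {f : E3 → ℝ} {s : Set E3} (hs : IsOpen s)
    (h : ∀ x ∈ s, f x = 0) (k : ℕ) {x : E3} (hx : x ∈ s) : ‖iteratedFDeriv ℝ k f x‖ = 0 := by
  rw [iteratedFDeriv_congr_on hs (g := fun _ => 0) h k hx, iteratedFDeriv_fun_zero, Pi.zero_apply,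
    norm_zero]

theorem isOpen_lt_norm (a : ℝ) : IsOpen {x : E3 | a < ‖x‖} :=
  isOpen_lt continuous_const continuous_norm

namespace DecaysOn

variable {f φ : E3 → ℝ} {u : Fin 3 → E3 → ℝ} {a b r C : ℝ} {c e : ℕ → ℝ} {m : ℕ}

theorem of_vanish (hr : 0 ≤ r) (h0 : ∀ x, r < ‖x‖ → f x = 0)
    (hb : ∀ k x, ‖iteratedFDeriv ℝ k f x‖ ≤ c k * C) (m : ℕ) :
    DecaysOn Set.univ 1 C (fun k => c k * (1 + r) ^ (k + m)) m f := fun k x _ => by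
  have hnonneg : 0 ≤ c k * C := (norm_nonneg _).trans (hb k x)
  have hcomm : c k * (1 + r) ^ (k + m) * C = c k * C * (1 + r) ^ (k + m) := by ring
  rw [hcomm]
  rcases lt_or_ge r ‖x‖ with hx | hx
  · rw [norm_iteratedFDeriv_eq_zero_on (isOpen_lt_norm r) h0 k hx]
    positivity
  · rw [le_div_iff₀ (by positivity)]
    exact mul_le_mul (hb k x) (pow_le_pow_left₀ (by positivity) (by linarith) _) (by positivity)
      hnonneg

theorem extend (hcC : ∀ k, 0 ≤ c k * C) (hab : a < b) (h : DecaysOn {x | a < ‖x‖} 1 C c m f)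
    (h0 : ∀ x, ‖x‖ < b → f x = 0) : DecaysOn Set.univ 1 C c m f := fun k x _ => by
  rcases lt_or_ge a ‖x‖ with hx | hx
  · exact h k x hx
  · rw [norm_iteratedFDeriv_eq_zero_on (s := {x : E3 | ‖x‖ < b})
      (isOpen_lt continuous_norm continuous_const) h0 k (hx.trans_lt hab)]
    exact div_nonneg (hcC k) (by positivity)

theorem one : DecaysOn Set.univ 1 1 (fun _ => 1) 0 fun _ => 1 := by
  rintro (_ | k) x _
  · simp
  · rw [iteratedFDeriv_succ_const, Pi.zero_apply, norm_zero]
    positivity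

theorem gradDot {Ω : Set E3} (hφ : ContDiff ℝ ∞ φ) (hu : ∀ i, ContDiff ℝ ∞ (u i))
    (hdφ : DecaysOn Set.univ 1 1 e 0 φ) (hdu : ∀ i, DecaysOn Ω 1 C c m (u i)) :
    DecaysOn Ω 1 C (fun k => 3 * leibnizConst (fun k => e (k + 1)) c k) (m + 1) (gradDot φ u) := by
  have hmul := fun j => ((hdφ.partial_deriv hφ j).mono (Set.subset_univ Ω)).mul (contDiff_pd hφ j)
    (hu j) (hdu j)
  rw [one_mul, zero_add, add_comm] at hmul
  exact sum (fun j => (contDiff_pd hφ j).mul (hu j)) hmul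

theorem cutoff_mul (he : ∀ k, 0 ≤ e k) (hc : ∀ k, 0 ≤ c k) (hC : 0 ≤ C) (hφ : ContDiff ℝ ∞ φ)
    (hf : ContDiff ℝ ∞ f) (hdφ : DecaysOn Set.univ 1 1 e 0 φ) (hab : a < b)
    (hφ0 : ∀ x, ‖x‖ < b → φ x = 0) (hdf : DecaysOn {x | a < ‖x‖} 1 C c m f) :
    DecaysOn Set.univ 1 C (leibnizConst e c) m fun x => φ x * f x := by
  have hmul := (hdφ.mono (Set.subset_univ _)).mul hφ hf hdf
  rw [one_mul, zero_add] at hmul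
  exact hmul.extend (fun k => mul_nonneg (leibnizConst_nonneg he hc k) hC) hab fun x hx => by
    rw [hφ0 x hx, zero_mul]

theorem norm_iteratedFDeriv_le_sum (hC : 0 ≤ C) (hc : ∀ k, 0 ≤ c k)
    (h : DecaysOn Set.univ 1 C c m f) {n k : ℕ} (hnk : n ≤ k) (x : E3) :
    ‖iteratedFDeriv ℝ n f x‖ ≤ (∑ i ∈ Finset.range (k + 1), c i) * C :=
  calc ‖iteratedFDeriv ℝ n f x‖ ≤ c n * C / (1 + ‖x‖) ^ (n + m) := h n x (Set.mem_univ x)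
    _ ≤ c n * C := div_le_self (mul_nonneg (hc n) hC)
        (one_le_pow₀ (le_add_of_nonneg_right (norm_nonneg x)))
    _ ≤ _ := mul_le_mul_of_nonneg_right (Finset.single_le_sum (fun i _ => hc i)
        (Finset.mem_range.2 (Nat.lt_succ_of_le hnk))) hC

end DecaysOn

theorem exists_decaysOn_radialCut {a b : ℝ} (ha : 0 ≤ a) (hab : a < b) :
    ∃ e : ℕ → ℝ, (∀ k, 0 ≤ e k) ∧ DecaysOn Set.univ 1 1 e 0 (radialCut a b) := by
  have hb : 0 ≤ b := ha.trans hab.le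
  have hs : ContDiff ℝ ∞ fun x => radialCut a b x - 1 :=
    (contDiff_radialCut a b).sub contDiff_const
  have hvanish : ∀ x : E3, b < ‖x‖ → radialCut a b x - 1 = 0 := fun x hx => by
    rw [radialCut_eq_one ha hab hx.le, sub_self]
  have hbound : ∀ k, ∃ B, ∀ x, ‖iteratedFDeriv ℝ k (fun x => radialCut a b x - 1) x‖ ≤ B :=
    fun k => ((hasCompactSupport_of_eq_zero_of_lt_norm hvanish).iteratedFDeriv
      (𝕜 := ℝ) k).exists_bound_of_continuous (hs.continuous_iteratedFDeriv (m := k)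
        (mod_cast le_top))
  choose B hB using hbound
  have hB0 : ∀ k, 0 ≤ B k := fun k => (norm_nonneg _).trans (hB k 0)
  have hsub := DecaysOn.of_vanish (C := 1) hb hvanish (fun k x => by simpa using hB k x) 0
  refine ⟨_, fun k => ?_, (hsub.add hs contDiff_const DecaysOn.one).congr_on isOpen_univ
    fun x _ => (sub_add_cancel _ _).symm⟩
  have := hB0 k
  positivity

theorem exists_divergence_solution_decay {r : ℝ} (hr : 0 < r) {c : ℕ → ℝ} (hc : ∀ k, 0 ≤ c k)
    (m n : ℕ) : ∃ d : ℕ → ℝ, (∀ k, 0 ≤ d k) ∧ ∀ C : ℝ, 0 ≤ C → ∀ g : E3 → ℝ, ContDiff ℝ ∞ g →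
    CubeSupported r g → ∫ x, g x = 0 → DecaysOn Set.univ 1 C c m g →
    ∃ w : Fin 3 → E3 → ℝ, (∀ j, ContDiff ℝ ∞ (w j)) ∧ (∀ j, CubeSupported r (w j)) ∧
      (∀ x, divergence w x = g x) ∧ ∀ j, DecaysOn Set.univ 1 C d n (w j) := by
  obtain ⟨d, hd0, hd⟩ := exists_divergence_solution hr
  refine ⟨fun k => d k * (∑ i ∈ Finset.range (k + 1), c i) * (1 + 2 * r) ^ (k + n), fun k => ?_,
    fun C hC g hg hcube hint hdec => ?_⟩
  · have := hd0 k
    have := Finset.sum_nonneg fun i (_ : i ∈ Finset.range (k + 1)) => hc i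
    positivity
  obtain ⟨w, hw, hwcube, hwdiv, hwb⟩ := hd g hg hcube hint
  refine ⟨w, hw, hwcube, hwdiv, fun j => DecaysOn.of_vanish (by positivity)
    (fun x hx => (hwcube j).eq_zero_of_two_mul_lt_norm hr hx) (fun k x => ?_) n⟩
  rw [mul_assoc]
  exact hwb k _ (fun i hik x => hdec.norm_iteratedFDeriv_le_sum hC hc hik x) j x

end DecayOfVanishing

section UnitRadius

/-- A flow which solves the Navier–Stokes system outside the ball of radius `a`, is bounded there by
`C / (R + ‖x‖)` and has no flux through the sphere of radius `ρ`. -/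
structure DecayingFlow (a R C ρ : ℝ) (u : Fin 3 → E3 → ℝ) (p : E3 → ℝ) : Prop where
  nsOn : NSOn {x | a < ‖x‖} u p
  abs_le : ∀ x, a < ‖x‖ → ∀ i, |u i x| ≤ C / (R + ‖x‖)
  lt_radius : a < ρ
  flux_eq_zero : flux u ρ = 0

/-- The flow `(v, q)` on `ℝ³` is a divergence-free extension of `(u, p - p₀)` from the region
`3 * R ≤ ‖x‖`, with the derivative bounds dictated by scaling. -/
structure IsControlledExtension (R C : ℝ) (c : ℕ → ℝ) (u : Fin 3 → E3 → ℝ) (p : E3 → ℝ)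
    (v : Fin 3 → E3 → ℝ) (q : E3 → ℝ) (p₀ : ℝ) : Prop where
  contDiff_velocity : ∀ i, ContDiff ℝ ∞ (v i)
  contDiff_pressure : ContDiff ℝ ∞ q
  velocity_eq : ∀ x, 3 * R ≤ ‖x‖ → ∀ i, v i x = u i x
  pressure_eq : ∀ x, 3 * R ≤ ‖x‖ → q x = p x - p₀
  divergence_eq_zero : ∀ x, divergence v x = 0
  velocity_decay : ∀ i, DecaysOn Set.univ R C c 1 (v i)
  pressure_decay : DecaysOn Set.univ R C c 2 q

variable {u : Fin 3 → E3 → ℝ} {a b : ℝ}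

theorem cubeSupported_gradDot_radialCut (ha : 0 ≤ a) (hab : a < b) (u : Fin 3 → E3 → ℝ) :
    CubeSupported b (gradDot (radialCut a b) u) := fun x i hx =>
  gradDot_radialCut_of_ge ha hab (hx.trans (PiLp.norm_apply_le x i))

theorem divergence_cutoff_sub_eq_zero {φ : E3 → ℝ} {w : Fin 3 → E3 → ℝ} (hφ : ContDiff ℝ ∞ φ)
    (hu : ∀ i, ContDiff ℝ ∞ (u i)) (hw : ∀ i, ContDiff ℝ ∞ (w i)) {x : E3}
    (hdiv : divergence w x = gradDot φ u x) (hzero : φ x * divergence u x = 0) :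
    divergence (fun i y => φ y * u i y + -w i y) x = 0 := by
  have hsplit : divergence (fun i y => φ y * u i y + -w i y) x =
      divergence (fun i y => φ y * u i y) x - divergence w x := by
    simp only [divergence, pd_add (differentiableAt_of_smooth (hφ.mul (hu _)))
      (differentiableAt_of_smooth (hw _).neg), pd_neg, Finset.sum_add_distrib,
      Finset.sum_neg_distrib, sub_eq_add_neg]
  rw [hsplit, divergence_mul hφ hu, hzero, hdiv, zero_add, sub_self]

theorem exists_cutoff_correction {s : ℝ} (hsa : s < a) (ha : 0 ≤ a) (hab : a < b) {c : ℕ → ℝ}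
    (hc : ∀ k, 0 ≤ c k) : ∃ d : ℕ → ℝ, (∀ k, 0 ≤ d k) ∧ ∀ u : Fin 3 → E3 → ℝ,
      (∀ i, ContDiff ℝ ∞ (u i)) → ∀ r C ρ : ℝ, 0 ≤ r → r ≤ a → 0 ≤ C →
      (∀ x, r < ‖x‖ → divergence u x = 0) → r < ρ → flux u ρ = 0 →
      (∀ i, DecaysOn {x | s < ‖x‖} 1 C c 1 (u i)) →
      ∃ w : Fin 3 → E3 → ℝ, (∀ j, ContDiff ℝ ∞ (w j)) ∧ (∀ j, CubeSupported b (w j)) ∧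
        (∀ x, divergence w x = gradDot (radialCut a b) u x) ∧
        ∀ j, DecaysOn Set.univ 1 C d 1 (w j) := by
  obtain ⟨e, he0, he⟩ := exists_decaysOn_radialCut ha hab
  have hgrad0 : ∀ k, 0 ≤ 3 * leibnizConst (fun k => e (k + 1)) c k := fun k =>
    mul_nonneg (by norm_num) (leibnizConst_nonneg (fun k => he0 (k + 1)) hc k)
  obtain ⟨d, hd0, hd⟩ := exists_divergence_solution_decay (ha.trans_lt hab) hgrad0 2 1
  refine ⟨d, hd0, fun u hu r C ρ hr hra hC hdiv hrρ hflux hdec => ?_⟩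
  have hη := contDiff_radialCut a b
  exact hd C hC _ (contDiff_gradDot hη hu) (cubeSupported_gradDot_radialCut ha hab u)
    (integral_gradDot_radialCut_eq_zero hr hu hdiv hrρ hflux hra hab)
    ((DecaysOn.gradDot hη hu he hdec).extend (fun k => mul_nonneg (hgrad0 k) hC) hsa
      fun x hx => gradDot_radialCut_of_le ha hab hx.le)

/-- The extension is `η u - w` for a cutoff `η` between the radii `6/5` and `7/5` and a field `w`
with `div w = ∇η · u`, supported in a cube which is contained in the ball of radius `3`. -/
theorem exists_controlled_extension_of_contDiff {M : ℝ} (hM : 0 ≤ M) :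
    ∃ c : ℕ → ℝ, (∀ k, 0 ≤ c k) ∧ ∀ (u : Fin 3 → E3 → ℝ) (p : E3 → ℝ),
      (∀ i, ContDiff ℝ ∞ (u i)) → ContDiff ℝ ∞ p → ∀ a C ρ : ℝ, 0 ≤ a → a ≤ 11 / 10 → 0 ≤ C →
      C ≤ M → DecayingFlow a 1 C ρ u p →
      ∃ v q p₀, IsControlledExtension 1 C c u p v q p₀ := by
  obtain ⟨c, hc0, hc⟩ := exists_solution_decay hM (a := 11 / 10) (b := 23 / 20) (by norm_num)
    (by norm_num) (by norm_num)
  have ha₀ : (0 : ℝ) ≤ 6 / 5 := by norm_num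
  have hab₀ : (6 / 5 : ℝ) < 7 / 5 := by norm_num
  have hlt : (23 / 20 : ℝ) < 6 / 5 := by norm_num
  obtain ⟨e, he0, he⟩ := exists_decaysOn_radialCut ha₀ hab₀
  obtain ⟨d, hd0, hd⟩ := exists_cutoff_correction hlt ha₀ hab₀ hc0
  have hl0 := leibnizConst_nonneg he0 hc0
  refine ⟨fun k => leibnizConst e c k + d k, fun k => add_nonneg (hl0 k) (hd0 k), ?_⟩
  intro u p hu hp a C ρ ha0 ha hC0 hCM hflow
  have hsub : {x : E3 | 11 / 10 < ‖x‖} ⊆ {x | a < ‖x‖} := fun x hx => ha.trans_lt hx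
  obtain ⟨hdu, p₀, hdp⟩ := hc u p hu hp C hC0 hCM (hflow.nsOn.mono hsub)
    fun x hx => hflow.abs_le x (hsub hx)
  set η : E3 → ℝ := radialCut (6 / 5) (7 / 5)
  have hη : ContDiff ℝ ∞ η := contDiff_radialCut _ _
  have hη0 : ∀ x : E3, ‖x‖ < 6 / 5 → η x = 0 := fun x hx => radialCut_eq_zero ha₀ hab₀ hx.le
  have hη1 : ∀ x : E3, 3 * 1 ≤ ‖x‖ → η x = 1 := fun x hx =>
    radialCut_eq_one ha₀ hab₀ (by linarith)
  obtain ⟨w, hw, hwcube, hwdiv, hwdec⟩ := hd u hu a C ρ ha0 (by linarith) hC0 hflow.nsOn.2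
    hflow.lt_radius hflow.flux_eq_zero hdu
  have hp' : ContDiff ℝ ∞ fun x => p x - p₀ := hp.sub contDiff_const
  refine ⟨fun i x => η x * u i x + -w i x, fun x => η x * (p x - p₀), p₀,
    ⟨fun i => (hη.mul (hu i)).add (hw i).neg, hη.mul hp', fun x hx i => ?_,
      fun x hx => by rw [hη1 x hx, one_mul], fun x => ?_, fun i => ?_, ?_⟩⟩
  · rw [hη1 x hx, (hwcube i).eq_zero_of_two_mul_lt_norm (ha₀.trans_lt hab₀) (by linarith), one_mul,
      neg_zero, add_zero]
  · refine divergence_cutoff_sub_eq_zero hη hu hw (hwdiv x) ?_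
    rcases lt_or_ge a ‖x‖ with hx | hx
    · rw [hflow.nsOn.2 x hx, mul_zero]
    · rw [hη0 x (by linarith), zero_mul]
  · exact (DecaysOn.cutoff_mul he0 hc0 hC0 hη (hu i) he hlt hη0 (hdu i)).add (hη.mul (hu i))
      (hw i).neg (hwdec i).neg
  · exact (DecaysOn.cutoff_mul he0 hc0 hC0 hη hp' he hlt hη0 hdp).mono_const one_pos fun k =>
      mul_le_mul_of_nonneg_right (le_add_of_nonneg_right (hd0 k)) hC0

end UnitRadius

section GeneralRadius

theorem NSOn.congr_on {s : Set E3} (hs : IsOpen s) {u v : Fin 3 → E3 → ℝ} {p q : E3 → ℝ}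
    (h : NSOn s u p) (huv : ∀ i, ∀ x ∈ s, v i x = u i x) (hpq : ∀ x ∈ s, q x = p x) :
    NSOn s v q := by
  have hpd : ∀ i j, ∀ x ∈ s, pd (v i) j x = pd (u i) j x := fun i j => pd_congr_on hs (huv i) j
  refine ⟨fun x hx i => ?_, fun x hx => ?_⟩
  · simpa only [nsForce, lap_congr_on hs (huv i) x hx, hpd _ _ x hx, huv _ x hx,
      pd_congr_on hs hpq i x hx] using h.1 x hx i
  · simpa only [divergence, hpd _ _ x hx] using h.2 x hx

theorem NSOn.sub_const {s : Set E3} {u : Fin 3 → E3 → ℝ} {p : E3 → ℝ} (h : NSOn s u p) (p₀ : ℝ) :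
    NSOn s u fun x => p x - p₀ :=
  ⟨fun x hx i => by simpa only [nsForce, pd_sub_const] using h.1 x hx i, h.2⟩

theorem contDiff_nsForce {u : Fin 3 → E3 → ℝ} {p : E3 → ℝ} (hu : ∀ i, ContDiff ℝ ∞ (u i))
    (hp : ContDiff ℝ ∞ p) (i : Fin 3) : ContDiff ℝ ∞ (nsForce u p i) :=
  ((contDiff_lap (hu i)).neg.add (ContDiff.sum fun j _ => (hu j).mul (contDiff_pd (hu i) j))).add
    (contDiff_pd hp i)

theorem contDiff_radialCut_mul {a b r : ℝ} (ha : 0 ≤ a) (hab : a < b) (hra : r < a) {f : E3 → ℝ}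
    (hf : ContDiffOn ℝ ∞ f {x | r < ‖x‖}) : ContDiff ℝ ∞ fun x => radialCut a b x * f x := by
  rw [contDiff_iff_contDiffAt]
  intro x
  rcases lt_or_ge r ‖x‖ with hx | hx
  · exact (contDiff_radialCut a b).contDiffAt.mul
      (hf.contDiffAt ((isOpen_lt_norm r).mem_nhds hx))
  · have hball : {y : E3 | ‖y‖ < a} ∈ nhds x :=
      (isOpen_lt continuous_norm continuous_const).mem_nhds (hx.trans_lt hra)
    refine (contDiffAt_const (c := (0 : ℝ))).congr_of_eventuallyEq
      (eventuallyEq_of_mem hball fun y (hy : ‖y‖ < a) => ?_)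
    rw [radialCut_eq_zero ha hab hy.le, zero_mul]

variable {u v : Fin 3 → E3 → ℝ} {p q : E3 → ℝ} {a R C ρ p₀ : ℝ} {c d : ℕ → ℝ}

theorem DecayingFlow.congr_on (ha : 0 ≤ a) (h : DecayingFlow a R C ρ u p)
    (huv : ∀ i, ∀ x, a < ‖x‖ → v i x = u i x) (hpq : ∀ x, a < ‖x‖ → q x = p x) :
    DecayingFlow a R C ρ v q where
  nsOn := h.nsOn.congr_on (isOpen_lt_norm a) huv hpq
  abs_le x hx i := by
    rw [huv i x hx]
    exact h.abs_le x hx i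
  lt_radius := h.lt_radius
  flux_eq_zero := by
    have hρ := h.lt_radius
    rw [← h.flux_eq_zero]
    exact flux_congr (ha.trans hρ.le) fun x hx j => huv j x (hx ▸ hρ)

theorem DecayingFlow.mono {b : ℝ} (h : DecayingFlow a R C ρ u p) (hab : a ≤ b) (hbρ : b < ρ) :
    DecayingFlow b R C ρ u p where
  nsOn := h.nsOn.mono fun _ hx => hab.trans_lt hx
  abs_le x hx := h.abs_le x (hab.trans_lt hx)
  lt_radius := hbρ
  flux_eq_zero := h.flux_eq_zero

theorem lt_norm_smul (hR : 0 < R) {y : E3} (hy : 1 < ‖y‖) : R < ‖R • y‖ := by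
  rw [norm_smul, Real.norm_of_nonneg hR.le]
  exact lt_mul_of_one_lt_right hR hy

theorem DecayingFlow.scale (hR : 0 < R) (h : DecayingFlow R R C ρ u p) :
    DecayingFlow 1 1 C (ρ / R) (fun i y => R * u i (R • y)) (fun y => R ^ 2 * p (R • y)) where
  nsOn := (h.nsOn.scale R).mono fun _ hy => lt_norm_smul hR hy
  abs_le y hy i := by
    have hbound := h.abs_le _ (lt_norm_smul hR hy) i
    rw [norm_smul, Real.norm_of_nonneg hR.le] at hbound
    calc |R * u i (R • y)| = R * |u i (R • y)| := by rw [abs_mul, abs_of_pos hR]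
      _ ≤ R * (C / (R + R * ‖y‖)) := mul_le_mul_of_nonneg_left hbound hR.le
      _ = C / (1 + ‖y‖) := by field_simp
  lt_radius := (one_lt_div hR).2 h.lt_radius
  flux_eq_zero := by rw [flux_scale hR, h.flux_eq_zero, mul_zero]

namespace IsControlledExtension

theorem congr_on {u' : Fin 3 → E3 → ℝ} {p' : E3 → ℝ}
    (h : IsControlledExtension R C c u p v q p₀)
    (hu : ∀ i, ∀ x, 3 * R ≤ ‖x‖ → u i x = u' i x) (hp : ∀ x, 3 * R ≤ ‖x‖ → p x = p' x) :
    IsControlledExtension R C c u' p' v q p₀ :=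
  { h with
    velocity_eq := fun x hx i => (h.velocity_eq x hx i).trans (hu i x hx)
    pressure_eq := fun x hx => by rw [h.pressure_eq x hx, hp x hx] }

theorem scale (hR : 0 < R) (h : IsControlledExtension 1 C c (fun i y => R * u i (R • y))
      (fun y => R ^ 2 * p (R • y)) v q p₀) :
    IsControlledExtension R C c u p (fun i x => R⁻¹ * v i (R⁻¹ • x))
      (fun x => R⁻¹ ^ 2 * q (R⁻¹ • x)) (R⁻¹ ^ 2 * p₀) := by
  have hnorm : ∀ x : E3, 3 * R ≤ ‖x‖ → 3 * 1 ≤ ‖R⁻¹ • x‖ := fun x hx => by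
    rw [norm_smul, norm_inv, Real.norm_of_nonneg hR.le, ← div_eq_inv_mul, le_div_iff₀ hR, mul_one]
    exact hx
  have hcancel : ∀ x : E3, R • R⁻¹ • x = x := smul_inv_smul₀ hR.ne'
  refine ⟨fun i => contDiff_const.mul ((h.contDiff_velocity i).comp (contDiff_const_smul _)),
    contDiff_const.mul (h.contDiff_pressure.comp (contDiff_const_smul _)), fun x hx i => ?_,
    fun x hx => ?_, fun x => ?_, fun i => ?_, h.pressure_decay.scale hR h.contDiff_pressure⟩
  · rw [h.velocity_eq _ (hnorm x hx) i, hcancel, inv_mul_cancel_left₀ hR.ne']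
  · rw [h.pressure_eq _ (hnorm x hx), hcancel, mul_sub, ← mul_assoc, ← mul_pow,
      inv_mul_cancel₀ hR.ne', one_pow, one_mul]
  · rw [divergence_scale, h.divergence_eq_zero, mul_zero]
  · simpa only [pow_one] using (h.velocity_decay i).scale hR (h.contDiff_velocity i)

theorem mono_const (hR : 0 < R) (hC : 0 ≤ C) (hcd : ∀ k, c k ≤ d k)
    (h : IsControlledExtension R C c u p v q p₀) : IsControlledExtension R C d u p v q p₀ :=
  have hcdC := fun k => mul_le_mul_of_nonneg_right (hcd k) hC
  { h with
    velocity_decay := fun i => (h.velocity_decay i).mono_const hR hcdC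
    pressure_decay := h.pressure_decay.mono_const hR hcdC }

theorem nsForce_eq_zero (hR : 0 < R) (h : IsControlledExtension R C c u p v q p₀)
    (hns : NSOn {x | R < ‖x‖} u p) {x : E3} (hx : 3 * R < ‖x‖) (i : Fin 3) :
    nsForce v q i x = 0 :=
  (((hns.sub_const p₀).mono fun y (hy : 3 * R < ‖y‖) => show R < ‖y‖ by linarith).congr_on
    (isOpen_lt_norm (3 * R)) (fun i x hx => h.velocity_eq x (le_of_lt hx) i)
    fun x hx => h.pressure_eq x (le_of_lt hx)).1 x hx i

end IsControlledExtension

theorem exists_controlled_extension_of_contDiffOn {M : ℝ} (hM : 0 ≤ M) :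
    ∃ c : ℕ → ℝ, (∀ k, 0 ≤ c k) ∧ ∀ (u : Fin 3 → E3 → ℝ) (p : E3 → ℝ) (C ρ : ℝ),
      (∀ i, ContDiffOn ℝ ∞ (u i) {x | 1 < ‖x‖}) → ContDiffOn ℝ ∞ p {x | 1 < ‖x‖} → 0 ≤ C →
      C ≤ M → DecayingFlow 1 1 C ρ u p → ∃ v q p₀, IsControlledExtension 1 C c u p v q p₀ := by
  obtain ⟨c, hc0, hext⟩ := exists_controlled_extension_of_contDiff hM
  refine ⟨c, hc0, fun u p C ρ hu hp hC hCM hflow => ?_⟩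
  obtain ⟨b, hb1, hb⟩ := exists_between
    (lt_min (by norm_num : (1 : ℝ) < 11 / 10) hflow.lt_radius)
  obtain ⟨hb', hbρ⟩ := lt_min_iff.1 hb
  obtain ⟨a, ha1, hab⟩ := exists_between hb1
  have ha : 0 ≤ a := zero_le_one.trans ha1.le
  have hb0 : 0 ≤ b := ha.trans hab.le
  have hone : ∀ f : E3 → ℝ, ∀ x, b < ‖x‖ → radialCut a b x * f x = f x := fun f x hx => by
    rw [radialCut_eq_one ha hab hx.le, one_mul]
  obtain ⟨v, q, p₀, h⟩ := hext (fun i x => radialCut a b x * u i x)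
    (fun x => radialCut a b x * p x) (fun i => contDiff_radialCut_mul ha hab ha1 (hu i))
    (contDiff_radialCut_mul ha hab ha1 hp) b C ρ hb0 hb'.le hC hCM
    ((hflow.mono hb1.le hbρ).congr_on hb0 (fun i => hone (u i)) (hone p))
  exact ⟨v, q, p₀, h.congr_on (fun i x hx => hone (u i) x (by linarith))
    fun x hx => hone p x (by linarith)⟩

theorem exists_controlled_extension {M : ℝ} (hM : 0 ≤ M) :
    ∃ c : ℕ → ℝ, (∀ k, 0 ≤ c k) ∧ ∀ R : ℝ, 0 < R → ∀ (u : Fin 3 → E3 → ℝ) (p : E3 → ℝ) (C ρ : ℝ),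
      (∀ i, ContDiffOn ℝ ∞ (u i) {x | R < ‖x‖}) → ContDiffOn ℝ ∞ p {x | R < ‖x‖} → 0 ≤ C →
      C ≤ M → DecayingFlow R R C ρ u p → ∃ v q p₀, IsControlledExtension R C c u p v q p₀ ∧
        ∀ i, DecaysOn Set.univ R C c 3 (nsForce v q i) := by
  obtain ⟨c, hc0, hext⟩ := exists_controlled_extension_of_contDiffOn hM
  have hforce0 : ∀ k, 0 ≤ momentumConst M c k + c (k + 1) := fun k =>
    add_nonneg (momentumConst_nonneg hM hc0 k) (hc0 (k + 1))
  refine ⟨fun k => c k + (momentumConst M c k + c (k + 1)),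
    fun k => add_nonneg (hc0 k) (hforce0 k), fun R hR u p C ρ hu hp hC hCM hflow => ?_⟩
  have hsmul : ContDiffOn ℝ ∞ (fun y : E3 => R • y) {y | 1 < ‖y‖} :=
    (contDiff_const_smul R).contDiffOn
  have hmaps : Set.MapsTo (fun y : E3 => R • y) {y | 1 < ‖y‖} {x | R < ‖x‖} := fun _ hy =>
    lt_norm_smul hR hy
  obtain ⟨v, q, p₀, h⟩ := hext (fun i y => R * u i (R • y)) (fun y => R ^ 2 * p (R • y)) C (ρ / R)
    (fun i => contDiffOn_const.mul ((hu i).comp hsmul hmaps))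
    (contDiffOn_const.mul (hp.comp hsmul hmaps)) hC hCM (hflow.scale hR)
  replace h := h.scale hR
  refine ⟨_, _, _, h.mono_const hR hC fun k => le_add_of_nonneg_right (hforce0 k), fun i => ?_⟩
  exact (DecaysOn.nsForce hR hC hCM hc0 h.contDiff_velocity h.contDiff_pressure h.velocity_decay
    h.pressure_decay i).mono_const hR fun k =>
      mul_le_mul_of_nonneg_right (le_add_of_nonneg_left (hc0 k)) hC

end GeneralRadius

section VectorFields

theorem norm_iteratedFDeriv_toLp_le_sum {v : Fin 3 → E3 → ℝ} (hv : ∀ i, ContDiff ℝ ∞ (v i)) (k : ℕ)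
    (x : E3) : ‖iteratedFDeriv ℝ k (fun x => WithLp.toLp 2 fun i => v i x) x‖ ≤
      ∑ i, ‖iteratedFDeriv ℝ k (v i) x‖ := by
  have hsum : (fun x => WithLp.toLp 2 fun i => v i x) =
      fun x => ∑ i, (ContinuousLinearMap.toSpanSingleton ℝ (ee i) ∘ v i) x := by
    ext x j
    simp [ee_apply]
  have hsmooth : ∀ i, ContDiff ℝ k (ContinuousLinearMap.toSpanSingleton ℝ (ee i) ∘ v i) :=
    fun i => ((ContinuousLinearMap.contDiff _).comp (hv i)).of_le (mod_cast le_top)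
  rw [hsum, iteratedFDeriv_fun_sum_apply fun i _ => (hsmooth i).contDiffAt]
  refine (norm_sum_le _ _).trans (Finset.sum_le_sum fun i _ => ?_)
  refine (ContinuousLinearMap.norm_iteratedFDeriv_comp_left _ (hv i).contDiffAt
    (mod_cast le_top)).trans_eq ?_
  rw [ContinuousLinearMap.norm_toSpanSingleton, ee, PiLp.norm_single, norm_one, one_mul]

theorem DecaysOn.norm_iteratedFDeriv_toLp_le {v : Fin 3 → E3 → ℝ} {R C : ℝ} {c : ℕ → ℝ} {m : ℕ}
    (hv : ∀ i, ContDiff ℝ ∞ (v i)) (h : ∀ i, DecaysOn Set.univ R C c m (v i)) (k : ℕ) (x : E3) :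
    ‖iteratedFDeriv ℝ k (fun x => WithLp.toLp 2 fun i => v i x) x‖ ≤
      3 * c k * C / (R + ‖x‖) ^ (k + m) := by
  refine (norm_iteratedFDeriv_toLp_le_sum hv k x).trans
    ((Finset.sum_le_sum fun i _ => h i k x (Set.mem_univ x)).trans_eq ?_)
  rw [Finset.sum_const, Finset.card_univ, Fintype.card_fin, nsmul_eq_mul]
  push_cast
  ring

theorem compl_closedBall_zero (R : ℝ) : (closedBall (0 : E3) R)ᶜ = {x | R < ‖x‖} := by
  ext x
  simp

theorem nonneg_of_norm_le_div {u : E3 → E3} {R C : ℝ} (hR : 0 < R)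
    (h : ∀ x, R < ‖x‖ → ‖u x‖ ≤ C / (R + ‖x‖)) : 0 ≤ C := by
  obtain ⟨x, hx⟩ := NormedSpace.exists_lt_norm ℝ E3 R
  have hpos : 0 < R + ‖x‖ := by positivity
  simpa using (le_div_iff₀ hpos).1 ((norm_nonneg _).trans (h x hx))

theorem IsNS.decayingFlow {u : E3 → E3} {p : E3 → ℝ} {R C ρ : ℝ}
    (hns : IsNS {x | R < ‖x‖} u p) (hbound : ∀ x, R < ‖x‖ → ‖u x‖ ≤ C / (R + ‖x‖)) (hρ : R < ρ)
    (hflux : sphInt ρ (fun x => ∑ j, u x j * (x j / ‖x‖)) = 0) :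
    DecayingFlow R R C ρ (fun i x => u x i) p :=
  ⟨hns, fun x hx i => (PiLp.norm_apply_le (u x) i).trans (hbound x hx), hρ, hflux⟩

end VectorFields

end

theorem controlled_divergence_free_extension (M : ℝ) (hM : 0 < M) :
    ∃ c : ℕ → ℝ, ∀ R₀ : ℝ, 0 < R₀ → ∀ (u : E3 → E3) (p : E3 → ℝ) (Cstar : ℝ),
      ContDiffOn ℝ (⊤ : ℕ∞) u (closedBall (0 : E3) R₀)ᶜ →
      ContDiffOn ℝ (⊤ : ℕ∞) p (closedBall (0 : E3) R₀)ᶜ →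
      IsNS (closedBall (0 : E3) R₀)ᶜ u p →
      (∀ x ∈ (closedBall (0 : E3) R₀)ᶜ, ‖u x‖ ≤ Cstar / (R₀ + ‖x‖)) →
      Cstar ≤ M →
      (∃ R₁ : ℝ, R₀ < R₁ ∧ sphInt R₁ (fun x => ∑ j, u x j * (x j / ‖x‖)) = 0) →
      ∃ (ut : E3 → E3) (pt : E3 → ℝ) (p₀ : ℝ),
        ContDiff ℝ (⊤ : ℕ∞) ut ∧ ContDiff ℝ (⊤ : ℕ∞) pt ∧
        (∀ x : E3, 3 * R₀ ≤ ‖x‖ → ut x = u x ∧ pt x = p x - p₀) ∧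
        (∀ x : E3, (∑ j, pd (fun y => ut y j) j x) = 0) ∧
        (∀ (k : ℕ) (x : E3),
          ‖iteratedFDeriv ℝ k ut x‖ ≤ c k * Cstar / (R₀ + ‖x‖) ^ (k + 1)) ∧
        (∀ (k : ℕ) (x : E3),
          ‖iteratedFDeriv ℝ k pt x‖ ≤ c k * Cstar / (R₀ + ‖x‖) ^ (k + 2)) ∧
        ∀ f : E3 → E3,
          (∀ (x : E3) (i : Fin 3),
            f x i = -(∑ j, pd2 (fun y => ut y i) j x)
              + (∑ j, ut x j * pd (fun y => ut y i) j x) + pd pt i x) →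
          Function.support f ⊆ closedBall (0 : E3) (3 * R₀) ∧
          (∀ (k : ℕ) (x : E3),
            ‖iteratedFDeriv ℝ k f x‖ ≤ c k * Cstar / (R₀ + ‖x‖) ^ (k + 3)) := by
  obtain ⟨c, hc, hext⟩ := exists_controlled_extension hM.le
  refine ⟨fun k => 3 * c k, ?_⟩
  intro R₀ hR₀ u p C hu hp hns hbound hCM ⟨R₁, hR₁, hflux⟩
  rw [compl_closedBall_zero] at hu hp hns hbound
  have hC : 0 ≤ C := nonneg_of_norm_le_div hR₀ hbound
  have hle : ∀ k, c k * C ≤ 3 * c k * C := fun k => by linarith [mul_nonneg (hc k) hC]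
  obtain ⟨v, q, p₀, h, hforce⟩ := hext R₀ hR₀ (fun i x => u x i) p C R₁
    (fun i => (contDiff_coord i).comp_contDiffOn hu) hp hC hCM
    (hns.decayingFlow hbound hR₁ hflux)
  refine ⟨fun x => WithLp.toLp 2 fun i => v i x, q, p₀, contDiff_piLp' _ h.contDiff_velocity,
    h.contDiff_pressure, fun x hx => ⟨PiLp.ext (h.velocity_eq x hx), h.pressure_eq x hx⟩,
    h.divergence_eq_zero,
    DecaysOn.norm_iteratedFDeriv_toLp_le h.contDiff_velocity h.velocity_decay,
    fun k x => h.pressure_decay.mono_const hR₀ hle k x (Set.mem_univ x), fun f hf => ?_⟩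
  obtain rfl : f = fun x => WithLp.toLp 2 fun i => nsForce v q i x :=
    funext fun x => PiLp.ext (hf x)
  refine ⟨fun x hx => ?_, DecaysOn.norm_iteratedFDeriv_toLp_le
    (contDiff_nsForce h.contDiff_velocity h.contDiff_pressure) hforce⟩
  contrapose! hx
  have hx' : 3 * R₀ < ‖x‖ := by simpa using hx
  exact Function.notMem_support.2 (PiLp.ext (h.nsForce_eq_zero hR₀ hns hx'))
end
end

section
/- Quadratic decay of the Stokes potential of a mean-zero compactly supported field. Let g : ℝ³ → ℝ³ be a continuous compactly supported vector field with ∫_{ℝ³} g(y) dy = 0. Then the function V : ℝ³ → ℝ³ defined componentwise by V_i(x) = ∫_{ℝ³} G_ij(x−y) g_j(y) dy (summation over j) is well defined, and there exists a constant C (depending on g) such that |V(x)| ≤ C (1+|x|)^{−2} for all x ∈ ℝ³. -/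
open MeasureTheory Real Metric Filter

noncomputable section

/-- the Green (Oseen) tensor of the Stokes operator -/
def G (i j : Fin 3) (x : E3) : ℝ :=
  (1 / (8 * π)) * ((if i = j then 1 else 0) / ‖x‖ + x i * x j / ‖x‖ ^ 3)

/-!
Each entry of the Oseen tensor is smooth off the origin and homogeneous of degree `-1`. By scaling
to the unit sphere, a kernel `k` that is `C¹` off the origin and homogeneous of degree `α` satisfies
`‖k x‖ ≲ ‖x‖ ^ α` and `‖k (x - y) - k x‖ ≲ ‖y‖ ‖x‖ ^ (α - 1)` for `2 ‖y‖ ≤ ‖x‖`. The first bound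
makes `k` locally integrable if `α` exceeds minus the dimension, so that `f ⋆ k` is continuous for
continuous compactly supported `f`. If moreover `∫ f = 0`, then `k x` may be subtracted from
`k (x - y)` under the integral, and the second bound gains one power of decay at infinity.
-/

open Asymptotics Module
open scoped Convolution

section Homogeneous

variable {E F : Type*} [NormedAddCommGroup E] [NormedSpace ℝ E] [NormedAddCommGroup F]
  [NormedSpace ℝ F] {k : E → F} {α : ℝ}

lemma exists_norm_sub_le_of_contDiffOn_compl_zero [FiniteDimensional ℝ E]
    (hk : ContDiffOn ℝ 1 k {0}ᶜ) :
    ∃ A, ∀ u h : E, ‖u‖ = 1 → 2 * ‖h‖ ≤ 1 → ‖k (u - h) - k u‖ ≤ A * ‖h‖ := by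
  set annulus : Set E := closedBall 0 (3 / 2) \ ball 0 (1 / 2)
  have hannulus : annulus ⊆ {0}ᶜ := by
    rintro _ ⟨-, h⟩ rfl
    exact h (mem_ball_self (by norm_num))
  obtain ⟨A, hA⟩ : ∃ A, ∀ z ∈ annulus, ‖fderiv ℝ k z‖ ≤ A :=
    ((isCompact_closedBall 0 (3 / 2)).diff isOpen_ball).exists_bound_of_continuousOn <|
      (hk.continuousOn_fderiv_of_isOpen isOpen_compl_singleton le_rfl).mono hannulus
  refine ⟨A, fun u h hu hh => ?_⟩
  have hball : closedBall u (1 / 2) ⊆ annulus := fun z hz => by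
    have hzu : ‖z - u‖ ≤ 1 / 2 := mem_closedBall_iff_norm.1 hz
    simp only [annulus, Set.mem_sdiff, mem_closedBall_zero_iff, mem_ball_zero_iff, not_lt]
    constructor
    · linarith [norm_sub_norm_le z u]
    · linarith [norm_sub_norm_le u z, norm_sub_rev u z]
  have hdiff : ∀ z ∈ closedBall u (1 / 2), DifferentiableAt ℝ k z := fun z hz =>
    (hk.differentiableOn one_ne_zero).differentiableAt
      (isOpen_compl_singleton.mem_nhds (hannulus (hball hz)))
  have hmem : u - h ∈ closedBall u (1 / 2) := by
    rw [mem_closedBall_iff_norm, sub_sub_cancel_left, norm_neg]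
    linarith
  simpa using (convex_closedBall u (1 / 2)).norm_image_sub_le_of_norm_fderiv_le hdiff
    (fun z hz => hA z (hball hz)) (mem_closedBall_self (by norm_num)) hmem

/-- Positive homogeneity of degree `α` off the origin. No condition is put on `k 0`: singular
kernels have no natural value there. -/
def IsPosHomogeneous (α : ℝ) (k : E → F) : Prop :=
  ∀ ⦃t : ℝ⦄, 0 < t → ∀ ⦃x : E⦄, x ≠ 0 → k (t • x) = t ^ α • k x

namespace IsPosHomogeneous

lemma eq_rpow_smul (hk : IsPosHomogeneous α k) {r : ℝ} (hr : 0 < r) {x : E} (hx : x ≠ 0) :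
    k x = r ^ α • k (r⁻¹ • x) := by
  rw [← hk hr (smul_ne_zero (inv_ne_zero hr.ne') hx), smul_inv_smul₀ hr.ne']

variable [FiniteDimensional ℝ E]

lemma exists_norm_le (hk : IsPosHomogeneous α k) (hc : ContinuousOn k {0}ᶜ) :
    ∃ A, ∀ x, x ≠ 0 → ‖k x‖ ≤ A * ‖x‖ ^ α := by
  have hsphere : sphere (0 : E) 1 ⊆ {0}ᶜ := fun x hx => ne_of_mem_sphere hx one_ne_zero
  obtain ⟨A, hA⟩ := (isCompact_sphere (0 : E) 1).exists_bound_of_continuousOn (hc.mono hsphere)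
  refine ⟨A, fun x hx => ?_⟩
  have hx' : 0 < ‖x‖ := norm_pos_iff.2 hx
  have hunit : ‖k (‖x‖⁻¹ • x)‖ ≤ A := hA _ (by simp [norm_smul, hx'.ne'])
  calc ‖k x‖ = ‖x‖ ^ α * ‖k (‖x‖⁻¹ • x)‖ := by
        rw [hk.eq_rpow_smul hx' hx, norm_smul, norm_of_nonneg (by positivity)]
    _ ≤ A * ‖x‖ ^ α := by rw [mul_comm A]; gcongr

lemma locallyIntegrable [Nontrivial E] [MeasurableSpace E] [BorelSpace E] {μ : Measure E}
    [μ.IsAddHaarMeasure] (hk : IsPosHomogeneous α k) (hc : ContinuousOn k {0}ᶜ)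
    (hα : -(finrank ℝ E : ℝ) < α) : LocallyIntegrable k μ := by
  obtain ⟨A, hA⟩ := hk.exists_norm_le hc
  refine locallyIntegrable_of_norm_le_rpow finrank_pos (neg_lt.1 hα) (C := A) ?_ ?_
  · filter_upwards [μ.ae_ne 0] with x hx
    simpa using hA x hx
  · simpa using hc.aestronglyMeasurable (μ := μ) (measurableSet_singleton (0 : E)).compl

lemma exists_norm_sub_le (hk : IsPosHomogeneous α k) (hc : ContDiffOn ℝ 1 k {0}ᶜ) :
    ∃ A, ∀ x y, x ≠ 0 → 2 * ‖y‖ ≤ ‖x‖ → ‖k (x - y) - k x‖ ≤ A * ‖x‖ ^ (α - 1) * ‖y‖ := by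
  obtain ⟨A, hA⟩ := exists_norm_sub_le_of_contDiffOn_compl_zero hc
  refine ⟨A, fun x y hx hy => ?_⟩
  have hr : 0 < ‖x‖ := norm_pos_iff.2 hx
  have hxy : x - y ≠ 0 := fun h => by
    rw [← sub_eq_zero.1 h] at hy
    linarith
  have hunit : ‖‖x‖⁻¹ • x‖ = 1 := by simp [norm_smul, hr.ne']
  have hy' : ‖‖x‖⁻¹ • y‖ = ‖x‖⁻¹ * ‖y‖ := by simp [norm_smul]
  have hsmall : 2 * ‖‖x‖⁻¹ • y‖ ≤ 1 := by
    rwa [hy', mul_left_comm, inv_mul_le_one₀ hr]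
  calc ‖k (x - y) - k x‖
      = ‖x‖ ^ α * ‖k (‖x‖⁻¹ • x - ‖x‖⁻¹ • y) - k (‖x‖⁻¹ • x)‖ := by
        rw [hk.eq_rpow_smul hr hxy, hk.eq_rpow_smul hr hx, ← smul_sub, norm_smul,
          smul_sub, norm_of_nonneg (by positivity)]
    _ ≤ ‖x‖ ^ α * (A * (‖x‖⁻¹ * ‖y‖)) := by
        rw [← hy']
        gcongr
        exact hA _ _ hunit hsmall
    _ = A * ‖x‖ ^ (α - 1) * ‖y‖ := by
        rw [rpow_sub_one hr.ne']
        ring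

end IsPosHomogeneous

end Homogeneous

section Asymptotics

lemma isBigO_top_of_isBigO_cocompact {X F F' : Type*} [TopologicalSpace X]
    [SeminormedAddCommGroup F] [NormedAddCommGroup F'] {f : X → F} {w : X → F'}
    (hf : Continuous f) (hw : Continuous w) (hw0 : ∀ x, w x ≠ 0) (h : f =O[cocompact X] w) :
    f =O[⊤] w := by
  obtain ⟨c, hc⟩ := h.bound
  obtain ⟨K, hK, hKc⟩ := mem_cocompact.1 hc
  have hcompact : f =O[𝓟 K] w :=
    (hf.continuousOn.isBigO_principal hK (c := (1 : ℝ)) (by simp)).trans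
      (hw.continuousOn.isBigO_rev_principal hK (fun x _ => hw0 x) 1)
  have hcompl : f =O[𝓟 Kᶜ] w := isBigO_principal.2 ⟨c, hKc⟩
  simpa using hcompact.sup hcompl

lemma isBigO_norm_rpow_one_add_norm_rpow {E : Type*} [SeminormedAddCommGroup E] [ProperSpace E]
    (β : ℝ) : (fun x : E => ‖x‖ ^ β) =O[cocompact E] fun x => (1 + ‖x‖) ^ β := by
  have h : (fun x : E => 1 + ‖x‖) ~[cocompact E] fun x => ‖x‖ :=
    IsEquivalent.refl.const_add_of_norm_tendsto_atTop
      (by simpa only [Function.comp_def, norm_norm] using tendsto_norm_cocompact_atTop (E := E))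
  exact (h.rpow fun x => norm_nonneg x).symm.isBigO

end Asymptotics

section Convolution

variable {E F F' F'' : Type*} [MeasurableSpace E] {μ : Measure E}
  [NormedAddCommGroup F] [NormedSpace ℝ F] [CompleteSpace F]
  [NormedAddCommGroup F'] [NormedSpace ℝ F']
  [NormedAddCommGroup F''] [NormedSpace ℝ F''] [CompleteSpace F'']
  {L : F →L[ℝ] F' →L[ℝ] F''} {f : E → F} {k : E → F'}

lemma convolution_eq_integral_sub_of_integral_eq_zero [Sub E] {x : E}
    (hf : Integrable f μ) (hf0 : ∫ y, f y ∂μ = 0) (hfk : ConvolutionExistsAt f k x L μ) :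
    (f ⋆[L, μ] k) x = ∫ y, L (f y) (k (x - y) - k x) ∂μ := by
  have hint : Integrable (fun y => L (f y) (k x)) μ := (L.flip (k x)).integrable_comp hf
  have hzero : ∫ y, L (f y) (k x) ∂μ = 0 := by
    simpa [hf0] using (L.flip (k x)).integral_comp_comm hf
  simp only [map_sub]
  rw [integral_sub hfk hint, hzero, sub_zero, convolution_def]

variable [NormedAddCommGroup E]

lemma norm_convolution_le_of_integral_eq_zero {x : E} {B : ℝ}
    (hf : Integrable f μ) (hfm : Integrable (fun y => ‖y‖ * ‖f y‖) μ)
    (hf0 : ∫ y, f y ∂μ = 0) (hfk : ConvolutionExistsAt f k x L μ)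
    (hk : ∀ y, f y ≠ 0 → ‖k (x - y) - k x‖ ≤ B * ‖y‖) :
    ‖(f ⋆[L, μ] k) x‖ ≤ ‖L‖ * B * ∫ y, ‖y‖ * ‖f y‖ ∂μ := by
  rw [convolution_eq_integral_sub_of_integral_eq_zero hf hf0 hfk, ← integral_const_mul]
  refine norm_integral_le_of_norm_le (hfm.const_mul _) (.of_forall fun y => ?_)
  by_cases hy : f y = 0
  · simp [hy]
  calc ‖L (f y) (k (x - y) - k x)‖ ≤ ‖L‖ * ‖f y‖ * ‖k (x - y) - k x‖ := L.le_opNorm₂ _ _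
    _ ≤ ‖L‖ * ‖f y‖ * (B * ‖y‖) := by gcongr; exact hk y hy
    _ = ‖L‖ * B * (‖y‖ * ‖f y‖) := by ring

namespace IsPosHomogeneous

variable [NormedSpace ℝ E] [FiniteDimensional ℝ E] [Nontrivial E] [BorelSpace E]
  [μ.IsAddHaarMeasure] {α : ℝ}

lemma convolution_isBigO_cocompact (hk : IsPosHomogeneous α k) (hkc : ContDiffOn ℝ 1 k {0}ᶜ)
    (hα : -(finrank ℝ E : ℝ) < α) (hf : Continuous f) (hfs : HasCompactSupport f)
    (hf0 : ∫ y, f y ∂μ = 0) :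
    (f ⋆[L, μ] k) =O[cocompact E] fun x => ‖x‖ ^ (α - 1) := by
  obtain ⟨A, hA⟩ := hk.exists_norm_sub_le hkc
  obtain ⟨R, hR0, hR⟩ := hfs.isCompact.isBounded.exists_pos_norm_le
  have hfm : Integrable (fun y => ‖y‖ * ‖f y‖) μ :=
    (by fun_prop : Continuous fun y => ‖y‖ * ‖f y‖).integrable_of_hasCompactSupport
      hfs.norm.mul_left
  have hfk : ConvolutionExists f k L μ :=
    hfs.convolutionExists_left L hf (hk.locallyIntegrable hkc.continuousOn hα)
  refine .of_bound (‖L‖ * A * ∫ y, ‖y‖ * ‖f y‖ ∂μ) ?_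
  filter_upwards [tendsto_norm_cocompact_atTop.eventually_ge_atTop (2 * R)] with x hx
  have hx0 : x ≠ 0 := norm_pos_iff.1 (by linarith)
  rw [norm_of_nonneg (by positivity : 0 ≤ ‖x‖ ^ (α - 1))]
  refine (norm_convolution_le_of_integral_eq_zero (hf.integrable_of_hasCompactSupport hfs) hfm hf0
    (hfk x) (B := A * ‖x‖ ^ (α - 1)) fun y hy => hA x y hx0 ?_).trans_eq (by ring)
  linarith [hR y (subset_tsupport f hy)]

theorem convolution_isBigO_one_add_norm_rpow (hk : IsPosHomogeneous α k)
    (hkc : ContDiffOn ℝ 1 k {0}ᶜ) (hα : -(finrank ℝ E : ℝ) < α) (hf : Continuous f)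
    (hfs : HasCompactSupport f) (hf0 : ∫ y, f y ∂μ = 0) :
    (f ⋆[L, μ] k) =O[⊤] fun x => (1 + ‖x‖) ^ (α - 1) := by
  have hpos (x : E) : 0 < 1 + ‖x‖ := by positivity
  refine isBigO_top_of_isBigO_cocompact ?_ ?_ (fun x => (rpow_pos_of_pos (hpos x) _).ne') ?_
  · exact hfs.continuous_convolution_left L hf (hk.locallyIntegrable hkc.continuousOn hα)
  · exact Continuous.rpow_const (by fun_prop) fun x => .inl (hpos x).ne'
  · exact (hk.convolution_isBigO_cocompact hkc hα hf hfs hf0).trans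
      (isBigO_norm_rpow_one_add_norm_rpow _)

end IsPosHomogeneous

end Convolution

section Oseen

lemma isPosHomogeneous_G (i j : Fin 3) : IsPosHomogeneous (-1) (G i j) := fun t ht x hx => by
  have hx' : ‖x‖ ≠ 0 := norm_ne_zero_iff.2 hx
  simp only [G, norm_smul, norm_of_nonneg ht.le, PiLp.smul_apply, smul_eq_mul, rpow_neg_one]
  field_simp

lemma contDiffOn_G (i j : Fin 3) {n : WithTop ℕ∞} : ContDiffOn ℝ n (G i j) {0}ᶜ := fun x hx => by
  have hx' : ‖x‖ ≠ 0 := norm_ne_zero_iff.2 hx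
  have hnorm : ContDiffAt ℝ n (fun z : E3 => ‖z‖) x := contDiffAt_norm ℝ hx
  have hcoord (l : Fin 3) : ContDiffAt ℝ n (fun z : E3 => z l) x := by fun_prop
  exact (contDiffAt_const.mul ((contDiffAt_const.div hnorm hx').add
    (((hcoord i).mul (hcoord j)).div (hnorm.pow 3) (pow_ne_zero 3 hx')))).contDiffWithinAt

lemma neg_finrank_E3_lt_neg_one : -(finrank ℝ E3 : ℝ) < -1 := by
  norm_num [finrank_euclideanSpace_fin]

variable {f : E3 → ℝ}

lemma integrable_G_sub_mul (i j : Fin 3) (hf : Continuous f) (hfs : HasCompactSupport f) (x : E3) :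
    Integrable fun y => G i j (x - y) * f y :=
  hfs.convolutionExists_left (ContinuousLinearMap.mul ℝ ℝ).flip hf
    ((isPosHomogeneous_G i j).locallyIntegrable (contDiffOn_G i j (n := 0)).continuousOn
      neg_finrank_E3_lt_neg_one) x

lemma isBigO_integral_G_sub_mul (i j : Fin 3) (hf : Continuous f) (hfs : HasCompactSupport f)
    (hf0 : ∫ y, f y = 0) :
    (fun x => ∫ y, G i j (x - y) * f y) =O[⊤] fun x => (1 + ‖x‖) ^ (-2 : ℝ) := by
  rw [show (-2 : ℝ) = -1 - 1 by norm_num]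
  exact (isPosHomogeneous_G i j).convolution_isBigO_one_add_norm_rpow
    (L := (ContinuousLinearMap.mul ℝ ℝ).flip) (contDiffOn_G i j)
    neg_finrank_E3_lt_neg_one hf hfs hf0

end Oseen

theorem stokes_potential_quadratic_decay (g : E3 → E3)
    (hgc : Continuous g) (hgs : HasCompactSupport g)
    (hg0 : (∫ y : E3, g y) = 0) :
    (∀ (x : E3) (i : Fin 3),
      Integrable (fun y : E3 => ∑ j, G i j (x - y) * g y j)) ∧
    ∀ V : E3 → E3,
      (∀ (x : E3) (i : Fin 3), V x i = ∫ y : E3, ∑ j, G i j (x - y) * g y j) →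
      ∃ C : ℝ, ∀ x : E3, ‖V x‖ ≤ C * (1 + ‖x‖) ^ (-2 : ℝ) := by
  have hc (j : Fin 3) : Continuous fun y => g y j := by fun_prop
  have hs (j : Fin 3) : HasCompactSupport fun y => g y j :=
    hgs.comp_left (g := fun v : E3 => v j) rfl
  have h0 (j : Fin 3) : ∫ y, g y j = 0 := by
    simpa [hg0] using (EuclideanSpace.proj j : E3 →L[ℝ] ℝ).integral_comp_comm
      (hgc.integrable_of_hasCompactSupport hgs (μ := volume))
  have hint (i j : Fin 3) (x : E3) : Integrable fun y => G i j (x - y) * g y j :=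
    integrable_G_sub_mul i j (hc j) (hs j) x
  refine ⟨fun x i => integrable_finsetSum _ fun j _ => hint i j x, fun V hV => ?_⟩
  have hcomp (i : Fin 3) : (fun x => V x i) =O[⊤] fun x => (1 + ‖x‖) ^ (-2 : ℝ) := by
    simp only [hV, integral_finsetSum _ fun j _ => hint i j _]
    exact .fun_sum fun j _ => isBigO_integral_G_sub_mul i j (hc j) (hs j) (h0 j)
  have hdecay : V =O[⊤] fun x => (1 + ‖x‖) ^ (-2 : ℝ) :=
    ((EuclideanSpace.equiv (Fin 3) ℝ).isBigO_comp_rev V ⊤).trans (isBigO_pi.2 hcomp)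
  obtain ⟨C, hC⟩ := isBigO_top.1 hdecay
  refine ⟨C, fun x => (hC x).trans_eq ?_⟩
  rw [norm_of_nonneg (by positivity)]
end
end
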